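/- arXiv:1806.00968 — 8 statements merged into one kernel-verified Lean document; each statement's English description precedes it below -/
import Mathlib

section
/- Let 𝒮 ⊆ ℤ² be a finite step set that is not contained in a half-plane and contains at least one element of ℕ². Then the step polynomial S has exactly one critical point (a,b) in ℝ_{>0}², i.e. exactly one pair of positive reals with ∂S/∂x(a,b) = ∂S/∂y(a,b) = 0. Moreover at this point ∂²S/∂x²(a,b) > 0, ∂²S/∂y²(a,b) > 0, and (∂²S/∂x∂y(a,b))² ≤ (∂²S/∂x²(a,b))·(∂²S/∂y²(a,b)); in particular c := (∂²S/∂x∂y(a,b)) / √((∂²S/∂x²(a,b))·(∂²S/∂y²(a,b))) lies in the interval [−1,1]. -/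
/-!
In logarithmic coordinates `x = exp u`, `y = exp v` the step polynomial becomes the exponential sum
`F(u,v) = ∑ exp (k u + l v)`, and critical points of `S` in the open quadrant correspond to zeros
of the gradient of `F`.

* Existence: since no half-plane contains `𝒮`, the positively homogeneous function
  `∑ max (k u + l v) 0` is positive off the origin, so it dominates a multiple of the norm. As
  `max t 0 ≤ exp t`, the function `F` is coercive and attains a minimum (`exists_crit`).
* Uniqueness: `exp` is strictly increasing, so the gradient of `F` is strictly monotone along the
  segment joining two points; it cannot vanish at both (`crit_unique`).
* Second derivatives: at a critical point the first-order terms cancel, so that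
  `a² S_xx = ∑ k² w`, `b² S_yy = ∑ l² w` and `a b S_xy = ∑ k l w` with weights `w = a^k b^l > 0`.
  Positivity is then clear and the remaining bounds are the Cauchy-Schwarz inequality.
-/

open Finset

/-- The step polynomial `S(x,y) = Σ_{(k,l)∈𝒮} x^k y^l` (negative exponents are reciprocals). -/
noncomputable def stepPoly (S : Finset (ℤ × ℤ)) (x y : ℝ) : ℝ :=
  ∑ s ∈ S, x ^ s.1 * y ^ s.2

/-- `∂S/∂x`. -/
noncomputable def stepPolyDx (S : Finset (ℤ × ℤ)) (x y : ℝ) : ℝ :=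
  ∑ s ∈ S, (s.1 : ℝ) * x ^ (s.1 - 1) * y ^ s.2

/-- `∂S/∂y`. -/
noncomputable def stepPolyDy (S : Finset (ℤ × ℤ)) (x y : ℝ) : ℝ :=
  ∑ s ∈ S, (s.2 : ℝ) * x ^ s.1 * y ^ (s.2 - 1)

/-- `∂²S/∂x²`. -/
noncomputable def stepPolyDxx (S : Finset (ℤ × ℤ)) (x y : ℝ) : ℝ :=
  ∑ s ∈ S, (s.1 : ℝ) * ((s.1 : ℝ) - 1) * x ^ (s.1 - 2) * y ^ s.2

/-- `∂²S/∂y²`. -/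
noncomputable def stepPolyDyy (S : Finset (ℤ × ℤ)) (x y : ℝ) : ℝ :=
  ∑ s ∈ S, (s.2 : ℝ) * ((s.2 : ℝ) - 1) * x ^ s.1 * y ^ (s.2 - 2)

/-- `∂²S/∂x∂y`. -/
noncomputable def stepPolyDxy (S : Finset (ℤ × ℤ)) (x y : ℝ) : ℝ :=
  ∑ s ∈ S, (s.1 : ℝ) * (s.2 : ℝ) * x ^ (s.1 - 1) * y ^ (s.2 - 1)

/-- `𝒮` is not contained in a half-plane: every nonzero direction has a step
with negative inner product with it. -/
def NotInHalfPlane (S : Finset (ℤ × ℤ)) : Prop :=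
  ∀ u v : ℝ, (u, v) ≠ ((0 : ℝ), (0 : ℝ)) → ∃ s ∈ S, (s.1 : ℝ) * u + (s.2 : ℝ) * v < 0

/-- `𝒮` contains at least one element of `ℕ²`. -/
def HasQuadrantStep (S : Finset (ℤ × ℤ)) : Prop :=
  ∃ s ∈ S, 0 ≤ s.1 ∧ 0 ≤ s.2

/-- The linear form `z ↦ ⟨s, z⟩` on `ℝ²` attached to a step `s`. -/
def stepForm (s : ℤ × ℤ) (z : ℝ × ℝ) : ℝ := (s.1 : ℝ) * z.1 + (s.2 : ℝ) * z.2

/-- The step polynomial in logarithmic coordinates, `F(z) = ∑ exp ⟨s, z⟩`. -/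
noncomputable def expSum (S : Finset (ℤ × ℤ)) (z : ℝ × ℝ) : ℝ :=
  ∑ s ∈ S, Real.exp (stepForm s z)

lemma NotInHalfPlane.exists_neg {S : Finset (ℤ × ℤ)} (h : NotInHalfPlane S) {z : ℝ × ℝ}
    (hz : z ≠ 0) : ∃ s ∈ S, stepForm s z < 0 :=
  h z.1 z.2 hz

lemma NotInHalfPlane.exists_pos {S : Finset (ℤ × ℤ)} (h : NotInHalfPlane S) {z : ℝ × ℝ}
    (hz : z ≠ 0) : ∃ s ∈ S, 0 < stepForm s z := by
  obtain ⟨s, hs, hlt⟩ := h.exists_neg (neg_ne_zero.mpr hz)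
  refine ⟨s, hs, ?_⟩
  simp only [stepForm, Prod.fst_neg, Prod.snd_neg] at hlt ⊢
  linarith

lemma continuous_stepForm (s : ℤ × ℤ) : Continuous (stepForm s) := by
  unfold stepForm; fun_prop

lemma stepForm_smul (s : ℤ × ℤ) (c : ℝ) (z : ℝ × ℝ) :
    stepForm s (c • z) = c * stepForm s z := by
  simp only [stepForm, Prod.smul_fst, Prod.smul_snd, smul_eq_mul]; ring

/-- Linear growth of `F`, obtained by minimizing `∑ max ⟨s, z⟩ 0` over the unit sphere and
extending by homogeneity. -/
lemma exists_linear_bound {S : Finset (ℤ × ℤ)} (h : NotInHalfPlane S) :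
    ∃ δ > 0, ∀ z : ℝ × ℝ, δ * ‖z‖ ≤ expSum S z := by
  have hcont : Continuous fun z : ℝ × ℝ => ∑ s ∈ S, max (stepForm s z) 0 :=
    continuous_finsetSum _ fun s _ => (continuous_stepForm s).max continuous_const
  obtain ⟨z₀, hz₀, hmin⟩ := (isCompact_sphere (0 : ℝ × ℝ) 1).exists_isMinOn
    (NormedSpace.sphere_nonempty.mpr zero_le_one) hcont.continuousOn
  have hz₀' : z₀ ≠ 0 := by
    rintro rfl
    simp at hz₀
  refine ⟨∑ s ∈ S, max (stepForm s z₀) 0, ?_, fun z => ?_⟩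
  · obtain ⟨s, hs, hpos⟩ := h.exists_pos hz₀'
    exact Finset.sum_pos' (fun _ _ => le_max_right _ _) ⟨s, hs, lt_max_of_lt_left hpos⟩
  · have hexp : ∑ s ∈ S, max (stepForm s z) 0 ≤ expSum S z :=
      Finset.sum_le_sum fun s _ => max_le (by linarith [Real.add_one_le_exp (stepForm s z)])
        (Real.exp_pos _).le
    refine le_trans ?_ hexp
    rcases eq_or_ne z 0 with rfl | hz
    · simp only [norm_zero, mul_zero]
      exact Finset.sum_nonneg fun _ _ => le_max_right _ _
    · have hn : 0 < ‖z‖ := norm_pos_iff.mpr hz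
      have hmem : ‖z‖⁻¹ • z ∈ Metric.sphere (0 : ℝ × ℝ) 1 := by
        simp [norm_smul, hn.ne']
      have hle := isMinOn_iff.mp hmin _ hmem
      have hscale : ∑ s ∈ S, max (stepForm s (‖z‖⁻¹ • z)) 0
          = ‖z‖⁻¹ * ∑ s ∈ S, max (stepForm s z) 0 := by
        rw [Finset.mul_sum]
        refine Finset.sum_congr rfl fun s _ => ?_
        rw [stepForm_smul, mul_max_of_nonneg _ _ (inv_pos.mpr hn).le, mul_zero]
      rw [hscale, ← div_eq_inv_mul, le_div_iff₀ hn] at hle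
      exact hle

/-- The gradient of `F` vanishes somewhere, namely at a minimizer. -/
lemma exists_crit {S : Finset (ℤ × ℤ)} (h : NotInHalfPlane S) :
    ∃ z : ℝ × ℝ, ∑ s ∈ S, (s.1 : ℝ) * Real.exp (stepForm s z) = 0 ∧
      ∑ s ∈ S, (s.2 : ℝ) * Real.exp (stepForm s z) = 0 := by
  obtain ⟨δ, hδ, hb⟩ := exists_linear_bound h
  have hcont : Continuous (expSum S) :=
    continuous_finsetSum _ fun s _ => Real.continuous_exp.comp (continuous_stepForm s)
  have hlim : Filter.Tendsto (expSum S) (Filter.cocompact (ℝ × ℝ)) Filter.atTop :=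
    Filter.tendsto_atTop_mono hb
      ((tendsto_norm_cocompact_atTop (E := ℝ × ℝ)).const_mul_atTop hδ)
  obtain ⟨z, hz⟩ := hcont.exists_forall_le hlim
  refine ⟨z, ?_, ?_⟩
  · have hd : HasDerivAt (fun u : ℝ => expSum S (u, z.2))
        (∑ s ∈ S, (s.1 : ℝ) * Real.exp (stepForm s z)) z.1 := by
      refine HasDerivAt.fun_sum fun s _ => ?_
      have := ((((hasDerivAt_id z.1).const_mul (s.1 : ℝ)).add_const ((s.2 : ℝ) * z.2))).exp
      simpa [stepForm, mul_comm] using this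
    exact IsLocalMin.hasDerivAt_eq_zero (Filter.Eventually.of_forall fun u => hz (u, z.2)) hd
  · have hd : HasDerivAt (fun v : ℝ => expSum S (z.1, v))
        (∑ s ∈ S, (s.2 : ℝ) * Real.exp (stepForm s z)) z.2 := by
      refine HasDerivAt.fun_sum fun s _ => ?_
      have := ((((hasDerivAt_id z.2).const_mul (s.2 : ℝ)).const_add ((s.1 : ℝ) * z.1))).exp
      simpa [stepForm, mul_comm] using this
    exact IsLocalMin.hasDerivAt_eq_zero (Filter.Eventually.of_forall fun v => hz (z.1, v)) hd

lemma crit_unique {S : Finset (ℤ × ℤ)} (h : NotInHalfPlane S) {z w : ℝ × ℝ}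
    (hz1 : ∑ s ∈ S, (s.1 : ℝ) * Real.exp (stepForm s z) = 0)
    (hz2 : ∑ s ∈ S, (s.2 : ℝ) * Real.exp (stepForm s z) = 0)
    (hw1 : ∑ s ∈ S, (s.1 : ℝ) * Real.exp (stepForm s w) = 0)
    (hw2 : ∑ s ∈ S, (s.2 : ℝ) * Real.exp (stepForm s w) = 0) : z = w := by
  by_contra hne
  -- The sum below is `⟨∇F(z) - ∇F(w), z - w⟩`.
  have hzero : ∑ s ∈ S, (Real.exp (stepForm s z) - Real.exp (stepForm s w)) *
      (stepForm s z - stepForm s w) = 0 := by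
    have hexpand : ∑ s ∈ S, (Real.exp (stepForm s z) - Real.exp (stepForm s w)) *
        (stepForm s z - stepForm s w)
        = (z.1 - w.1) * (∑ s ∈ S, (s.1 : ℝ) * Real.exp (stepForm s z)
            - ∑ s ∈ S, (s.1 : ℝ) * Real.exp (stepForm s w))
          + (z.2 - w.2) * (∑ s ∈ S, (s.2 : ℝ) * Real.exp (stepForm s z)
            - ∑ s ∈ S, (s.2 : ℝ) * Real.exp (stepForm s w)) := by
      rw [← Finset.sum_sub_distrib, ← Finset.sum_sub_distrib, Finset.mul_sum, Finset.mul_sum,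
        ← Finset.sum_add_distrib]
      refine Finset.sum_congr rfl fun s _ => ?_
      have hform : stepForm s z - stepForm s w
          = (s.1 : ℝ) * (z.1 - w.1) + (s.2 : ℝ) * (z.2 - w.2) := by
        unfold stepForm; ring
      rw [hform]; ring
    rw [hexpand, hz1, hz2, hw1, hw2]; ring
  obtain ⟨s, hs, hlt⟩ := h.exists_neg (sub_ne_zero.mpr hne)
  have hlt' : stepForm s z < stepForm s w := by
    simp only [stepForm, Prod.fst_sub, Prod.snd_sub] at hlt ⊢
    linarith
  refine hzero.not_gt (Finset.sum_pos' (fun r _ => ?_) ⟨s, hs, ?_⟩)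
  · rcases le_total (stepForm r z) (stepForm r w) with hle | hle
    · exact mul_nonneg_of_nonpos_of_nonpos (sub_nonpos.mpr (Real.exp_le_exp.mpr hle))
        (sub_nonpos.mpr hle)
    · exact mul_nonneg (sub_nonneg.mpr (Real.exp_le_exp.mpr hle)) (sub_nonneg.mpr hle)
  · exact mul_pos_of_neg_of_neg (sub_neg.mpr (Real.exp_lt_exp.mpr hlt')) (sub_neg.mpr hlt')

lemma mul_stepPolyDx (S : Finset (ℤ × ℤ)) {a : ℝ} (b : ℝ) (ha : 0 < a) :
    a * stepPolyDx S a b = ∑ s ∈ S, (s.1 : ℝ) * (a ^ s.1 * b ^ s.2) := by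
  rw [stepPolyDx, Finset.mul_sum]
  refine Finset.sum_congr rfl fun s _ => ?_
  rw [zpow_sub_one₀ ha.ne']
  field_simp

lemma mul_stepPolyDy (S : Finset (ℤ × ℤ)) (a : ℝ) {b : ℝ} (hb : 0 < b) :
    b * stepPolyDy S a b = ∑ s ∈ S, (s.2 : ℝ) * (a ^ s.1 * b ^ s.2) := by
  rw [stepPolyDy, Finset.mul_sum]
  refine Finset.sum_congr rfl fun s _ => ?_
  rw [zpow_sub_one₀ hb.ne']
  field_simp

lemma exp_stepForm (s : ℤ × ℤ) (z : ℝ × ℝ) :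
    Real.exp (stepForm s z) = Real.exp z.1 ^ s.1 * Real.exp z.2 ^ s.2 := by
  rw [stepForm, Real.exp_add, ← Real.rpow_intCast, ← Real.rpow_intCast, ← Real.exp_mul,
    ← Real.exp_mul, mul_comm z.1, mul_comm z.2]

lemma stepPolyDx_exp_eq_zero_iff (S : Finset (ℤ × ℤ)) (z : ℝ × ℝ) :
    stepPolyDx S (Real.exp z.1) (Real.exp z.2) = 0 ↔
      ∑ s ∈ S, (s.1 : ℝ) * Real.exp (stepForm s z) = 0 := by
  simp only [exp_stepForm, ← mul_stepPolyDx S _ (Real.exp_pos z.1), mul_eq_zero, Real.exp_ne_zero,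
    false_or]

lemma stepPolyDy_exp_eq_zero_iff (S : Finset (ℤ × ℤ)) (z : ℝ × ℝ) :
    stepPolyDy S (Real.exp z.1) (Real.exp z.2) = 0 ↔
      ∑ s ∈ S, (s.2 : ℝ) * Real.exp (stepForm s z) = 0 := by
  simp only [exp_stepForm, ← mul_stepPolyDy S _ (Real.exp_pos z.2), mul_eq_zero, Real.exp_ne_zero,
    false_or]

/-- The first-order part of `x² S_xx` cancels at a zero of `S_x`. -/
lemma sq_mul_stepPolyDxx (S : Finset (ℤ × ℤ)) {a b : ℝ} (ha : 0 < a)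
    (h : stepPolyDx S a b = 0) :
    a ^ 2 * stepPolyDxx S a b = ∑ s ∈ S, (s.1 : ℝ) ^ 2 * (a ^ s.1 * b ^ s.2) := by
  have h0 : a * stepPolyDx S a b = 0 := by rw [h, mul_zero]
  rw [mul_stepPolyDx S b ha] at h0
  rw [← add_zero (a ^ 2 * _), ← h0, stepPolyDxx, Finset.mul_sum, ← Finset.sum_add_distrib]
  refine Finset.sum_congr rfl fun s _ => ?_
  rw [zpow_sub₀ ha.ne', show a ^ (2 : ℤ) = a ^ 2 from zpow_ofNat a 2]
  field_simp
  ring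

/-- The first-order part of `y² S_yy` cancels at a zero of `S_y`. -/
lemma sq_mul_stepPolyDyy (S : Finset (ℤ × ℤ)) {a b : ℝ} (hb : 0 < b)
    (h : stepPolyDy S a b = 0) :
    b ^ 2 * stepPolyDyy S a b = ∑ s ∈ S, (s.2 : ℝ) ^ 2 * (a ^ s.1 * b ^ s.2) := by
  have h0 : b * stepPolyDy S a b = 0 := by rw [h, mul_zero]
  rw [mul_stepPolyDy S a hb] at h0
  rw [← add_zero (b ^ 2 * _), ← h0, stepPolyDyy, Finset.mul_sum, ← Finset.sum_add_distrib]
  refine Finset.sum_congr rfl fun s _ => ?_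
  rw [zpow_sub₀ hb.ne', show b ^ (2 : ℤ) = b ^ 2 from zpow_ofNat b 2]
  field_simp
  ring

lemma mul_mul_stepPolyDxy (S : Finset (ℤ × ℤ)) {a b : ℝ} (ha : 0 < a) (hb : 0 < b) :
    a * b * stepPolyDxy S a b = ∑ s ∈ S, (s.1 : ℝ) * (s.2 : ℝ) * (a ^ s.1 * b ^ s.2) := by
  rw [stepPolyDxy, Finset.mul_sum]
  refine Finset.sum_congr rfl fun s _ => ?_
  rw [zpow_sub_one₀ ha.ne', zpow_sub_one₀ hb.ne']
  field_simp

lemma stepPolyDxx_pos {S : Finset (ℤ × ℤ)} (h1 : NotInHalfPlane S) {a b : ℝ} (ha : 0 < a)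
    (hb : 0 < b) (h : stepPolyDx S a b = 0) : 0 < stepPolyDxx S a b := by
  refine (mul_pos_iff_of_pos_left (pow_pos ha 2)).mp ?_
  rw [sq_mul_stepPolyDxx S ha h]
  obtain ⟨s, hs, hlt⟩ := h1 1 0 (by simp)
  have hne : (s.1 : ℝ) ≠ 0 := by intro h0; simp [h0] at hlt
  exact Finset.sum_pos' (fun r _ => by positivity) ⟨s, hs, by positivity⟩

lemma stepPolyDyy_pos {S : Finset (ℤ × ℤ)} (h1 : NotInHalfPlane S) {a b : ℝ} (ha : 0 < a)
    (hb : 0 < b) (h : stepPolyDy S a b = 0) : 0 < stepPolyDyy S a b := by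
  refine (mul_pos_iff_of_pos_left (pow_pos hb 2)).mp ?_
  rw [sq_mul_stepPolyDyy S hb h]
  obtain ⟨s, hs, hlt⟩ := h1 0 1 (by simp)
  have hne : (s.2 : ℝ) ≠ 0 := by intro h0; simp [h0] at hlt
  exact Finset.sum_pos' (fun r _ => by positivity) ⟨s, hs, by positivity⟩

/-- Cauchy-Schwarz for the weights `a^k b^l`. -/
lemma stepPolyDxy_sq_le (S : Finset (ℤ × ℤ)) {a b : ℝ} (ha : 0 < a) (hb : 0 < b)
    (hx : stepPolyDx S a b = 0) (hy : stepPolyDy S a b = 0) :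
    (stepPolyDxy S a b) ^ 2 ≤ stepPolyDxx S a b * stepPolyDyy S a b := by
  have hcs : (∑ s ∈ S, (s.1 : ℝ) * (s.2 : ℝ) * (a ^ s.1 * b ^ s.2)) ^ 2 ≤
      (∑ s ∈ S, (s.1 : ℝ) ^ 2 * (a ^ s.1 * b ^ s.2)) *
        ∑ s ∈ S, (s.2 : ℝ) ^ 2 * (a ^ s.1 * b ^ s.2) :=
    Finset.sum_sq_le_sum_mul_sum_of_sq_le_mul S (fun s _ => by positivity)
      (fun s _ => by positivity) fun s _ => le_of_eq (by ring)
  rw [← mul_mul_stepPolyDxy S ha hb, ← sq_mul_stepPolyDxx S ha hx,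
    ← sq_mul_stepPolyDyy S hb hy] at hcs
  have hab : 0 < (a * b) ^ 2 := by positivity
  refine le_of_mul_le_mul_left ?_ hab
  linarith

/-- The step polynomial of a step set not contained in a half-plane and containing a step
in `ℕ²` has a unique positive critical point `(a,b)`; there `S_xx > 0`, `S_yy > 0`,
`S_xy² ≤ S_xx·S_yy`, and `c = S_xy/√(S_xx·S_yy)` lies in `[-1,1]`. -/
theorem stmt0 (S : Finset (ℤ × ℤ)) (h1 : NotInHalfPlane S) (h2 : HasQuadrantStep S) :
    (∃! p : ℝ × ℝ, 0 < p.1 ∧ 0 < p.2 ∧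
        stepPolyDx S p.1 p.2 = 0 ∧ stepPolyDy S p.1 p.2 = 0) ∧
    ∀ a b : ℝ, 0 < a → 0 < b → stepPolyDx S a b = 0 → stepPolyDy S a b = 0 →
      0 < stepPolyDxx S a b ∧ 0 < stepPolyDyy S a b ∧
      (stepPolyDxy S a b) ^ 2 ≤ stepPolyDxx S a b * stepPolyDyy S a b ∧
      stepPolyDxy S a b / Real.sqrt (stepPolyDxx S a b * stepPolyDyy S a b) ∈
        Set.Icc (-1 : ℝ) 1 := by
  refine ⟨?_, fun a b ha hb hx hy => ?_⟩
  · obtain ⟨z, hz1, hz2⟩ := exists_crit h1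
    refine ⟨(Real.exp z.1, Real.exp z.2), ⟨Real.exp_pos _, Real.exp_pos _,
      (stepPolyDx_exp_eq_zero_iff S z).mpr hz1, (stepPolyDy_exp_eq_zero_iff S z).mpr hz2⟩, ?_⟩
    rintro ⟨a, b⟩ ⟨ha, hb, hx, hy⟩
    obtain ⟨u, rfl⟩ : ∃ u, Real.exp u = a := ⟨Real.log a, Real.exp_log ha⟩
    obtain ⟨v, rfl⟩ : ∃ v, Real.exp v = b := ⟨Real.log b, Real.exp_log hb⟩
    have huv : (u, v) = z := crit_unique h1 ((stepPolyDx_exp_eq_zero_iff S (u, v)).mp hx)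
      ((stepPolyDy_exp_eq_zero_iff S (u, v)).mp hy) hz1 hz2
    rw [← huv]
  · have hxx := stepPolyDxx_pos h1 ha hb hx
    have hyy := stepPolyDyy_pos h1 ha hb hy
    have hcs := stepPolyDxy_sq_le S ha hb hx hy
    have habs := Real.abs_le_sqrt hcs
    have hsqrt : 0 < Real.sqrt (stepPolyDxx S a b * stepPolyDyy S a b) :=
      Real.sqrt_pos.mpr (mul_pos hxx hyy)
    refine ⟨hxx, hyy, hcs, abs_le.mp ?_⟩
    rw [abs_div, abs_of_pos hsqrt]
    exact (div_le_one hsqrt).mpr habs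
end

section
/- Let 𝒮 ⊆ ℤ² be a finite step set that is not contained in a half-plane and contains at least one element of ℕ². Let (a,b) ∈ ℝ_{>0}² be the unique critical point of the step polynomial S and set c = (∂²S/∂x∂y(a,b)) / √((∂²S/∂x²(a,b))·(∂²S/∂y²(a,b))). If there is no rational number ρ with c = cos(ρπ), then the orbit of the model 𝒮, i.e. the orbit of the pair (x,y) inside an algebraic closure of ℂ(x,y), is an infinite set. -/
/-!
The proof looks at the orbit infinitesimally near the critical point `(a, b)`. Choose a valuation
ring `V` of the algebraic closure of `ℂ(x, y)` that contains `ℂ[x, y]` and has `x - a`, `y - b` in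
its maximal ideal (`exists_place`). Write `x = a (1 + t α₀)`, `y = b (1 + t β₀)`, where `t` is the
one of `x / a - 1`, `y / b - 1` with larger valuation, so that `(α₀, β₀)` has a nonzero residue
vector. As `S` is critical at `(a, b)`, its value at `(a (1 + t α), b (1 + t β))` is
`S(a, b) + t² (P α² + 2 R α β + Q β²) / 2` up to order `t³`, with `P = a² S_xx`, `Q = b² S_yy`,
`R = a b S_xy`. Hence moving along the orbit in one coordinate can be arranged to act on residue
vectors as a reflection of this quadratic form; the corresponding points exist in the algebraic
closure because a valuation ring of an algebraically closed field is henselian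
(`exists_root_near`, `exists_reflection`).

The half-plane condition makes the form positive definite, so `|c| < 1` and the composite of the
two reflections is conjugate over `ℝ` to a rotation by an angle `2 φ` with `cos φ = -c`. If `c` is
not the cosine of a rational multiple of `π`, no power of it other than the identity has a nonzero
fixed vector, and this remains true over the residue field since it amounts to the nonvanishing of
a real determinant (`no_period`). The orbit points obtained by iterating are therefore pairwise
distinct (`infinite_orbit_of_place`).
-/

open Finset

/-- The value `S(u₁,u₂) = Σ_{s∈𝒮} u₁^{s₁} u₂^{s₂}` at a pair of elements of a field. -/
noncomputable def stepVal {L : Type*} [Field L] (S : Finset (ℤ × ℤ)) (u : L × L) : L :=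
  ∑ s ∈ S, u.1 ^ s.1 * u.2 ^ s.2

/-- Adjacency of two pairs: they are distinct, have nonzero coordinates, give the same
value of the step polynomial, and differ in only one coordinate. -/
def AdjacentPair {L : Type*} [Field L] (S : Finset (ℤ × ℤ)) (u v : L × L) : Prop :=
  u ≠ v ∧ u.1 ≠ 0 ∧ u.2 ≠ 0 ∧ v.1 ≠ 0 ∧ v.2 ≠ 0 ∧
    stepVal S u = stepVal S v ∧ (u.1 = v.1 ∨ u.2 = v.2)

/-- The orbit of `u`: its equivalence class under the reflexive-transitive closure of
adjacency. -/
def orbitOf {L : Type*} [Field L] (S : Finset (ℤ × ℤ)) (u : L × L) : Set (L × L) :=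
  {v | Relation.ReflTransGen (AdjacentPair S) u v}

/-- The field `ℂ(x,y)`. -/
abbrev K2 := FractionRing (MvPolynomial (Fin 2) ℂ)

/-- An algebraic closure of `ℂ(x,y)`. -/
abbrev K2bar := AlgebraicClosure K2

/-- The image of the variable `x` in the algebraic closure of `ℂ(x,y)`. -/
noncomputable def xVar : K2bar :=
  algebraMap K2 K2bar (algebraMap (MvPolynomial (Fin 2) ℂ) K2 (MvPolynomial.X 0))

/-- The image of the variable `y` in the algebraic closure of `ℂ(x,y)`. -/
noncomputable def yVar : K2bar :=
  algebraMap K2 K2bar (algebraMap (MvPolynomial (Fin 2) ℂ) K2 (MvPolynomial.X 1))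

/-! ### Roots and expansions in a valuation ring -/

/-- A Hensel-type statement in an algebraically closed valued field. If every root `r` of `F`
satisfied `1 ≤ v (r - ρ)`, then `F'(ρ) / F(ρ) = ∑ 1 / (ρ - r)` would have valuation at most `1`. -/
lemma exists_root_near {L Γ : Type*} [Field L] [IsAlgClosed L]
    [LinearOrderedCommGroupWithZero Γ] (v : Valuation L Γ) (F : Polynomial L) (ρ : L)
    (h : v (F.eval ρ) < v (F.derivative.eval ρ)) :
    ∃ r, F.eval r = 0 ∧ v (r - ρ) < 1 := by
  by_cases h0 : F.eval ρ = 0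
  · exact ⟨ρ, h0, by simp⟩
  by_contra! hcon
  have key := (IsAlgClosed.splits F).eval_derivative_div_eval_of_ne_zero h0
  have h1 : v (F.derivative.eval ρ / F.eval ρ) ≤ 1 := by
    rw [key]
    refine Multiset.sum_induction (fun z => v z ≤ 1) _
      (fun a b ha hb => (v.map_add a b).trans (max_le ha hb)) (by simp) ?_
    intro z hz
    obtain ⟨r, hr, rfl⟩ := Multiset.mem_map.1 hz
    have hF : F ≠ 0 := by rintro rfl; simp at h0
    have hr' := hcon r ((Polynomial.mem_roots hF).1 hr)
    rw [Valuation.map_sub_swap] at hr'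
    simp only [one_div, map_inv₀]
    exact inv_le_one_of_one_le₀ hr'
  rw [map_div₀] at h1
  have h2 : 0 < v (F.eval ρ) := (Valuation.pos_iff v).2 h0
  exact absurd ((div_le_one₀ h2).1 h1) (not_le.2 h)

lemma half_mul_pred_mem {L : Type*} [Field L] [Algebra ℝ L] (V : ValuationSubring L)
    (hR : ∀ r : ℝ, algebraMap ℝ L r ∈ V) (k : ℤ) : (k * (k - 1) / 2 : L) ∈ V := by
  have := hR (k * (k - 1) / 2)
  rw [map_div₀, map_ofNat] at this
  simpa using this

lemma val_one_add {L : Type*} [Field L] (V : ValuationSubring L) {t z : L}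
    (ht : V.valuation t < 1) (hz : z ∈ V) : V.valuation (1 + t * z) = 1 := by
  have : V.valuation (t * z) < 1 := by
    rw [map_mul]
    exact mul_lt_one_of_lt_of_le ht ((V.valuation_le_one_iff z).2 hz)
  exact Valuation.map_one_add_of_lt _ this

/-- Second-order binomial expansion, for an integer exponent, with remainder `t ^ 3 * e` where `e`
lies in the valuation ring. -/
lemma zpow_expand {L : Type*} [Field L] [Algebra ℝ L] (V : ValuationSubring L)
    (hR : ∀ r : ℝ, algebraMap ℝ L r ∈ V) {t z : L}
    (ht : V.valuation t < 1) (hz : z ∈ V) (k : ℤ) :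
    ∃ e ∈ V, (1 + t * z) ^ k = 1 + k * t * z + (k * (k - 1) / 2) * t ^ 2 * z ^ 2 + t ^ 3 * e := by
  have hu := val_one_add V ht hz
  have hu0 : 1 + t * z ≠ 0 := by
    intro h; rw [h] at hu; simp at hu
  have htV : t ∈ V := (V.valuation_le_one_iff t).1 ht.le
  have huV : (1 + t * z)⁻¹ ∈ V := by
    rw [← V.valuation_le_one_iff, map_inv₀, hu, inv_one]
  have : CharZero L := charZero_of_injective_algebraMap (algebraMap ℝ L).injective
  induction k using Int.induction_on with
  | zero => exact ⟨0, V.zero_mem, by simp⟩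
  | succ k ih =>
    obtain ⟨e, he, hk⟩ := ih
    refine ⟨e * (1 + t * z) + ((k : ℤ) * ((k : ℤ) - 1) / 2 : L) * z ^ 3,
      add_mem (mul_mem he (add_mem V.one_mem (mul_mem htV hz)))
        (mul_mem (half_mul_pred_mem V hR k) (pow_mem hz 3)), ?_⟩
    rw [zpow_add_one₀ hu0, hk]
    push_cast
    field_simp
    ring
  | pred k ih =>
    obtain ⟨e, he, hk⟩ := ih
    refine ⟨(1 + t * z)⁻¹ * (e - ((-k - 1 : ℤ) * ((-k - 1 : ℤ) - 1) / 2 : L) * z ^ 3),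
      mul_mem huV (sub_mem he (mul_mem (half_mul_pred_mem V hR _) (pow_mem hz 3))), ?_⟩
    rw [zpow_sub_one₀ hu0, hk]
    push_cast
    field_simp
    ring

/-! ### The reflections at the critical point -/

open Polynomial in
/-- The local involution at a critical point. For the Laurent polynomial `∑ w X ^ k Y ^ l`, with
vanishing `X`-derivative at `(1, 1)`, the level curve through `(1 + t α, 1 + t β)` contains a point
`(1 + t α', 1 + t β)` such that modulo the maximal ideal `α'` is `-α - 2 (R / P) β`, the
reflection of `α` for the quadratic form `P X² + 2 R X Y + Q Y²`. If the reflection fixes the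
residue of `α`, the point `α' = α` itself is used, so no degenerate double root arises. -/
lemma exists_reflection {L ι : Type*} [Field L] [IsAlgClosed L] [Algebra ℝ L]
    (V : ValuationSubring L) (hR : ∀ r : ℝ, algebraMap ℝ L r ∈ V)
    (s : Finset ι) (k l : ι → ℤ) (w : ι → ℝ) (P R : ℝ)
    (h0 : ∑ i ∈ s, w i * k i = 0) (hP : ∑ i ∈ s, w i * (k i) ^ 2 = P)
    (hRR : ∑ i ∈ s, w i * (k i * l i) = R) (hP0 : P ≠ 0)
    {t α β : L} (ht0 : t ≠ 0) (ht : V.valuation t < 1) (hα : α ∈ V) (hβ : β ∈ V) :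
    ∃ α' ∈ V, V.valuation (α' + α + algebraMap ℝ L (2 * (R / P)) * β) < 1 ∧
      ∑ i ∈ s, algebraMap ℝ L (w i) * (1 + t * α') ^ k i * (1 + t * β) ^ l i =
      ∑ i ∈ s, algebraMap ℝ L (w i) * (1 + t * α) ^ k i * (1 + t * β) ^ l i := by
  have : CharZero L := charZero_of_injective_algebraMap (algebraMap ℝ L).injective
  have hval_le : ∀ {z}, z ∈ V → V.valuation z ≤ 1 := fun {z} h => (V.valuation_le_one_iff z).2 h
  have htV : t ∈ V := (V.valuation_le_one_iff t).1 ht.le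
  set φ := algebraMap ℝ L with hφ
  have hφP : φ P ≠ 0 := by simpa using hP0
  have h0' : ∑ i ∈ s, φ (w i) * (k i : L) = 0 := by
    have := congrArg φ h0; simpa [map_sum] using this
  have hP' : ∑ i ∈ s, φ (w i) * (k i : L) ^ 2 = φ P := by
    have := congrArg φ hP; simpa [map_sum] using this
  have hR' : ∑ i ∈ s, φ (w i) * ((k i : L) * l i) = φ R := by
    have := congrArg φ hRR; simpa [map_sum] using this
  obtain ⟨ρ, hρ⟩ : ∃ ρ, ρ = -α - φ (2 * (R / P)) * β := ⟨_, rfl⟩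
  have hρV : ρ ∈ V := by
    rw [hρ]; exact sub_mem (neg_mem hα) (mul_mem (hR _) hβ)
  have hρe : φ P * (ρ + α) = - 2 * φ R * β := by
    rw [hρ]; simp only [map_mul, map_div₀, map_ofNat]; field_simp; ring
  -- when the reflection fixes the residue of `α`, take `α' = α`
  by_cases hcase : V.valuation (ρ - α) < 1
  · refine ⟨α, hα, ?_, rfl⟩
    rw [Valuation.map_sub_swap] at hcase
    convert hcase using 2
    rw [hρ]; ring
  have hcase1 : V.valuation (ρ - α) = 1 :=
    le_antisymm (hval_le (sub_mem hρV hα)) (not_lt.1 hcase)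
  -- clear denominators by a common power of `1 + t * X`
  obtain ⟨N, hN⟩ : ∃ N : ℕ, ∀ i ∈ s, 0 ≤ k i + N := by
    refine ⟨∑ i ∈ s, (k i).natAbs, fun i hi => ?_⟩
    have := Finset.single_le_sum (f := fun i => (k i).natAbs) (fun _ _ => Nat.zero_le _) hi
    omega
  let F : L[X] := ∑ i ∈ s, C (φ (w i) * (1 + t * β) ^ l i) *
    ((1 + C t * X) ^ (k i + N).toNat - C ((1 + t * α) ^ k i) * (1 + C t * X) ^ N)
  have hunit : ∀ {z}, z ∈ V → 1 + t * z ≠ 0 := by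
    intro z hz h
    have hu := val_one_add V ht hz
    rw [h] at hu; simp at hu
  have hFeval : ∀ z ∈ V, F.eval z = (1 + t * z) ^ N * ∑ i ∈ s,
      φ (w i) * ((1 + t * β) ^ l i * ((1 + t * z) ^ k i - (1 + t * α) ^ k i)) := by
    intro z hz
    simp only [F, eval_finsetSum, Finset.mul_sum]
    refine Finset.sum_congr rfl fun i hi => ?_
    have e1 : (1 + t * z) ^ (k i + N).toNat = (1 + t * z) ^ N * (1 + t * z) ^ k i := by
      rw [← zpow_natCast, Int.toNat_of_nonneg (hN i hi), zpow_add₀ (hunit hz), zpow_natCast,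
        mul_comm]
    simp only [eval_mul, eval_C, eval_sub, eval_pow, eval_add, eval_one, eval_X, e1]
    ring
  have hFder : (1 + t * ρ) * F.derivative.eval ρ = (1 + t * ρ) ^ N * (t * ∑ i ∈ s,
      φ (w i) * ((1 + t * β) ^ l i *
        ((k i + N) * (1 + t * ρ) ^ k i - N * (1 + t * α) ^ k i))) := by
    simp only [F, derivative_sum, eval_finsetSum, Finset.mul_sum]
    refine Finset.sum_congr rfl fun i hi => ?_
    have e1 : (1 + t * ρ) ^ (k i + N).toNat = (1 + t * ρ) ^ N * (1 + t * ρ) ^ k i := by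
      rw [← zpow_natCast, Int.toNat_of_nonneg (hN i hi), zpow_add₀ (hunit hρV), zpow_natCast,
        mul_comm]
    have e2 : (((k i + N).toNat : ℕ) : L) = k i + N := by
      have : (((k i + N).toNat : ℤ) : L) = ((k i + N : ℤ) : L) := by
        rw [Int.toNat_of_nonneg (hN i hi)]
      rw [← Int.cast_natCast, this]; simp
    have e3 : ∀ n : ℕ, (1 + t * ρ) * ((n : L) * (1 + t * ρ) ^ (n - 1)) = n * (1 + t * ρ) ^ n := by
      rintro (_ | n)
      · simp
      · simp [pow_succ]; ring
    simp only [derivative_mul, derivative_C, derivative_sub, derivative_pow, derivative_add,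
      derivative_one, derivative_X, eval_mul, eval_C, eval_sub, eval_pow, eval_add, eval_one,
      eval_X, zero_mul, zero_add, mul_one, eval_natCast, map_natCast]
    have e4 := e3 (k i + N).toNat
    have e5 := e3 N
    rw [e1, e2] at e4
    rw [e2]
    linear_combination (φ (w i) * (1 + t * β) ^ l i * t) * e4
      - (φ (w i) * (1 + t * β) ^ l i * t * (1 + t * α) ^ k i) * e5
  choose Ea hEa hEa' using fun i => zpow_expand V hR ht hα (k i)
  choose Er hEr hEr' using fun i => zpow_expand V hR ht hρV (k i)
  choose Eb hEb hEb' using fun i => zpow_expand V hR ht hβ (l i)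
  have hcV : ∀ i, ((k i : L) * (k i - 1) / 2) ∈ V := fun i => half_mul_pred_mem V hR _
  have hdV : ∀ i, ((l i : L) * (l i - 1) / 2) ∈ V := fun i => half_mul_pred_mem V hR _
  have hkV : ∀ i, (k i : L) ∈ V := fun i => intCast_mem V _
  have hlV : ∀ i, (l i : L) ∈ V := fun i => intCast_mem V _
  have hNV : (N : L) ∈ V := natCast_mem V _
  have hBx : ∀ i, ∃ B ∈ V, (1 + t * β) ^ l i = 1 + l i * t * β + t ^ 2 * B := fun i =>
    ⟨((l i : L) * (l i - 1) / 2) * β ^ 2 + t * Eb i,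
      add_mem (mul_mem (hdV i) (pow_mem hβ 2)) (mul_mem htV (hEb i)), by rw [hEb']; ring⟩
  choose B hB hB' using hBx
  have t1 : ∀ i, ∃ e ∈ V, (1 + t * β) ^ l i * ((1 + t * ρ) ^ k i - (1 + t * α) ^ k i) =
      k i * (t * (ρ - α)) + t ^ 2 * ((k i ^ 2 - k i) / 2 * (ρ ^ 2 - α ^ 2)
        + k i * l i * (β * (ρ - α))) + t ^ 3 * e := by
    intro i
    have hc := hcV i
    have hEr := hEr i
    have hEa := hEa i
    have hB := hB i
    have hk := hkV i
    have hl := hlV i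
    rw [hEr', hEa', hB']
    obtain ⟨c, hcc⟩ : ∃ c : L, c = (k i : L) * (k i - 1) / 2 := ⟨_, rfl⟩
    have hcc' : ((k i : L) ^ 2 - k i) / 2 = c := by rw [hcc]; ring
    rw [hcc', ← hcc]
    rw [← hcc] at hc
    refine ⟨Er i - Ea i + l i * β * (c * (ρ ^ 2 - α ^ 2) + t * (Er i - Ea i))
      + B i * (k i * (ρ - α) + c * t * (ρ ^ 2 - α ^ 2) + t ^ 2 * (Er i - Ea i)), ?_, by ring⟩
    repeat' first
      | assumption
      | apply add_mem
      | apply sub_mem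
      | apply mul_mem
      | apply pow_mem
  have t2 : ∀ i, ∃ e ∈ V, (1 + t * β) ^ l i *
        ((k i + N) * (1 + t * ρ) ^ k i - N * (1 + t * α) ^ k i) =
      k i + t * (k i * l i * β + k i ^ 2 * ρ + k i * (N * (ρ - α))) + t ^ 2 * e := by
    intro i
    have hc := hcV i
    have hEr := hEr i
    have hEa := hEa i
    have hB := hB i
    have hk := hkV i
    have hl := hlV i
    rw [hEr', hEa', hB']
    obtain ⟨c, hcc⟩ : ∃ c : L, c = (k i : L) * (k i - 1) / 2 := ⟨_, rfl⟩
    rw [← hcc]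
    rw [← hcc] at hc
    obtain ⟨D, hD⟩ : ∃ D, D = (k i + N) * (c * ρ ^ 2 + t * Er i) - N * (c * α ^ 2 + t * Ea i) :=
      ⟨_, rfl⟩
    have hDV : D ∈ V := by
      rw [hD]
      repeat' first
        | assumption
        | apply add_mem
        | apply sub_mem
        | apply mul_mem
        | apply pow_mem
    refine ⟨D + l i * β * (k i * (k i + N) * ρ - N * k i * α + t * D)
      + B i * (k i + t * (k i * (k i + N) * ρ - N * k i * α) + t ^ 2 * D), ?_, ?_⟩
    · repeat' first
        | assumption
        | apply add_mem
        | apply sub_mem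
        | apply mul_mem
        | apply pow_mem
    · rw [hD]; ring
  choose e1 he1 he1' using t1
  choose e2 he2 he2' using t2
  -- at `ρ` the terms of order `t` cancel by criticality, those of order `t ^ 2` by choice of `ρ`
  have s1 : ∑ i ∈ s, φ (w i) * ((1 + t * β) ^ l i * ((1 + t * ρ) ^ k i - (1 + t * α) ^ k i)) =
      t ^ 3 * ∑ i ∈ s, φ (w i) * e1 i := by
    have : ∑ i ∈ s, φ (w i) * ((1 + t * β) ^ l i * ((1 + t * ρ) ^ k i - (1 + t * α) ^ k i)) =
        (t * (ρ - α) - t ^ 2 * (ρ ^ 2 - α ^ 2) / 2) * (∑ i ∈ s, φ (w i) * (k i : L))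
        + (t ^ 2 * (ρ ^ 2 - α ^ 2) / 2) * (∑ i ∈ s, φ (w i) * (k i : L) ^ 2)
        + (t ^ 2 * (β * (ρ - α))) * (∑ i ∈ s, φ (w i) * ((k i : L) * l i))
        + t ^ 3 * ∑ i ∈ s, φ (w i) * e1 i := by
      simp only [Finset.mul_sum, ← Finset.sum_add_distrib]
      refine Finset.sum_congr rfl fun i _ => ?_
      rw [he1']; ring
    rw [this, h0', hP', hR']
    linear_combination t ^ 2 * (ρ - α) / 2 * hρe
  -- the derivative at `ρ` is of exact order `t ^ 2`, since `ρ` and `α` have distinct residues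
  have s2 : ∑ i ∈ s, φ (w i) * ((1 + t * β) ^ l i *
        ((k i + N) * (1 + t * ρ) ^ k i - N * (1 + t * α) ^ k i)) =
      t * (φ (P / 2) * (ρ - α) + t * ∑ i ∈ s, φ (w i) * e2 i) := by
    have : ∑ i ∈ s, φ (w i) * ((1 + t * β) ^ l i *
        ((k i + N) * (1 + t * ρ) ^ k i - N * (1 + t * α) ^ k i)) =
        (1 + t * (N * (ρ - α))) * (∑ i ∈ s, φ (w i) * (k i : L))
        + (t * ρ) * (∑ i ∈ s, φ (w i) * (k i : L) ^ 2)
        + (t * β) * (∑ i ∈ s, φ (w i) * ((k i : L) * l i))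
        + t ^ 2 * ∑ i ∈ s, φ (w i) * e2 i := by
      simp only [Finset.mul_sum, ← Finset.sum_add_distrib]
      refine Finset.sum_congr rfl fun i _ => ?_
      rw [he2']; ring
    rw [this, h0', hP', hR', map_div₀, map_ofNat]
    linear_combination t / 2 * hρe
  have hsV : ∀ e : ι → L, (∀ i, e i ∈ V) → ∑ i ∈ s, φ (w i) * e i ∈ V := fun e he =>
    sum_mem fun i _ => mul_mem (hR _) (he i)
  have hreal : ∀ r : ℝ, r ≠ 0 → V.valuation (φ r) = 1 := by
    intro r hr
    refine le_antisymm (hval_le (hR r)) ?_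
    have h1 := hval_le (hR r⁻¹)
    rw [map_inv₀, map_inv₀] at h1
    have hp : 0 < V.valuation (φ r) := by
      rw [Valuation.pos_iff]; simpa using hr
    exact (inv_le_one₀ hp).1 h1
  have vt : 0 < V.valuation t := (Valuation.pos_iff _).2 ht0
  have v1 : V.valuation (F.eval ρ) ≤ V.valuation t ^ 3 := by
    rw [hFeval ρ hρV, s1, map_mul, map_pow, val_one_add V ht hρV, one_pow, one_mul, map_mul,
      map_pow]
    exact mul_le_of_le_one_right' (hval_le (hsV _ he1))
  have v2 : V.valuation (F.derivative.eval ρ) = V.valuation t ^ 2 := by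
    have := congrArg V.valuation hFder
    rw [map_mul, map_mul, map_pow, val_one_add V ht hρV, one_pow, one_mul, one_mul, s2, map_mul,
      map_mul] at this
    rw [this, ← mul_assoc, ← pow_two]
    have h2 : V.valuation (φ (P / 2) * (ρ - α)) = 1 := by
      rw [map_mul, hcase1, hreal _ (by positivity), one_mul]
    have h3 : V.valuation (t * ∑ i ∈ s, φ (w i) * e2 i) < 1 := by
      rw [map_mul]
      exact mul_lt_one_of_lt_of_le ht (hval_le (hsV _ he2))
    rw [Valuation.map_add_eq_of_lt_left _ (by rw [h2]; exact h3), h2, mul_one]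
  have v3 : V.valuation (F.eval ρ) < V.valuation (F.derivative.eval ρ) := by
    rw [v2]
    refine v1.trans_lt ?_
    exact pow_lt_pow_right_of_lt_one₀ vt ht (by norm_num)
  obtain ⟨r, hr0, hr1⟩ := exists_root_near V.valuation F ρ v3
  have hrV : r ∈ V := by
    have := add_mem ((V.valuation_le_one_iff _).1 hr1.le) hρV
    simpa using this
  refine ⟨r, hrV, ?_, ?_⟩
  · convert hr1 using 2
    rw [hρ]; ring
  · rw [hFeval r hrV] at hr0
    have h4 := (mul_eq_zero.1 hr0).resolve_left (pow_ne_zero _ (hunit hrV))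
    rw [← sub_eq_zero, ← h4, ← Finset.sum_sub_distrib]
    refine Finset.sum_congr rfl fun i _ => ?_
    ring

/-! ### The linear dynamics on residues -/

/-- Explicit solution of the recurrence `z (n + 1) = 2 cos φ * z n - z (n - 1)`, written for the
interleaved sequence `x 0, y 0, x 1, y 1, …` started at index `i`. -/
lemma rotation_closed_form {k : Type*} [Field k] (ψ : ℝ →+* k) {φ : ℝ} (x y : ℕ → k)
    (hx : ∀ n, x (n + 1) = 2 * ψ (Real.cos φ) * y n - x n)
    (hy : ∀ n, y (n + 1) = 2 * ψ (Real.cos φ) * x (n + 1) - y n) (i n : ℕ) :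
    x (i + n) * ψ (Real.sin φ) =
        y i * ψ (Real.sin (2 * n * φ)) - x i * ψ (Real.sin (2 * n * φ - φ)) ∧
      y (i + n) * ψ (Real.sin φ) =
        y i * ψ (Real.sin (2 * n * φ + φ)) - x i * ψ (Real.sin (2 * n * φ)) := by
  induction n with
  | zero => simp
  | succ n ih =>
    obtain ⟨h1, h2⟩ := ih
    -- `sin (θ + φ) = 2 cos φ sin θ - sin (θ - φ)`
    have hs : ∀ θ, ψ (Real.sin (θ + φ)) =
        2 * ψ (Real.cos φ) * ψ (Real.sin θ) - ψ (Real.sin (θ - φ)) := by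
      intro θ
      rw [← map_ofNat ψ 2, ← map_mul, ← map_mul, ← map_sub, Real.sin_add, Real.sin_sub]
      congr 1; ring
    have a1 := hs (2 * n * φ)
    have a2 := hs (2 * n * φ + φ)
    have a3 := hs (2 * n * φ + φ + φ)
    rw [add_sub_cancel_right] at a2 a3
    have b1 : 2 * ((n + 1 : ℕ) : ℝ) * φ = 2 * n * φ + φ + φ := by push_cast; ring
    have hX : x (i + (n + 1)) * ψ (Real.sin φ) =
        y i * ψ (Real.sin (2 * (n + 1 : ℕ) * φ))
          - x i * ψ (Real.sin (2 * (n + 1 : ℕ) * φ - φ)) := by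
      rw [b1, add_sub_cancel_right, ← add_assoc, hx, a2]
      rw [a1] at h2 ⊢
      linear_combination 2 * ψ (Real.cos φ) * h2 - h1
    refine ⟨hX, ?_⟩
    rw [b1, add_sub_cancel_right] at hX
    rw [b1, ← add_assoc, hy, add_assoc, a3]
    linear_combination 2 * ψ (Real.cos φ) * hX - h2 + x i * a2

/-- The composite of the two reflections of the form `X² + 2 c X Y + Y²` has no periodic nonzero
vector, over any field receiving `ℝ`, when `|c| < 1` and `c` is not the cosine of a rational multiple of `π`. -/
lemma no_period {k : Type*} [Field k] (ψ : ℝ →+* k) {c : ℝ} (hc : c ^ 2 < 1)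
    (hirr : ¬ ∃ ρ : ℚ, c = Real.cos (ρ * Real.pi)) (x y : ℕ → k)
    (hx : ∀ n, x (n + 1) + x n + 2 * ψ c * y n = 0)
    (hy : ∀ n, y (n + 1) + y n + 2 * ψ c * x (n + 1) = 0)
    (h0 : ¬ (x 0 = 0 ∧ y 0 = 0)) {i j : ℕ} (hij : i < j) :
    ¬ (x i = x j ∧ y i = y j) := by
  rintro ⟨ex, ey⟩
  have hne : ∀ n, ¬ (x n = 0 ∧ y n = 0) := by
    intro n
    induction n with
    | zero => exact h0
    | succ n ih =>
      rintro ⟨h1, h2⟩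
      have h3 := hy n
      rw [h1, h2] at h3
      have h4 : y n = 0 := by linear_combination h3
      have h5 := hx n
      rw [h1, h4] at h5
      exact ih ⟨by linear_combination h5, h4⟩
  obtain ⟨m, hm, rfl⟩ : ∃ m, 0 < m ∧ j = i + m := ⟨j - i, by omega, by omega⟩
  have habs := abs_lt.1 ((sq_lt_one_iff_abs_lt_one c).1 hc)
  obtain ⟨φ, hφ⟩ : ∃ φ, φ = Real.arccos (-c) := ⟨_, rfl⟩
  have hcos : Real.cos φ = -c := by
    rw [hφ, Real.cos_arccos (by linarith) (by linarith)]
  have hsc := Real.sin_sq_add_cos_sq φ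
  have hsin : Real.sin φ ^ 2 ≠ 0 := by
    rw [hcos] at hsc; nlinarith
  have hcf := rotation_closed_form ψ (φ := φ) x y
    (fun n => by rw [hcos, map_neg]; linear_combination hx n)
    (fun n => by rw [hcos, map_neg]; linear_combination hy n) i m
  rw [← ex, ← ey] at hcf
  obtain ⟨e1, e2⟩ := hcf
  -- the determinant of the linear system satisfied by `(x i, y i)`
  obtain ⟨D, hD⟩ : ∃ D : ℝ, D = Real.sin (2 * m * φ) ^ 2 -
      (Real.sin φ + Real.sin (2 * m * φ - φ)) * (Real.sin (2 * m * φ + φ) - Real.sin φ) := ⟨_, rfl⟩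
  have hDval : D = 2 * Real.sin φ ^ 2 * (1 - Real.cos (2 * m * φ)) := by
    have hsc' := Real.sin_sq_add_cos_sq (2 * m * φ)
    rw [hD, Real.sin_add, Real.sin_sub]
    linear_combination (Real.sin φ ^ 2) * hsc' + Real.sin (2 * m * φ) ^ 2 * (-hsc)
  have hψD : ψ D = ψ (Real.sin (2 * m * φ)) ^ 2 - (ψ (Real.sin φ) + ψ (Real.sin (2 * m * φ - φ)))
      * (ψ (Real.sin (2 * m * φ + φ)) - ψ (Real.sin φ)) := by
    rw [hD]; simp only [map_sub, map_mul, map_add, map_pow]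
  have hD0 : D = 0 := by
    by_contra hDne
    have hψ : ψ D ≠ 0 := by simpa using hDne
    refine hne i ⟨(mul_eq_zero.1 ?_).resolve_left hψ, (mul_eq_zero.1 ?_).resolve_left hψ⟩
    · rw [hψD]
      linear_combination -(ψ (Real.sin (2 * m * φ + φ)) - ψ (Real.sin φ)) * e1
        + ψ (Real.sin (2 * m * φ)) * e2
    · rw [hψD]
      linear_combination (ψ (Real.sin φ) + ψ (Real.sin (2 * m * φ - φ))) * e2
        - ψ (Real.sin (2 * m * φ)) * e1
  have hcos1 : Real.cos (2 * m * φ) = 1 := by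
    rw [hDval] at hD0
    rcases mul_eq_zero.1 hD0 with h | h
    · exact absurd (by linarith) hsin
    · linarith
  obtain ⟨n, hn⟩ := (Real.cos_eq_one_iff _).1 hcos1
  apply hirr
  refine ⟨1 - n / m, ?_⟩
  have hm' : (m : ℝ) ≠ 0 := by positivity
  have : ((1 - n / m : ℚ) : ℝ) * Real.pi = Real.pi - φ := by
    push_cast
    field_simp
    linear_combination -hn / 2
  rw [this, Real.cos_pi_sub, hcos, neg_neg]

/-! ### From linear dynamics to the orbit -/

lemma residue_relation {L : Type*} [Field L] (V : ValuationSubring L) (d : V)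
    (h : V.valuation (d : L) < 1) : IsLocalRing.residue V d = 0 :=
  (IsLocalRing.residue_eq_zero_iff d).2 ((V.valuation_lt_one_iff d).2 h)

/-- The dynamical core: if `x = a (1 + t α₀)` and `y = b (1 + t β₀)` with `t` in the maximal ideal
of a valuation ring containing `ℝ` and `(α₀, β₀)` with nonzero residue vector, the orbit of
`(x, y)` is infinite. Here `P`, `Q`, `R` are the entries of the Hessian of `S` at `(a, b)` in
logarithmic coordinates. -/
lemma infinite_orbit_of_place {L : Type*} [Field L] [IsAlgClosed L] [Algebra ℝ L]
    (V : ValuationSubring L) (hR : ∀ r : ℝ, algebraMap ℝ L r ∈ V)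
    (S : Finset (ℤ × ℤ)) {a b c P Q R : ℝ} (ha : a ≠ 0) (hb : b ≠ 0)
    (hk : ∑ s ∈ S, a ^ s.1 * b ^ s.2 * (s.1 : ℝ) = 0)
    (hl : ∑ s ∈ S, a ^ s.1 * b ^ s.2 * (s.2 : ℝ) = 0)
    (hP : ∑ s ∈ S, a ^ s.1 * b ^ s.2 * (s.1 : ℝ) ^ 2 = P)
    (hQ : ∑ s ∈ S, a ^ s.1 * b ^ s.2 * (s.2 : ℝ) ^ 2 = Q)
    (hRR : ∑ s ∈ S, a ^ s.1 * b ^ s.2 * ((s.1 : ℝ) * s.2) = R)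
    (hP0 : 0 < P) (hQ0 : 0 < Q) (hdet : R ^ 2 < P * Q)
    (hc : c = R / (Real.sqrt P * Real.sqrt Q))
    (hirr : ¬ ∃ ρ : ℚ, c = Real.cos (ρ * Real.pi))
    {t : L} (ht0 : t ≠ 0) (ht : V.valuation t < 1) (α₀ β₀ : V)
    (h0 : ¬ (V.valuation (α₀ : L) < 1 ∧ V.valuation (β₀ : L) < 1)) :
    (orbitOf S (algebraMap ℝ L a * (1 + t * α₀), algebraMap ℝ L b * (1 + t * β₀))).Infinite := by
  set φ := algebraMap ℝ L with hφ
  have hφa : φ a ≠ 0 := by simpa using ha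
  have hφb : φ b ≠ 0 := by simpa using hb
  let pt : V × V → L × L := fun z => (φ a * (1 + t * z.1), φ b * (1 + t * z.2))
  have hunit : ∀ z : V, 1 + t * (z : L) ≠ 0 := by
    intro z h
    have hu := val_one_add V ht z.2
    rw [h] at hu; simp at hu
  have hval : ∀ z, stepVal S (pt z) = ∑ s ∈ S, φ (a ^ s.1 * b ^ s.2) *
      (1 + t * (z.1 : L)) ^ s.1 * (1 + t * (z.2 : L)) ^ s.2 := by
    intro z
    refine Finset.sum_congr rfl fun s _ => ?_
    simp only [pt, mul_zpow, map_mul, map_zpow₀]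
    ring
  have hadj : ∀ z z' : V × V, stepVal S (pt z) = stepVal S (pt z') →
      (z.1 = z'.1 ∨ z.2 = z'.2) → Relation.ReflTransGen (AdjacentPair S) (pt z) (pt z') := by
    intro z z' h h'
    by_cases he : pt z = pt z'
    · rw [he]
    · refine Relation.ReflTransGen.single ⟨he, mul_ne_zero hφa (hunit _), mul_ne_zero hφb (hunit _),
        mul_ne_zero hφa (hunit _), mul_ne_zero hφb (hunit _), h, ?_⟩
      rcases h' with h' | h'
      · left; simp only [pt, h']
      · right; simp only [pt, h']
  have hstep : ∀ z : V × V, ∃ z' : V × V,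
      Relation.ReflTransGen (AdjacentPair S) (pt z) (pt z') ∧
      V.valuation ((z'.1 : L) + z.1 + φ (2 * (R / P)) * z.2) < 1 ∧
      V.valuation ((z'.2 : L) + z.2 + φ (2 * (R / Q)) * z'.1) < 1 := by
    rintro ⟨α, β⟩
    obtain ⟨α', hα', e1, e2⟩ := exists_reflection V hR S (fun s => s.1) (fun s => s.2)
      (fun s => a ^ s.1 * b ^ s.2) P R hk hP hRR hP0.ne' ht0 ht α.2 β.2
    obtain ⟨β', hβ', e3, e4⟩ := exists_reflection V hR S (fun s => s.2) (fun s => s.1)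
      (fun s => a ^ s.1 * b ^ s.2) Q R hl hQ (by simpa only [mul_comm] using hRR)
      hQ0.ne' ht0 ht β.2 hα'
    refine ⟨(⟨α', hα'⟩, ⟨β', hβ'⟩), ?_, e1, e3⟩
    refine (hadj (α, β) (⟨α', hα'⟩, β) ?_ (Or.inr rfl)).trans (hadj _ _ ?_ (Or.inl rfl))
    · rw [hval, hval]; exact e2.symm
    · rw [hval, hval]
      refine Eq.trans ?_ (e4.symm.trans ?_) <;>
      exact Finset.sum_congr rfl fun s _ => mul_right_comm _ _ _
  choose nxt hn1 hn2 hn3 using hstep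
  let f : ℕ → V × V := fun n => Nat.rec (α₀, β₀) (fun _ z => nxt z) n
  have hf : ∀ n, f (n + 1) = nxt (f n) := fun n => rfl
  have horb : ∀ n, pt (f n) ∈ orbitOf S (pt (f 0)) := by
    intro n
    induction n with
    | zero => exact Relation.ReflTransGen.refl
    | succ n ih => exact Relation.ReflTransGen.trans ih (hn1 (f n))
  -- the residues of the rescaled coordinates obey the linear recurrence of `no_period`
  let ψ : ℝ →+* IsLocalRing.ResidueField V :=
    (IsLocalRing.residue V).comp (φ.codRestrict V.toSubring hR)
  have hp2 := Real.mul_self_sqrt hP0.le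
  have hq2 := Real.mul_self_sqrt hQ0.le
  have hp := Real.sqrt_pos.2 hP0
  have hq := Real.sqrt_pos.2 hQ0
  set p := Real.sqrt P
  set q := Real.sqrt Q
  have hres1 : ∀ n, IsLocalRing.residue V (f (n + 1)).1 + IsLocalRing.residue V (f n).1
      + ψ (2 * (R / P)) * IsLocalRing.residue V (f n).2 = 0 := by
    intro n
    have := residue_relation V ((f (n + 1)).1 + (f n).1
      + (φ.codRestrict V.toSubring hR (2 * (R / P))) * (f n).2) (hn2 (f n))
    rw [map_add, map_add, map_mul (IsLocalRing.residue V)] at this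
    exact this
  have hres2 : ∀ n, IsLocalRing.residue V (f (n + 1)).2 + IsLocalRing.residue V (f n).2
      + ψ (2 * (R / Q)) * IsLocalRing.residue V (f (n + 1)).1 = 0 := by
    intro n
    have := residue_relation V ((f (n + 1)).2 + (f n).2
      + (φ.codRestrict V.toSubring hR (2 * (R / Q))) * (f (n + 1)).1) (hn3 (f n))
    rw [map_add, map_add, map_mul (IsLocalRing.residue V)] at this
    exact this
  have hψp : ψ p ≠ 0 := by simpa using hp.ne'
  have hψq : ψ q ≠ 0 := by simpa using hq.ne'
  have key := fun i j => @no_period _ _ ψ c (by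
      rw [hc, div_pow, mul_pow, pow_two p, pow_two q, hp2, hq2, div_lt_one (by positivity)]
      exact hdet) hirr
    (fun n => ψ p * IsLocalRing.residue V (f n).1) (fun n => ψ q * IsLocalRing.residue V (f n).2)
    (fun n => by
      have e : p * (2 * (R / P)) = 2 * c * q := by
        rw [hc, ← hp2]; field_simp
      have e' := congrArg ψ e
      simp only [map_mul ψ, map_ofNat] at e'
      have h := hres1 n
      rw [map_mul ψ, map_ofNat] at h
      linear_combination ψ p * h - IsLocalRing.residue V (f n).2 * e')
    (fun n => by
      have e : q * (2 * (R / Q)) = 2 * c * p := by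
        rw [hc, ← hq2]; field_simp
      have e' := congrArg ψ e
      simp only [map_mul ψ, map_ofNat] at e'
      have h := hres2 n
      rw [map_mul ψ, map_ofNat] at h
      linear_combination ψ q * h - IsLocalRing.residue V (f (n + 1)).1 * e')
    (by
      rintro ⟨h1, h2⟩
      have h1' := (mul_eq_zero.1 h1).resolve_left hψp
      have h2' := (mul_eq_zero.1 h2).resolve_left hψq
      rw [IsLocalRing.residue_eq_zero_iff, V.valuation_lt_one_iff] at h1' h2'
      exact h0 ⟨h1', h2'⟩) i j
  have hinj_f : ∀ i j, i < j → f i ≠ f j := by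
    intro i j hij h
    exact key i j hij ⟨by simp only [h], by simp only [h]⟩
  refine Set.infinite_of_injective_forall_mem (f := fun n => pt (f n)) ?_ horb
  have hpt : Function.Injective pt := by
    rintro ⟨α, β⟩ ⟨α', β'⟩ h
    simp only [pt, Prod.mk.injEq, mul_eq_mul_left_iff, add_right_inj, hφa, hφb, ht0, or_false,
      Subtype.coe_inj] at h
    exact Prod.ext h.1 h.2
  intro i j h
  by_contra hij
  rcases lt_or_gt_of_ne hij with h' | h'
  · exact hinj_f i j h' (hpt h)
  · exact hinj_f j i h' (hpt h).symm

/-! ### The valuation ring and the Hessian form -/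

/-- Every proper ideal of a ring embedded in a field is carried into the maximal ideal of some
valuation ring of the field that contains the image of the ring. -/
lemma exists_place {A L : Type*} [CommRing A] [Field L] (f : A →+* L)
    (hf : Function.Injective f) (I : Ideal A) (hI : I ≠ ⊤) :
    ∃ V : ValuationSubring L, (∀ r, f r ∈ V) ∧ ∀ r ∈ I, V.valuation (f r) < 1 := by
  let e : A ≃+* f.range := RingEquiv.ofBijective f.rangeRestrict
    ⟨f.injective_codRestrict.2 hf, f.rangeRestrict_surjective⟩
  obtain ⟨V, h1, h2⟩ := Ideal.image_subset_nonunits_valuationSubring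
    (I.comap (e.symm : f.range →+* A)) (Ideal.comap_ne_top _ hI)
  refine ⟨V, fun r => h1 ⟨r, rfl⟩, fun r hr => ?_⟩
  refine (V.mem_nonunits_iff).1 (h2 ⟨e r, ?_, rfl⟩)
  simpa [Ideal.mem_comap] using hr

/-- Positivity of the logarithmic Hessian form, which is where the half-plane condition enters. -/
lemma sum_sq_pos {S : Finset (ℤ × ℤ)} (h1 : NotInHalfPlane S) {a b : ℝ} (ha : 0 < a) (hb : 0 < b)
    (u v : ℝ) (huv : (u, v) ≠ ((0 : ℝ), (0 : ℝ))) :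
    0 < ∑ s ∈ S, a ^ s.1 * b ^ s.2 * ((s.1 : ℝ) * u + s.2 * v) ^ 2 := by
  obtain ⟨s, hs, hlt⟩ := h1 u v huv
  refine Finset.sum_pos' (fun i _ => by positivity) ⟨s, hs, ?_⟩
  have := sq_pos_of_neg hlt
  positivity

/-- If `c` is not the cosine of a rational multiple of `π`, then the orbit of `(x,y)`
is infinite. -/
theorem stmt1 (S : Finset (ℤ × ℤ)) (h1 : NotInHalfPlane S) (h2 : HasQuadrantStep S)
    (a b c : ℝ) (ha : 0 < a) (hb : 0 < b)
    (hcx : stepPolyDx S a b = 0) (hcy : stepPolyDy S a b = 0)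
    (hc : c = stepPolyDxy S a b / Real.sqrt (stepPolyDxx S a b * stepPolyDyy S a b))
    (hirr : ¬ ∃ ρ : ℚ, c = Real.cos (ρ * Real.pi)) :
    (orbitOf S (xVar, yVar)).Infinite := by
  have ha0 := ha.ne'
  have hb0 := hb.ne'
  obtain ⟨P, hP⟩ : ∃ P, ∑ s ∈ S, a ^ s.1 * b ^ s.2 * (s.1 : ℝ) ^ 2 = P := ⟨_, rfl⟩
  obtain ⟨Q, hQ⟩ : ∃ Q, ∑ s ∈ S, a ^ s.1 * b ^ s.2 * (s.2 : ℝ) ^ 2 = Q := ⟨_, rfl⟩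
  obtain ⟨R, hR⟩ : ∃ R, ∑ s ∈ S, a ^ s.1 * b ^ s.2 * ((s.1 : ℝ) * s.2) = R := ⟨_, rfl⟩
  have hk : ∑ s ∈ S, a ^ s.1 * b ^ s.2 * (s.1 : ℝ) = 0 := by
    have : a * stepPolyDx S a b = 0 := by rw [hcx, mul_zero]
    rw [← this, stepPolyDx, Finset.mul_sum]
    refine Finset.sum_congr rfl fun s _ => ?_
    rw [zpow_sub_one₀ ha0]; field_simp
  have hl : ∑ s ∈ S, a ^ s.1 * b ^ s.2 * (s.2 : ℝ) = 0 := by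
    have : b * stepPolyDy S a b = 0 := by rw [hcy, mul_zero]
    rw [← this, stepPolyDy, Finset.mul_sum]
    refine Finset.sum_congr rfl fun s _ => ?_
    rw [zpow_sub_one₀ hb0]; field_simp
  have hxx : stepPolyDxx S a b = P / a ^ 2 := by
    rw [eq_div_iff (by positivity), ← sub_zero P, ← hk, ← hP, stepPolyDxx, Finset.sum_mul,
      ← Finset.sum_sub_distrib]
    refine Finset.sum_congr rfl fun s _ => ?_
    rw [zpow_sub₀ ha0, zpow_ofNat]; field_simp
  have hyy : stepPolyDyy S a b = Q / b ^ 2 := by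
    rw [eq_div_iff (by positivity), ← sub_zero Q, ← hl, ← hQ, stepPolyDyy, Finset.sum_mul,
      ← Finset.sum_sub_distrib]
    refine Finset.sum_congr rfl fun s _ => ?_
    rw [zpow_sub₀ hb0, zpow_ofNat]; field_simp
  have hxy : stepPolyDxy S a b = R / (a * b) := by
    rw [eq_div_iff (by positivity), ← hR, stepPolyDxy, Finset.sum_mul]
    refine Finset.sum_congr rfl fun s _ => ?_
    rw [zpow_sub_one₀ ha0, zpow_sub_one₀ hb0]; field_simp
  have hform : ∀ u v : ℝ, (u, v) ≠ ((0 : ℝ), (0 : ℝ)) →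
      0 < P * u ^ 2 + 2 * R * (u * v) + Q * v ^ 2 := by
    intro u v huv
    convert sum_sq_pos h1 ha hb u v huv using 1
    rw [← hP, ← hQ, ← hR]
    simp only [Finset.sum_mul, Finset.mul_sum, ← Finset.sum_add_distrib]
    refine Finset.sum_congr rfl fun s _ => ?_
    ring
  have hP0 : 0 < P := by simpa using hform 1 0 (by simp)
  have hQ0 : 0 < Q := by simpa using hform 0 1 (by simp)
  have hdet : R ^ 2 < P * Q := by
    have := hform (-R) P (by simp [hP0.ne'])
    have h3 : 0 < P * (P * Q - R ^ 2) := by linarith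
    linarith [pos_of_mul_pos_right h3 hP0.le]
  have hc' : c = R / (Real.sqrt P * Real.sqrt Q) := by
    have e : P / a ^ 2 * (Q / b ^ 2) = (Real.sqrt P * Real.sqrt Q / (a * b)) ^ 2 := by
      rw [div_pow, mul_pow, Real.sq_sqrt hP0.le, Real.sq_sqrt hQ0.le]; field_simp
    rw [hc, hxx, hyy, hxy, e, Real.sqrt_sq (by positivity)]
    have := Real.sqrt_pos.2 hP0
    have := Real.sqrt_pos.2 hQ0
    field_simp
  let f : MvPolynomial (Fin 2) ℂ →+* K2bar :=
    (algebraMap K2 K2bar).comp (algebraMap (MvPolynomial (Fin 2) ℂ) K2)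
  have hf : Function.Injective f :=
    (algebraMap K2 K2bar).injective.comp (IsFractionRing.injective _ _)
  let ev : MvPolynomial (Fin 2) ℂ →+* ℂ := MvPolynomial.eval ![(a : ℂ), (b : ℂ)]
  obtain ⟨V, hV1, hV2⟩ := exists_place f hf (RingHom.ker ev) (RingHom.ker_ne_top _)
  let _ : Algebra ℝ K2bar := (f.comp (MvPolynomial.C.comp Complex.ofRealHom)).toAlgebra
  have hmap : ∀ r : ℝ, algebraMap ℝ K2bar r = f (MvPolynomial.C (r : ℂ)) := fun r => rfl
  have hRV : ∀ r : ℝ, algebraMap ℝ K2bar r ∈ V := fun r => hV1 _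
  have hφa : algebraMap ℝ K2bar a ≠ 0 := by simpa using ha0
  have hφb : algebraMap ℝ K2bar b ≠ 0 := by simpa using hb0
  obtain ⟨σ, hσ⟩ : ∃ σ, σ = xVar / algebraMap ℝ K2bar a - 1 := ⟨_, rfl⟩
  obtain ⟨τ, hτ⟩ : ∃ τ, τ = yVar / algebraMap ℝ K2bar b - 1 := ⟨_, rfl⟩
  have hx : xVar = algebraMap ℝ K2bar a * (1 + σ) := by rw [hσ]; field_simp; ring
  have hy : yVar = algebraMap ℝ K2bar b * (1 + τ) := by rw [hτ]; field_simp; ring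
  have hσ1 : V.valuation σ < 1 := by
    have e : σ = f (MvPolynomial.C ((a⁻¹ : ℝ) : ℂ) * MvPolynomial.X 0 - 1) := by
      rw [map_sub, map_mul, ← hmap, map_inv₀, hσ, map_one, div_eq_inv_mul]; rfl
    rw [e]
    refine hV2 _ ?_
    simp [RingHom.mem_ker, ev, ha0]
  have hτ1 : V.valuation τ < 1 := by
    have e : τ = f (MvPolynomial.C ((b⁻¹ : ℝ) : ℂ) * MvPolynomial.X 1 - 1) := by
      rw [map_sub, map_mul, ← hmap, map_inv₀, hτ, map_one, div_eq_inv_mul]; rfl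
    rw [e]
    refine hV2 _ ?_
    simp [RingHom.mem_ker, ev, hb0]
  have hσ0 : σ ≠ 0 := by
    intro h
    rw [h, add_zero, mul_one, hmap] at hx
    have hx' : (MvPolynomial.X 0 : MvPolynomial (Fin 2) ℂ) = MvPolynomial.C (a : ℂ) := hf hx
    have := congrArg (MvPolynomial.eval (fun _ => (a : ℂ) + 1)) hx'
    simp at this
  -- the scale `t` is whichever of `σ`, `τ` has larger valuation
  rcases le_total (V.valuation τ) (V.valuation σ) with hle | hle
  · have hmem : τ / σ ∈ V := by
      rw [← V.valuation_le_one_iff, map_div₀]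
      exact div_le_one_of_le₀ hle (zero_le)
    have := infinite_orbit_of_place V hRV S ha0 hb0 hk hl hP hQ hR hP0 hQ0 hdet hc' hirr
      hσ0 hσ1 1 ⟨τ / σ, hmem⟩ (by simp)
    rwa [OneMemClass.coe_one, mul_one, ← hx, mul_div_cancel₀ _ hσ0, ← hy] at this
  · have hτ0 : τ ≠ 0 := by
      rintro rfl
      simp [hσ0] at hle
    have hmem : σ / τ ∈ V := by
      rw [← V.valuation_le_one_iff, map_div₀]
      exact div_le_one_of_le₀ hle (zero_le)
    have := infinite_orbit_of_place V hRV S ha0 hb0 hk hl hP hQ hR hP0 hQ0 hdet hc' hirr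
      hτ0 hτ1 ⟨σ / τ, hmem⟩ 1 (by simp)
    rwa [OneMemClass.coe_one, mul_one, ← hy, mul_div_cancel₀ _ hτ0, ← hx] at this
end

section
/- Let 𝒮 ⊆ ℤ² be a finite step set that is not contained in a half-plane, and let Λ be the subgroup of ℤ² generated by 𝒮. Then there exists an integer p ≥ 1 (the period of 𝒮) such that for every (i,j) ∈ Λ there is a residue r ∈ {0,…,p−1} with the following two properties: w(i,j;n) = 0 whenever n is not congruent to r modulo p, and there exists M ∈ ℕ such that w(i,j;pm+r) > 0 for all m ≥ M. Moreover, 𝒮 is strongly aperiodic if and only if p = 1. -/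
/-!
Record the length of a walk next to its endpoint: let `R ⊆ ℤ² × ℤ` be the submonoid and `G` the
subgroup generated by the vectors `(s, 1)`, `s ∈ 𝒮`. There is an `n`-step walk to `v` exactly when
`(v, n) ∈ R` (`freeWalks_pos_iff`). The period `p` is the nonnegative generator of the group
`{k | (0, k) ∈ G}`, so that all lengths of walks to a given point agree modulo `p`.

The half-plane hypothesis enters through `exists_loop`: every step lies on a closed walk. For a
step `s ≠ 0`, take the step `t` strictly to the left of `s` with the largest angle from `s`, then a
step `x` strictly to the left of `t`. By extremality `x` is not strictly to the left of `s`, and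
`det(s,t) x + det(t,x) s + det(x,s) t = 0` is a closed walk through `s`. Hence
`R` and `G` agree up to adding lengths of closed walks (`exists_shift`). In particular there are
closed walks whose lengths are consecutive multiples of `p`, so all large multiples of `p` are
lengths of closed walks (`exists_large_loops`); prefixing them to a fixed walk to `v` gives all
large lengths in the right class.

If `p = 1` then `(0, 1) ∈ G`, and the image of `G` under `(v, k) ↦ v + k x` gives strong
aperiodicity. Conversely, strong aperiodicity at `x = -s` puts `s` in the group generated by the
differences of steps, so `(s, 0) ∈ G`, whence `(0, 1) ∈ G` and `p ∣ 1`.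
-/

open Finset

/-- Number of unconstrained `n`-step walks from `(0,0)` to `(i,j)` with steps in `S`. -/
noncomputable def freeWalks (S : Finset (ℤ × ℤ)) (i j : ℤ) (n : ℕ) : ℕ :=
  Nat.card {f : Fin n → ℤ × ℤ // (∀ k, f k ∈ S) ∧ (∑ k, f k) = (i, j)}

/-- `𝒮` is strongly aperiodic: for every `x` in the lattice `Λ` generated by `𝒮`,
the subgroup generated by `{x+s : s ∈ 𝒮}` is all of `Λ`. -/
def StronglyAperiodic (S : Finset (ℤ × ℤ)) : Prop :=
  ∀ x ∈ AddSubgroup.closure (S : Set (ℤ × ℤ)),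
    AddSubgroup.closure ((fun s => x + s) '' (S : Set (ℤ × ℤ))) =
      AddSubgroup.closure (S : Set (ℤ × ℤ))

/-- The set of vectors `(s, 1)` for `s ∈ S`: the steps together with their length. -/
def lifted (S : Finset (ℤ × ℤ)) : Set ((ℤ × ℤ) × ℤ) :=
  (fun s => (s, (1 : ℤ))) '' (S : Set (ℤ × ℤ))

/-- The submonoid of pairs (endpoint, length) of walks with steps in `S`. -/
def walkMonoid (S : Finset (ℤ × ℤ)) : AddSubmonoid ((ℤ × ℤ) × ℤ) :=
  AddSubmonoid.closure (lifted S)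

/-- The group generated by the pairs (endpoint, length) of walks with steps in `S`. -/
def walkGroup (S : Finset (ℤ × ℤ)) : AddSubgroup ((ℤ × ℤ) × ℤ) :=
  AddSubgroup.closure (lifted S)

lemma step_mem_monoid {S : Finset (ℤ × ℤ)} {s : ℤ × ℤ} (hs : s ∈ S) :
    (s, (1 : ℤ)) ∈ walkMonoid S :=
  AddSubmonoid.subset_closure ⟨s, hs, rfl⟩

lemma step_mem_group {S : Finset (ℤ × ℤ)} {s : ℤ × ℤ} (hs : s ∈ S) :
    (s, (1 : ℤ)) ∈ walkGroup S :=
  AddSubgroup.subset_closure ⟨s, hs, rfl⟩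

lemma monoid_le_group {S : Finset (ℤ × ℤ)} {g : (ℤ × ℤ) × ℤ} (hg : g ∈ walkMonoid S) :
    g ∈ walkGroup S := by
  have h : walkMonoid S ≤ (walkGroup S).toAddSubmonoid :=
    AddSubmonoid.closure_le.2 AddSubgroup.subset_closure
  exact h hg

lemma exists_walk_of_mem {S : Finset (ℤ × ℤ)} {g : (ℤ × ℤ) × ℤ} (hg : g ∈ walkMonoid S) :
    ∃ n : ℕ, g.2 = n ∧ ∃ f : Fin n → ℤ × ℤ, (∀ k, f k ∈ S) ∧ ∑ k, f k = g.1 := by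
  induction hg using AddSubmonoid.closure_induction with
  | mem x hx =>
    obtain ⟨s, hs, rfl⟩ := hx
    exact ⟨1, by simp, fun _ => s, fun _ => hs, by simp⟩
  | zero => exact ⟨0, by simp, fun _ => 0, fun k => k.elim0, by simp⟩
  | add x y _ _ hx hy =>
    obtain ⟨n, hn, f, hf, hfs⟩ := hx
    obtain ⟨m, hm, e, he, hes⟩ := hy
    refine ⟨n + m, by simp [hn, hm], Fin.append f e, fun k => ?_, ?_⟩
    · refine Fin.addCases (fun i => ?_) (fun i => ?_) k
      · simpa using hf i
      · simpa using he i
    · simp [Fin.sum_univ_add, hfs, hes]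

lemma mem_of_walk {S : Finset (ℤ × ℤ)} {n : ℕ} (f : Fin n → ℤ × ℤ) (hf : ∀ k, f k ∈ S) :
    (∑ k, f k, (n : ℤ)) ∈ walkMonoid S := by
  have h : ∑ k, (f k, (1 : ℤ)) ∈ walkMonoid S :=
    sum_mem fun k _ => step_mem_monoid (hf k)
  convert h using 1
  ext <;> simp [Prod.fst_sum, Prod.snd_sum]

lemma freeWalks_pos_iff (S : Finset (ℤ × ℤ)) (v : ℤ × ℤ) (n : ℕ) :
    0 < freeWalks S v.1 v.2 n ↔ (v, (n : ℤ)) ∈ walkMonoid S := by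
  have hfin : Finite {f : Fin n → ℤ × ℤ // (∀ k, f k ∈ S) ∧ (∑ k, f k) = (v.1, v.2)} := by
    refine Finite.of_injective (β := Fin n → S) (fun f k => ⟨f.1 k, f.2.1 k⟩) ?_
    intro f e h
    ext1
    funext k
    simpa using congrArg Subtype.val (congrFun h k)
  rw [freeWalks, Nat.card_pos_iff, and_iff_left hfin]
  constructor
  · rintro ⟨f, hf, hs⟩
    have := mem_of_walk f hf
    rwa [hs] at this
  · intro h
    obtain ⟨m, hm, f, hf, hs⟩ := exists_walk_of_mem h
    obtain rfl : n = m := Int.ofNat_inj.1 hm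
    exact ⟨f, hf, hs⟩

/-- The hypothesis `NotInHalfPlane` for the integral functional `x ↦ det(x, t)`. -/
lemma exists_det_pos {S : Finset (ℤ × ℤ)} (h1 : NotInHalfPlane S) {t : ℤ × ℤ} (ht : t ≠ 0) :
    ∃ x ∈ S, 0 < t.1 * x.2 - t.2 * x.1 := by
  obtain ⟨x, hx, h⟩ := h1 t.2 (-t.1) (by
    intro h
    apply ht
    simp only [Prod.mk.injEq, neg_eq_zero, Int.cast_eq_zero] at h
    exact Prod.ext h.2 h.1)
  refine ⟨x, hx, ?_⟩
  have h' : x.1 * t.2 + x.2 * (-t.1) < 0 := by exact_mod_cast h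
  linarith

/-- Every step lies on a closed walk: the inverse of a step is itself reachable. -/
lemma exists_loop {S : Finset (ℤ × ℤ)} (h1 : NotInHalfPlane S) {s : ℤ × ℤ} (hs : s ∈ S) :
    ∃ n : ℤ, 0 ≤ n ∧ (-s, n) ∈ walkMonoid S := by
  rcases eq_or_ne s 0 with rfl | hs0
  · exact ⟨0, le_rfl, by
    rw [neg_zero]
    exact (walkMonoid S).zero_mem⟩
  obtain ⟨t', ht', hst'⟩ := exists_det_pos h1 hs0
  -- The quotient `⟨s,t⟩ / det(s,t)` is the cotangent of the angle from `s` to `t`, so the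
  -- minimum is attained at the largest angle.
  obtain ⟨t, ht, hmin⟩ := (S.filter fun t => 0 < s.1 * t.2 - s.2 * t.1).exists_min_image
    (fun t => ((s.1 * t.1 + s.2 * t.2 : ℤ) : ℚ) / ((s.1 * t.2 - s.2 * t.1 : ℤ) : ℚ))
    ⟨t', Finset.mem_filter.2 ⟨ht', hst'⟩⟩
  obtain ⟨htS, hst⟩ := Finset.mem_filter.1 ht
  have ht0 : t ≠ 0 := by
    rintro rfl
    simp at hst
  obtain ⟨x, hx, htx⟩ := exists_det_pos h1 ht0
  have hxs : 0 ≤ x.1 * s.2 - x.2 * s.1 := by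
    by_contra! hneg
    have hsx : 0 < s.1 * x.2 - s.2 * x.1 := by linarith
    have h := hmin x (Finset.mem_filter.2 ⟨hx, hsx⟩)
    rw [div_le_div_iff₀ (by exact_mod_cast hst) (by exact_mod_cast hsx)] at h
    have h' : (s.1 * t.1 + s.2 * t.2) * (s.1 * x.2 - s.2 * x.1) ≤
        (s.1 * x.1 + s.2 * x.2) * (s.1 * t.2 - s.2 * t.1) := by exact_mod_cast h
    have hpos : 0 < s.1 ^ 2 + s.2 ^ 2 := by
      by_contra! hle
      apply hs0
      have ha : s.1 = 0 := by nlinarith [sq_nonneg s.1, sq_nonneg s.2]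
      have hb : s.2 = 0 := by nlinarith [sq_nonneg s.1, sq_nonneg s.2]
      exact Prod.ext ha hb
    -- The difference of the two sides of `h'` is `|s|² det(t,x)`.
    nlinarith [mul_pos hpos htx]
  obtain ⟨a, ha⟩ := Int.eq_ofNat_of_zero_le hst.le
  obtain ⟨b, hb⟩ := Int.eq_ofNat_of_zero_le hxs
  obtain ⟨c, hc⟩ := Int.eq_ofNat_of_zero_le (show 0 ≤ t.1 * x.2 - t.2 * x.1 - 1 by omega)
  refine ⟨a + b + c, by positivity, ?_⟩
  have h := add_mem (add_mem ((walkMonoid S).nsmul_mem (step_mem_monoid hx) a)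
    ((walkMonoid S).nsmul_mem (step_mem_monoid htS) b))
    ((walkMonoid S).nsmul_mem (step_mem_monoid hs) c)
  convert h using 1
  ext
  · simp only [Prod.smul_mk, Prod.mk_add_mk, Prod.fst_add, Prod.smul_fst, Prod.fst_neg]
    simp only [nsmul_eq_mul, ← ha, ← hb, ← hc]
    ring
  · simp only [Prod.smul_mk, Prod.mk_add_mk, Prod.snd_add, Prod.smul_snd, Prod.snd_neg]
    simp only [nsmul_eq_mul, ← ha, ← hb, ← hc]
    ring
  · simp

/-- Any element of the group becomes an actual walk after adding the length of a closed walk. -/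
lemma exists_shift {S : Finset (ℤ × ℤ)} (h1 : NotInHalfPlane S) {g : (ℤ × ℤ) × ℤ}
    (hg : g ∈ walkGroup S) :
    ∃ N : ℕ, ((0 : ℤ × ℤ), (N : ℤ)) ∈ walkMonoid S ∧ g + (0, (N : ℤ)) ∈ walkMonoid S := by
  have hg' : g ∈ AddSubmonoid.closure (lifted S ∪ -lifted S) := by
    rw [← AddSubgroup.closure_toAddSubmonoid]
    exact hg
  clear hg
  induction hg' using AddSubmonoid.closure_induction with
  | mem x hx =>
    rcases hx with hx | hx
    · exact ⟨0, (walkMonoid S).zero_mem, by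
        rw [Nat.cast_zero, Prod.mk_zero_zero, add_zero]
        exact AddSubmonoid.subset_closure hx⟩
    · obtain ⟨s, hs, hsx⟩ := hx
      obtain ⟨n, hn, hmem⟩ := exists_loop h1 hs
      lift n to ℕ using hn
      obtain rfl : x = -(s, (1 : ℤ)) := by simpa using (congrArg Neg.neg hsx).symm
      refine ⟨n + 1, ?_, ?_⟩
      · simpa using add_mem hmem (step_mem_monoid hs)
      · simpa using hmem
  | zero => exact ⟨0, (walkMonoid S).zero_mem, (walkMonoid S).zero_mem⟩
  | add x y _ _ hx hy =>
    obtain ⟨N, hN, hxN⟩ := hx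
    obtain ⟨K, hK, hyK⟩ := hy
    refine ⟨N + K, by simpa using add_mem hN hK, ?_⟩
    have h := add_mem hxN hyK
    rw [add_add_add_comm] at h
    simpa using h

/-- All large multiples of `p` are lengths of closed walks, as soon as `p` generates the group of
formal lengths of closed walks. -/
lemma exists_large_loops {S : Finset (ℤ × ℤ)} (h1 : NotInHalfPlane S) {p : ℕ}
    (hp : ∀ k : ℤ, ((0 : ℤ × ℤ), k) ∈ walkGroup S ↔ (p : ℤ) ∣ k) :
    ∃ M : ℕ, ∀ m : ℕ, M ≤ m → ((0 : ℤ × ℤ), ((p * m : ℕ) : ℤ)) ∈ walkMonoid S := by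
  obtain ⟨N, hN, hNp⟩ := exists_shift h1 ((hp p).2 dvd_rfl)
  obtain ⟨k, rfl⟩ : p ∣ N := by exact_mod_cast (hp N).1 (monoid_le_group hN)
  refine ⟨k * k, fun m hm => ?_⟩
  -- Both `p * k` and `p * (k + 1)` are lengths of closed walks; the bound `k * k ≤ m` makes the
  -- quotient of `m` by `k` at least the remainder.
  obtain ⟨a, b, hab⟩ : ∃ a b : ℕ, m = k * a + (k + 1) * b := by
    rcases Nat.eq_zero_or_pos k with rfl | hk
    · exact ⟨0, m, by simp⟩
    · have hq : m % k ≤ m / k :=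
        (Nat.mod_lt m hk).le.trans ((Nat.le_div_iff_mul_le hk).2 hm)
      obtain ⟨d, hd⟩ := Nat.exists_eq_add_of_le hq
      refine ⟨d, m % k, ?_⟩
      conv_lhs => rw [← Nat.div_add_mod m k, hd]
      ring
  have h := add_mem ((walkMonoid S).nsmul_mem hN a) ((walkMonoid S).nsmul_mem hNp b)
  convert h using 1
  subst hab
  ext <;> simp
  ring

/-- Endpoints of formal walks: every lattice point carries some length. -/
lemma exists_length {S : Finset (ℤ × ℤ)} {v : ℤ × ℤ}
    (hv : v ∈ AddSubgroup.closure (S : Set (ℤ × ℤ))) : ∃ k : ℤ, (v, k) ∈ walkGroup S := by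
  induction hv using AddSubgroup.closure_induction with
  | mem x hx => exact ⟨1, step_mem_group hx⟩
  | zero => exact ⟨0, (walkGroup S).zero_mem⟩
  | add x y _ _ hx hy =>
    obtain ⟨k, hk⟩ := hx
    obtain ⟨l, hl⟩ := hy
    exact ⟨k + l, by simpa using add_mem hk hl⟩
  | neg x _ hx =>
    obtain ⟨k, hk⟩ := hx
    exact ⟨-k, by simpa using neg_mem hk⟩

lemma stronglyAperiodic_of_one_mem {S : Finset (ℤ × ℤ)}
    (h : ((0 : ℤ × ℤ), (1 : ℤ)) ∈ walkGroup S) : StronglyAperiodic S := by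
  intro x hx
  apply le_antisymm
  · rw [AddSubgroup.closure_le]
    rintro _ ⟨s, hs, rfl⟩
    exact add_mem hx (AddSubgroup.subset_closure hs)
  · rw [AddSubgroup.closure_le]
    intro s hs
    have key : ∀ g ∈ walkGroup S,
        g.1 + g.2 • x ∈ AddSubgroup.closure ((fun s => x + s) '' (S : Set (ℤ × ℤ))) := by
      intro g hg
      induction hg using AddSubgroup.closure_induction with
      | mem y hy =>
        obtain ⟨t, ht, rfl⟩ := hy
        exact AddSubgroup.subset_closure ⟨t, ht, by simp [add_comm]⟩
      | zero => simp
      | add y z _ _ hy hz =>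
        have := add_mem hy hz
        rw [add_add_add_comm, ← add_smul] at this
        exact this
      | neg y _ hy =>
        have := neg_mem hy
        rw [neg_add, ← neg_smul] at this
        exact this
    have hs0 : (s, (0 : ℤ)) ∈ walkGroup S := by
      simpa using sub_mem (step_mem_group hs) h
    simpa using key _ hs0

lemma one_mem_of_stronglyAperiodic {S : Finset (ℤ × ℤ)} {s : ℤ × ℤ} (hs : s ∈ S)
    (h : StronglyAperiodic S) : ((0 : ℤ × ℤ), (1 : ℤ)) ∈ walkGroup S := by
  have hsΛ : s ∈ AddSubgroup.closure (S : Set (ℤ × ℤ)) := AddSubgroup.subset_closure hs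
  have hs' := hsΛ
  rw [← h (-s) (neg_mem hsΛ)] at hs'
  have hle : AddSubgroup.closure ((fun t => -s + t) '' (S : Set (ℤ × ℤ))) ≤
      (walkGroup S).comap (AddMonoidHom.inl (ℤ × ℤ) ℤ) := by
    rw [AddSubgroup.closure_le]
    rintro _ ⟨t, ht, rfl⟩
    simpa using add_mem (neg_mem (step_mem_group hs)) (step_mem_group ht)
  have hs0 : (s, (0 : ℤ)) ∈ walkGroup S := by simpa using hle hs'
  simpa using sub_mem (step_mem_group hs) hs0

/-- Existence of the period `p` of a model not contained in a half-plane: every point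
`(i,j)` of the lattice `Λ` has a residue `r mod p` such that walks from the origin to
`(i,j)` only have lengths `≡ r mod p`, and all sufficiently large such lengths occur.
Moreover `𝒮` is strongly aperiodic iff `p = 1`. -/
theorem stmt5 (S : Finset (ℤ × ℤ)) (h1 : NotInHalfPlane S) :
    ∃ p : ℕ, 1 ≤ p ∧
      (∀ v : ℤ × ℤ, v ∈ AddSubgroup.closure (S : Set (ℤ × ℤ)) →
        ∃ r : ℕ, r < p ∧
          (∀ n : ℕ, n % p ≠ r → freeWalks S v.1 v.2 n = 0) ∧
          ∃ M : ℕ, ∀ m : ℕ, M ≤ m → 0 < freeWalks S v.1 v.2 (p * m + r)) ∧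
      (StronglyAperiodic S ↔ p = 1) := by
  obtain ⟨s, hs, -⟩ := h1 1 0 (by simp)
  obtain ⟨a, ha⟩ := Int.subgroup_cyclic ((walkGroup S).comap (AddMonoidHom.inr (ℤ × ℤ) ℤ))
  have hp : ∀ k : ℤ, ((0 : ℤ × ℤ), k) ∈ walkGroup S ↔ ((a.natAbs : ℕ) : ℤ) ∣ k := by
    intro k
    have h : k ∈ (walkGroup S).comap (AddMonoidHom.inr (ℤ × ℤ) ℤ) ↔ a ∣ k := by
      rw [ha, ← AddSubgroup.zmultiples_eq_closure, Int.mem_zmultiples_iff]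
    rw [Int.natAbs_dvd, ← h]
    simp
  generalize a.natAbs = p at hp
  have hp1 : 1 ≤ p := by
    rw [Nat.one_le_iff_ne_zero]
    rintro rfl
    obtain ⟨n, hn, hmem⟩ := exists_loop h1 hs
    have h := (hp (n + 1)).1 (by
      simpa using add_mem (monoid_le_group hmem) (step_mem_group hs))
    rw [Nat.cast_zero, zero_dvd_iff] at h
    omega
  refine ⟨p, hp1, fun v hv => ?_, fun h => ?_, ?_⟩
  · obtain ⟨l, hl⟩ := exists_length hv
    obtain ⟨N, -, hN⟩ := exists_shift h1 hl
    obtain ⟨c, -, f, hf, hfs⟩ := exists_walk_of_mem hN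
    have hc : (v, (c : ℤ)) ∈ walkMonoid S := by simpa [hfs] using mem_of_walk f hf
    refine ⟨c % p, Nat.mod_lt _ hp1, fun n hn => ?_, ?_⟩
    · by_contra hne
      have hn' := (freeWalks_pos_iff S v n).1 (Nat.pos_of_ne_zero hne)
      have hd := (hp ((n : ℤ) - c)).1 (by
        simpa using sub_mem (monoid_le_group hn') (monoid_le_group hc))
      exact hn ((Nat.modEq_iff_dvd.2 hd).symm)
    · obtain ⟨M, hM⟩ := exists_large_loops h1 hp
      refine ⟨M + c / p, fun m hm => (freeWalks_pos_iff S v _).2 ?_⟩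
      obtain ⟨d, rfl⟩ := Nat.exists_eq_add_of_le hm
      have h := add_mem hc (hM (M + d) (Nat.le_add_right M d))
      have e : p * (M + c / p + d) + c % p = c + p * (M + d) := by
        conv_rhs => rw [← Nat.div_add_mod c p]
        ring
      rw [e]
      simpa using h
  · have hd := (hp 1).1 (one_mem_of_stronglyAperiodic hs h)
    exact Nat.dvd_one.1 (by exact_mod_cast hd)
  · rintro rfl
    exact stronglyAperiodic_of_one_mem ((hp 1).2 (by simp))
end

section
/- Let 𝒮 ⊆ ℤ² be a finite step set that is not contained in a half-plane. Then: (i) there exists n ≥ 1 with w(0,0;n) > 0, i.e. there exist non-empty closed walks (excursions) with steps in 𝒮; (ii) the set {(i,j) ∈ ℤ² : w(i,j;n) > 0 for some n ∈ ℕ} of endpoints of walks starting at the origin is exactly the subgroup Λ of ℤ² generated by 𝒮. -/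
/-!
The endpoints of walks form the additive submonoid generated by `S` (concatenation of walks), so
both claims follow once this submonoid is known to contain `-s` for every `s ∈ S`. For this it is
enough that every lattice vector `t ≠ 0` has a positive integer multiple in the submonoid
(`exists_nsmul_mem_closure`). Among the steps strictly to the left of `t`, let `p` be the one
making the smallest angle with `t`; some step `r` lies strictly to the right of `p`, and by the
choice of `p` it does not lie strictly to the left of `t`. Thus `t` lies in the cone
spanned by `p` and `r`, and the identity `(p × r) t + (r × t) p + (t × p) r = 0` in the plane
exhibits a positive multiple of `t` as a combination of `p` and `r` with coefficients in `ℕ`.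
-/

open Finset

/-- Integer form of the half-plane hypothesis: the functionals with integer coefficients. -/
lemma NotInHalfPlane.exists_int {S : Finset (ℤ × ℤ)} (h : NotInHalfPlane S) (u v : ℤ)
    (huv : u ≠ 0 ∨ v ≠ 0) : ∃ s ∈ S, s.1 * u + s.2 * v < 0 := by
  obtain ⟨s, hs, hlt⟩ := h u v (by
    intro h0
    simp only [Prod.mk.injEq, Int.cast_eq_zero] at h0
    tauto)
  exact ⟨s, hs, by exact_mod_cast hlt⟩

/-- The submonoid generated by `S` meets every rational ray. -/
lemma exists_nsmul_mem_closure {S : Finset (ℤ × ℤ)} (h : NotInHalfPlane S) (t : ℤ × ℤ) :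
    ∃ m : ℕ, 1 ≤ m ∧ m • t ∈ AddSubmonoid.closure (S : Set (ℤ × ℤ)) := by
  by_cases ht : t = 0
  · exact ⟨1, le_rfl, by simp [ht]⟩
  have ht' : t.2 ≠ 0 ∨ -t.1 ≠ 0 := by
    by_contra! h0
    exact ht (Prod.ext (by simpa using h0.2) h0.1)
  obtain ⟨p₀, hp₀, hp₀t⟩ := h.exists_int t.2 (-t.1) ht'
  -- The cotangent of the angle from `t` to `s` is decreasing, so `p` maximizes it.
  obtain ⟨p, hp, hmax⟩ := (S.filter fun s => 0 < t.1 * s.2 - t.2 * s.1).exists_max_image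
    (fun s => ((t.1 * s.1 + t.2 * s.2 : ℤ) : ℚ) / ((t.1 * s.2 - t.2 * s.1 : ℤ) : ℚ))
    ⟨p₀, by rw [Finset.mem_filter]; exact ⟨hp₀, by linarith⟩⟩
  rw [Finset.mem_filter] at hp
  obtain ⟨hpS, hp⟩ := hp
  have hp' : -p.2 ≠ 0 ∨ p.1 ≠ 0 := by
    by_contra! h0
    rw [neg_eq_zero] at h0
    simp [h0.1, h0.2] at hp
  obtain ⟨r, hrS, hr⟩ := h.exists_int (-p.2) p.1 hp'
  have hrt : t.1 * r.2 - t.2 * r.1 ≤ 0 := by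
    by_contra! hpos
    have hle := hmax r (by rw [Finset.mem_filter]; exact ⟨hrS, hpos⟩)
    rw [div_le_div_iff₀ (by exact_mod_cast hpos) (by exact_mod_cast hp)] at hle
    have hle' : (t.1 * r.1 + t.2 * r.2) * (t.1 * p.2 - t.2 * p.1) ≤
        (t.1 * p.1 + t.2 * p.2) * (t.1 * r.2 - t.2 * r.1) := by exact_mod_cast hle
    have hsq : 0 < t.1 ^ 2 + t.2 ^ 2 := by
      rcases ht' with h2 | h2
      · have := sq_pos_of_ne_zero h2
        positivity
      · have := sq_pos_of_ne_zero (neg_ne_zero.mp h2)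
        positivity
    -- Lagrange's identity: `|t|² (p × r) = (t · p) (t × r) - (t × p) (t · r)`.
    have key : (t.1 ^ 2 + t.2 ^ 2) * (r.1 * -p.2 + r.2 * p.1) =
        (t.1 * p.1 + t.2 * p.2) * (t.1 * r.2 - t.2 * r.1) -
        (t.1 * r.1 + t.2 * r.2) * (t.1 * p.2 - t.2 * p.1) := by ring
    have := mul_neg_of_pos_of_neg hsq hr
    linarith
  obtain ⟨m, hm⟩ := Int.eq_ofNat_of_zero_le (a := -(r.1 * -p.2 + r.2 * p.1)) (by linarith)
  obtain ⟨a, ha⟩ := Int.eq_ofNat_of_zero_le (a := -(t.1 * r.2 - t.2 * r.1)) (by linarith)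
  obtain ⟨b, hb⟩ := Int.eq_ofNat_of_zero_le hp.le
  refine ⟨m, by omega, ?_⟩
  have hcomb : m • t = a • p + b • r := by
    ext
    · rw [Prod.fst_add, Prod.smul_fst, Prod.smul_fst, Prod.smul_fst]
      simp only [nsmul_eq_mul]
      rw [← hm, ← ha, ← hb]
      ring
    · rw [Prod.snd_add, Prod.smul_snd, Prod.smul_snd, Prod.smul_snd]
      simp only [nsmul_eq_mul]
      rw [← hm, ← ha, ← hb]
      ring
  rw [hcomb]
  exact add_mem (nsmul_mem (AddSubmonoid.subset_closure hpS) a)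
    (nsmul_mem (AddSubmonoid.subset_closure hrS) b)

lemma neg_mem_closure {S : Finset (ℤ × ℤ)} (h : NotInHalfPlane S) {s : ℤ × ℤ} (hs : s ∈ S) :
    -s ∈ AddSubmonoid.closure (S : Set (ℤ × ℤ)) := by
  obtain ⟨m, hm, hmem⟩ := exists_nsmul_mem_closure h (-s)
  obtain ⟨k, rfl⟩ := Nat.exists_eq_add_of_le' hm
  have : -s = (k + 1) • -s + k • s := by
    rw [succ_nsmul, smul_neg]
    abel
  rw [this]
  exact add_mem hmem (nsmul_mem (AddSubmonoid.subset_closure hs) k)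

/-- The walks counted by `freeWalks` form a finite type, so that the junk value `0` of `Nat.card`
at infinite types does not occur. -/
lemma freeWalks_pos_iff_s6 (S : Finset (ℤ × ℤ)) (i j : ℤ) (n : ℕ) :
    0 < freeWalks S i j n ↔ ∃ f : Fin n → ℤ × ℤ, (∀ k, f k ∈ S) ∧ ∑ k, f k = (i, j) := by
  have : Finite {f : Fin n → ℤ × ℤ // (∀ k, f k ∈ S) ∧ (∑ k, f k) = (i, j)} :=
    Finite.of_injective (β := Fin n → S) (fun f k => ⟨f.1 k, f.2.1 k⟩) (by
      intro f g hfg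
      ext1
      funext k
      exact congrArg Subtype.val (congrFun hfg k))
  rw [freeWalks, Nat.card_pos_iff, nonempty_subtype, and_iff_left this]

lemma exists_walk_iff (S : Finset (ℤ × ℤ)) (v : ℤ × ℤ) :
    (∃ n : ℕ, 0 < freeWalks S v.1 v.2 n) ↔ v ∈ AddSubmonoid.closure (S : Set (ℤ × ℤ)) := by
  simp only [freeWalks_pos_iff_s6]
  constructor
  · rintro ⟨n, f, hf, hsum⟩
    have : v = ∑ k, f k := hsum.symm
    rw [this]
    exact sum_mem fun k _ => AddSubmonoid.subset_closure (hf k)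
  · intro hv
    induction hv using AddSubmonoid.closure_induction_left with
    | zero => exact ⟨0, Fin.elim0, fun k => k.elim0, rfl⟩
    | add_left x hx y hy ih =>
      obtain ⟨n, f, hf, hsum⟩ := ih
      refine ⟨n + 1, Fin.cons x f, Fin.cases hx hf, ?_⟩
      rw [Fin.sum_cons, hsum]

lemma coe_closure_eq {S : Finset (ℤ × ℤ)} (h : NotInHalfPlane S) :
    (AddSubmonoid.closure (S : Set (ℤ × ℤ)) : Set (ℤ × ℤ)) =
      (AddSubgroup.closure (S : Set (ℤ × ℤ)) : Set (ℤ × ℤ)) := by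
  rw [← AddSubgroup.coe_toAddSubmonoid, AddSubgroup.closure_toAddSubmonoid]
  refine congrArg _ (le_antisymm (AddSubmonoid.closure_mono Set.subset_union_left) ?_)
  rw [AddSubmonoid.closure_le]
  rintro x (hx | hx)
  · exact AddSubmonoid.subset_closure hx
  · simpa using neg_mem_closure h (Finset.mem_coe.mp (Set.mem_neg.mp hx))

/-- For a step set not contained in a half-plane: (i) there exist non-empty excursions,
and (ii) the set of endpoints of walks from the origin is exactly the lattice `Λ`
generated by `𝒮`. -/
theorem stmt6 (S : Finset (ℤ × ℤ)) (h1 : NotInHalfPlane S) :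
    (∃ n : ℕ, 1 ≤ n ∧ 0 < freeWalks S 0 0 n) ∧
    {v : ℤ × ℤ | ∃ n : ℕ, 0 < freeWalks S v.1 v.2 n} =
      (AddSubgroup.closure (S : Set (ℤ × ℤ)) : Set (ℤ × ℤ)) := by
  refine ⟨?_, ?_⟩
  · obtain ⟨s, hs, -⟩ := h1 1 0 (by simp)
    obtain ⟨n, hn⟩ := (exists_walk_iff S (-s)).mpr (neg_mem_closure h1 hs)
    obtain ⟨f, hf, hsum⟩ := (freeWalks_pos_iff_s6 _ _ _ _).mp hn
    -- A walk to `-s` preceded by the step `s` is a non-empty excursion.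
    refine ⟨n + 1, by omega, (freeWalks_pos_iff_s6 _ _ _ _).mpr
      ⟨Fin.cons s f, Fin.cases hs hf, ?_⟩⟩
    rw [Fin.sum_cons, hsum]
    exact add_neg_cancel s
  · rw [← coe_closure_eq h1]
    ext v
    exact exists_walk_iff S v
end

section
/- Let 𝒮 ⊆ ℤ^d be a finite step set having, for every 1 ≤ i ≤ d, at least one step with positive i-th coordinate and at least one step with negative i-th coordinate; write M_i = max_{s∈𝒮} s_i and −m_i = min_{s∈𝒮} s_i. Let u ∈ (K̄∖{0})^d be a tuple whose coordinates are algebraically independent over ℚ. Then: (i) every element v of the orbit of u has coordinates that are algebraically independent over ℚ; (ii) for each i, the set of elements v that are i-adjacent to u has exactly M_i + m_i − 1 elements. In particular, for a small-step model (all M_i = m_i = 1), each element of the orbit has exactly one i-adjacent element for every direction i. -/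
/-!
Fix a direction `i`, let `m = -min s i`, `M = max s i`, and let `E` be the relative algebraic
closure of `ℚ(u j : j ≠ i)`. Clearing denominators in the `i`-th variable turns the equation
`S(v) = S(u)` for tuples `v` agreeing with `u` off `i` into `A(y) = t y ^ m`, where `y = v i`,
`t = S(u)` and `A` has coefficients in `E` (`clearedPoly`, `eval_clearedPoly`). By independence of
`u`, the extreme coefficients of `A` do not vanish (`coeff_clearedPoly_ne_zero`), so `A` has degree
`M + m` and nonzero constant term, while `u i ∉ E`.

If a nonzero solution `y` were in `E`, so would be `t`, and then `u i`, being a root of the nonzero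
polynomial `A - t X ^ m`, would be algebraic over `E` (`notMem_of_eval_eq`). Hence adjacent tuples
are again algebraically independent, which gives the claim on orbits by induction along a path.

A multiple root `w` of `A - t X ^ m` would be a root of `X A' - m A`, which is a nonzero
polynomial over `E`; this is impossible since `w ∉ E`. So there are exactly `M + m` distinct
solutions (`card_roots_toFinset`), one of which is `u i` itself.
-/

open Finset

/-- The value `S(u) = Σ_{s∈𝒮} u₁^{s₁}⋯u_d^{s_d}` at a `d`-tuple of field elements. -/
noncomputable def stepValD {d : ℕ} {L : Type*} [Field L] (S : Finset (Fin d → ℤ))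
    (u : Fin d → L) : L :=
  ∑ s ∈ S, ∏ i, u i ^ s i

/-- `u` and `v` are `i`-adjacent. -/
def IAdjacent {d : ℕ} {L : Type*} [Field L] (S : Finset (Fin d → ℤ)) (i : Fin d)
    (u v : Fin d → L) : Prop :=
  u ≠ v ∧ (∀ j, u j ≠ 0) ∧ (∀ j, v j ≠ 0) ∧ stepValD S u = stepValD S v ∧
    ∀ j, j ≠ i → u j = v j

/-- `u` and `v` are adjacent if they are `i`-adjacent for some `i`. -/
def AdjacentD {d : ℕ} {L : Type*} [Field L] (S : Finset (Fin d → ℤ))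
    (u v : Fin d → L) : Prop :=
  ∃ i, IAdjacent S i u v

/-- The orbit of `u`. -/
def orbitD {d : ℕ} {L : Type*} [Field L] (S : Finset (Fin d → ℤ)) (u : Fin d → L) :
    Set (Fin d → L) :=
  {v | Relation.ReflTransGen (AdjacentD S) u v}

/-! ### Solutions of `A(w) = t w ^ m` over a relatively algebraically closed subfield -/

open Polynomial in
/-- A level set of `A(y) / y ^ m` over `E` that contains one transcendental element consists of
transcendental elements: if `y ∈ E`, then the common value `t` is in `E` and the nonzero
polynomial `A - t X ^ m` over `E` kills `x`. -/
lemma notMem_of_eval_eq {L : Type*} [Field L] (E : Subfield L)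
    (hE : ∀ p : L[X], p ≠ 0 → (∀ n, p.coeff n ∈ E) → ∀ w, p.eval w = 0 → w ∈ E)
    (A : L[X]) (hA : ∀ n, A.coeff n ∈ E) (hA0 : A.coeff 0 ≠ 0) (m : ℕ) (hm : 0 < m)
    (t x y : L) (hx : x ∉ E) (hxt : A.eval x = t * x ^ m)
    (hy0 : y ≠ 0) (hyt : A.eval y = t * y ^ m) : y ∉ E := by
  intro hy
  have ht : t ∈ E := by
    have : t = A.eval y / y ^ m := by rw [hyt]; field_simp
    rw [this, eval_eq_sum_range]
    exact div_mem (sum_mem fun n _ => mul_mem (hA n) (pow_mem hy n)) (pow_mem hy m)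
  refine hx (hE (A - C t * X ^ m) ?_ ?_ x ?_)
  · intro h
    have := congrArg (fun p => p.coeff 0) h
    simp [coeff_X_pow, hm.ne, hA0] at this
  · intro n
    rw [coeff_sub, coeff_C_mul, coeff_X_pow]
    refine sub_mem (hA n) (mul_mem ht ?_)
    split_ifs
    exacts [one_mem _, zero_mem _]
  · simp [hxt]

open Polynomial in
/-- The equation `A(w) = t w ^ m` has `deg A` distinct solutions when one of them is not in `E`.
A multiple root `w` would satisfy `w A'(w) - m A(w) = 0`, an equation over `E` not involving `t`
whose leading coefficient is `(deg A - m)` times that of `A`, which would put `w` in `E`. -/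
lemma card_roots_toFinset {L : Type*} [Field L] [CharZero L] [IsAlgClosed L] [DecidableEq L]
    (E : Subfield L)
    (hE : ∀ p : L[X], p ≠ 0 → (∀ n, p.coeff n ∈ E) → ∀ w, p.eval w = 0 → w ∈ E)
    (A : L[X]) (hA : ∀ n, A.coeff n ∈ E) (hA0 : A.coeff 0 ≠ 0) (m : ℕ) (hm : 0 < m)
    (hmN : m < A.natDegree)
    (t x : L) (hx : x ∉ E) (hxt : A.eval x = t * x ^ m) :
    (A - C t * X ^ m) ≠ 0 ∧ (A - C t * X ^ m).roots.toFinset.card = A.natDegree := by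
  set P := A - C t * X ^ m with hP
  have hdeg : P.natDegree = A.natDegree :=
    natDegree_sub_eq_left_of_natDegree_lt ((natDegree_C_mul_X_pow_le _ _).trans_lt hmN)
  have hP0 : P ≠ 0 := by
    intro h
    rw [h, natDegree_zero] at hdeg
    omega
  refine ⟨hP0, ?_⟩
  rw [Multiset.toFinset_card_of_nodup, IsAlgClosed.card_roots_eq_natDegree, hdeg]
  rw [Multiset.nodup_iff_count_le_one]
  intro w
  rw [count_roots]
  by_contra! hlt
  rw [one_lt_rootMultiplicity_iff_isRoot hP0] at hlt
  obtain ⟨h1, h2⟩ := hlt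
  have h1' : A.eval w = t * w ^ m := by
    have := h1.eq_zero
    simpa [hP, sub_eq_zero] using this
  have hw0 : w ≠ 0 := by
    rintro rfl
    rw [← coeff_zero_eq_eval_zero, zero_pow hm.ne', mul_zero] at h1'
    exact hA0 h1'
  have h2' : (derivative A).eval w = t * (m * w ^ (m - 1)) := by
    have := h2.eq_zero
    simpa [hP, sub_eq_zero, derivative_X_pow] using this
  refine notMem_of_eval_eq E hE A hA hA0 m hm t x w hx hxt hw0 h1' ?_
  have hco : ∀ n : ℕ, (X * derivative A - C (m : L) * A).coeff n = ((n : L) - m) * A.coeff n := by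
    intro n
    rcases n with _ | n
    · simp
    · simp [coeff_X_mul, coeff_derivative]
      ring
  refine hE (X * derivative A - C (m : L) * A) ?_ ?_ w ?_
  · intro h
    have h3 := hco A.natDegree
    rw [h, coeff_zero, eq_comm, mul_eq_zero, sub_eq_zero] at h3
    rcases h3 with h3 | h3
    · have : A.natDegree = m := by exact_mod_cast h3
      omega
    · rw [coeff_natDegree, leadingCoeff_eq_zero] at h3
      simp [h3] at hA0
  · intro n
    rw [hco]
    exact mul_mem (sub_mem (natCast_mem _ _) (natCast_mem _ _)) (hA n)
  · obtain ⟨k, rfl⟩ : ∃ k, m = k + 1 := ⟨m - 1, by omega⟩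
    simp [h1', h2']
    ring

/-! ### Laurent polynomials in algebraically independent elements -/

/-- A nonempty sum of distinct Laurent monomials in algebraically independent elements is
nonzero: multiplying by a high power of `∏ u i` turns it into a polynomial relation. -/
lemma sum_prod_zpow_ne_zero {d : ℕ} {L : Type*} [Field L] [Algebra ℚ L]
    (T : Finset (Fin d → ℤ)) (hT : T.Nonempty) (u : Fin d → L) (hu0 : ∀ i, u i ≠ 0)
    (hu : AlgebraicIndependent ℚ u) : ∑ s ∈ T, ∏ i, u i ^ s i ≠ 0 := by
  classical
  intro h
  obtain ⟨N, hN⟩ : ∃ N : ℕ, ∀ s ∈ T, ∀ i, 0 ≤ s i + N := by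
    refine ⟨∑ s ∈ T, ∑ i, (s i).natAbs, fun s hs i => ?_⟩
    have h1 : (s i).natAbs ≤ ∑ i, (s i).natAbs :=
      Finset.single_le_sum (f := fun i => (s i).natAbs) (fun _ _ => Nat.zero_le _)
        (Finset.mem_univ i)
    have h2 : ∑ i, (s i).natAbs ≤ ∑ s ∈ T, ∑ i, (s i).natAbs :=
      Finset.single_le_sum (f := fun s : Fin d → ℤ => ∑ i, (s i).natAbs)
        (fun _ _ => Nat.zero_le _) hs
    omega
  let e : (Fin d → ℤ) → (Fin d →₀ ℕ) := fun s =>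
    Finsupp.equivFunOnFinite.symm fun i => (s i + N).toNat
  have he : ∀ s ∈ T, ∀ s' ∈ T, e s = e s' → s = s' := by
    intro s hs s' hs' hee
    funext i
    have h1 : (s i + N).toNat = (s' i + N).toNat := DFunLike.congr_fun hee i
    have := hN s hs i
    have := hN s' hs' i
    omega
  let q : MvPolynomial (Fin d) ℚ := ∑ s ∈ T, MvPolynomial.monomial (e s) 1
  have hq : MvPolynomial.aeval u q = 0 := by
    have : MvPolynomial.aeval u q = (∑ s ∈ T, ∏ i, u i ^ s i) * ∏ i, u i ^ N := by
      rw [map_sum, Finset.sum_mul]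
      refine Finset.sum_congr rfl fun s hs => ?_
      rw [MvPolynomial.aeval_monomial, map_one, one_mul, Finsupp.prod_fintype _ _ (by simp),
        ← Finset.prod_mul_distrib]
      refine Finset.prod_congr rfl fun i _ => ?_
      change u i ^ (s i + N).toNat = _
      rw [← zpow_natCast, ← zpow_natCast, ← zpow_add₀ (hu0 i), Int.toNat_of_nonneg (hN s hs i)]
    rw [this, h, zero_mul]
  have hq0 : q = 0 := (algebraicIndependent_iff.mp hu) q hq
  obtain ⟨s, hs⟩ := hT
  have := congrArg (MvPolynomial.coeff (e s)) hq0
  rw [MvPolynomial.coeff_sum, Finset.sum_eq_single s] at this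
  · simp at this
  · intro s' hs' hne
    rw [MvPolynomial.coeff_monomial, if_neg]
    exact fun hee => hne (he _ hs' _ hs hee)
  · exact fun h => absurd hs h

/-! ### The step polynomial in one variable -/

open Polynomial in
/-- `X ^ m * S(u)` as a polynomial in its `i`-th variable `X`, the other coordinates being those
of `u`; here `-m` is a lower bound for the `i`-th coordinates of the steps. -/
noncomputable def clearedPoly {d : ℕ} {L : Type*} [Field L] (S : Finset (Fin d → ℤ))
    (i : Fin d) (m : ℕ) (u : Fin d → L) : L[X] :=
  ∑ s ∈ S, C (∏ j ∈ Finset.univ.erase i, u j ^ s j) * X ^ (s i + m).toNat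

lemma eval_clearedPoly {d : ℕ} {L : Type*} [Field L] (S : Finset (Fin d → ℤ))
    (i : Fin d) (m : ℕ) (hm : ∀ s ∈ S, -(m : ℤ) ≤ s i) (u v : Fin d → L)
    (hv : v i ≠ 0) (huv : ∀ j, j ≠ i → u j = v j) :
    (clearedPoly S i m u).eval (v i) = stepValD S v * v i ^ m := by
  rw [clearedPoly, Polynomial.eval_finsetSum, stepValD, Finset.sum_mul]
  refine Finset.sum_congr rfl fun s hs => ?_
  rw [Polynomial.eval_mul, Polynomial.eval_C, Polynomial.eval_pow, Polynomial.eval_X,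
    ← Finset.prod_erase_mul _ _ (Finset.mem_univ i), mul_assoc]
  congr 1
  · refine Finset.prod_congr rfl fun j hj => ?_
    rw [huv j (Finset.ne_of_mem_erase hj)]
  · rw [← zpow_natCast, ← zpow_natCast, ← zpow_add₀ hv, Int.toNat_of_nonneg]
    have := hm s hs
    omega

/-- Each exponent that occurs gives a nonzero coefficient, by the nonvanishing of Laurent
polynomials at algebraically independent elements. -/
lemma coeff_clearedPoly_ne_zero {d : ℕ} {L : Type*} [Field L] [Algebra ℚ L]
    (S : Finset (Fin d → ℤ)) (i : Fin d) (m : ℕ) (hm : ∀ s ∈ S, -(m : ℤ) ≤ s i)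
    (u : Fin d → L) (hu0 : ∀ i, u i ≠ 0) (hu : AlgebraicIndependent ℚ u)
    (k : ℕ) (hk : ∃ s ∈ S, s i + m = k) : (clearedPoly S i m u).coeff k ≠ 0 := by
  classical
  have h1 : (clearedPoly S i m u).coeff k
      = ∑ s ∈ S with s i + (m : ℤ) = (k : ℤ), ∏ j ∈ Finset.univ.erase i, u j ^ s j := by
    rw [clearedPoly, Polynomial.finsetSum_coeff, Finset.sum_filter]
    refine Finset.sum_congr rfl fun s hs => ?_
    rw [Polynomial.coeff_C_mul, Polynomial.coeff_X_pow, mul_ite, mul_one, mul_zero]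
    have := hm s hs
    refine if_congr ?_ rfl rfl
    omega
  obtain ⟨s₀, hs₀, hk₀⟩ := hk
  have h2 := sum_prod_zpow_ne_zero {s ∈ S | s i + (m : ℤ) = (k : ℤ)}
    ⟨s₀, Finset.mem_filter.mpr ⟨hs₀, hk₀⟩⟩ u hu0 hu
  intro h
  apply h2
  -- On the filtered steps the exponent of `u i` is constantly `k - m`, so it factors out.
  have h3 : ∑ s ∈ S with s i + (m : ℤ) = (k : ℤ), ∏ j, u j ^ s j
      = (∑ s ∈ S with s i + (m : ℤ) = (k : ℤ), ∏ j ∈ Finset.univ.erase i, u j ^ s j)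
        * u i ^ ((k : ℤ) - m) := by
    rw [Finset.sum_mul]
    refine Finset.sum_congr rfl fun s hs => ?_
    rw [← Finset.prod_erase_mul _ _ (Finset.mem_univ i),
      ← (Finset.mem_filter.mp hs).2, add_sub_cancel_right]
  rw [h3, ← h1, h, zero_mul]

lemma natDegree_clearedPoly_le {d : ℕ} {L : Type*} [Field L] (S : Finset (Fin d → ℤ))
    (i : Fin d) (m N : ℕ) (hN : ∀ s ∈ S, s i + m ≤ N) (u : Fin d → L) :
    (clearedPoly S i m u).natDegree ≤ N := by
  refine Polynomial.natDegree_sum_le_of_forall_le _ _ fun s hs => ?_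
  refine (Polynomial.natDegree_C_mul_X_pow_le _ _).trans ?_
  have := hN s hs
  omega

/-! ### The algebraic closure of the field of the other coordinates -/

/-- The elements of `L` algebraic over `ℚ(u j : j ≠ i)`. -/
noncomputable def algOver {d : ℕ} {L : Type*} [Field L] [Algebra ℚ L] (i : Fin d)
    (u : Fin d → L) : Subfield L :=
  (algebraicClosure (IntermediateField.adjoin ℚ (u '' {i}ᶜ)) L).toSubfield

lemma mem_algOver {d : ℕ} {L : Type*} [Field L] [Algebra ℚ L] {i : Fin d}
    {u : Fin d → L} {x : L} :
    x ∈ algOver i u ↔ IsAlgebraic (Algebra.adjoin ℚ (u '' {i}ᶜ)) x := by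
  rw [← IntermediateField.isAlgebraic_adjoin_iff, ← mem_algebraicClosure_iff]
  rfl

open Polynomial in
lemma algOver_closed {d : ℕ} {L : Type*} [Field L] [Algebra ℚ L] (i : Fin d)
    (u : Fin d → L) (p : L[X]) (hp : p ≠ 0) (hc : ∀ n, p.coeff n ∈ algOver i u) (w : L)
    (hw : p.eval w = 0) : w ∈ algOver i u := by
  let F := IntermediateField.adjoin ℚ (u '' {i}ᶜ)
  let E := algebraicClosure F L
  obtain ⟨q, rfl⟩ : ∃ q : E[X], q.map (algebraMap E L) = p := by
    have : p ∈ Polynomial.lifts (algebraMap E L) := by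
      rw [Polynomial.lifts_iff_coeff_lifts]
      exact fun n => ⟨⟨_, hc n⟩, rfl⟩
    simpa [Polynomial.mem_lifts] using this
  have hq : q ≠ 0 := by
    rintro rfl
    simp at hp
  have h1 : IsAlgebraic E w := ⟨q, hq, by rwa [eval_map_algebraMap] at hw⟩
  have h2 : IsAlgebraic F w := h1.restrictScalars F
  exact mem_algebraicClosure_iff.mpr h2

lemma coeff_clearedPoly_mem {d : ℕ} {L : Type*} [Field L] [Algebra ℚ L]
    (S : Finset (Fin d → ℤ)) (i : Fin d) (m : ℕ) (u : Fin d → L) (n : ℕ) :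
    (clearedPoly S i m u).coeff n ∈ algOver i u := by
  rw [clearedPoly, Polynomial.finsetSum_coeff]
  refine sum_mem fun s _ => ?_
  rw [Polynomial.coeff_C_mul, Polynomial.coeff_X_pow]
  refine mul_mem (prod_mem fun j hj => zpow_mem ?_ _) ?_
  · rw [mem_algOver]
    exact isAlgebraic_algebraMap
      (⟨u j, Algebra.subset_adjoin ⟨j, Finset.ne_of_mem_erase hj, rfl⟩⟩ :
        Algebra.adjoin ℚ (u '' {i}ᶜ))
  · split_ifs
    exacts [one_mem _, zero_mem _]

/-- Independence of `u` passes to any tuple that differs from it in the `i`-th coordinate only,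
as soon as the new coordinate is not algebraic over the others. -/
lemma algebraicIndependent_of_notMem {d : ℕ} {L : Type*} [Field L] [Algebra ℚ L] (i : Fin d)
    (u v : Fin d → L) (hu : AlgebraicIndependent ℚ u) (huv : ∀ j, j ≠ i → u j = v j)
    (hv : v i ∉ algOver i u) : AlgebraicIndependent ℚ v := by
  rw [AlgebraicIndependent.iff_transcendental_adjoin_image i] at hu ⊢
  have h1 : u '' {i}ᶜ = v '' {i}ᶜ := Set.image_congr fun j hj => huv j hj
  have h2 : (fun j : {j // j ≠ i} => u j) = fun j : {j // j ≠ i} => v j :=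
    funext fun j => huv j j.2
  rw [mem_algOver, h1] at hv
  exact ⟨h2 ▸ hu.1, hv⟩

lemma notMem_algOver {d : ℕ} {L : Type*} [Field L] [Algebra ℚ L] (i : Fin d)
    (u : Fin d → L) (hu : AlgebraicIndependent ℚ u) : u i ∉ algOver i u := by
  rw [mem_algOver]
  exact ((AlgebraicIndependent.iff_transcendental_adjoin_image i).mp hu).2

/-! ### Adjacent tuples -/

lemma algebraicIndependent_of_iAdjacent {d : ℕ} {L : Type*} [Field L] [Algebra ℚ L]
    (S : Finset (Fin d → ℤ)) (i : Fin d) (m : ℕ) (hm0 : 0 < m)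
    (hm : (∃ s ∈ S, s i = -(m : ℤ)) ∧ ∀ s ∈ S, -(m : ℤ) ≤ s i) (u v : Fin d → L)
    (hu : AlgebraicIndependent ℚ u) (huv : IAdjacent S i u v) : AlgebraicIndependent ℚ v := by
  obtain ⟨-, hu0, hv0, hS, hj⟩ := huv
  refine algebraicIndependent_of_notMem i u v hu hj ?_
  obtain ⟨s, hs, hsm⟩ := hm.1
  refine notMem_of_eval_eq (algOver i u) (algOver_closed i u) (clearedPoly S i m u)
    (coeff_clearedPoly_mem S i m u)
    (coeff_clearedPoly_ne_zero S i m hm.2 u hu0 hu 0 ⟨s, hs, by simp [hsm]⟩) m hm0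
    (stepValD S u) (u i) (v i) (notMem_algOver i u hu)
    (eval_clearedPoly S i m hm.2 u u (hu0 i) fun _ _ => rfl) (hv0 i) ?_
  rw [hS]
  exact eval_clearedPoly S i m hm.2 u v (hv0 i) hj

lemma ncard_iAdjacent {d : ℕ} {L : Type*} [Field L] [CharZero L] [IsAlgClosed L] [Algebra ℚ L]
    (S : Finset (Fin d → ℤ)) (i : Fin d) (M m : ℕ) (hM0 : 0 < M) (hm0 : 0 < m)
    (hM : (∃ s ∈ S, s i = (M : ℤ)) ∧ ∀ s ∈ S, s i ≤ (M : ℤ))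
    (hm : (∃ s ∈ S, s i = -(m : ℤ)) ∧ ∀ s ∈ S, -(m : ℤ) ≤ s i) (u : Fin d → L)
    (hu0 : ∀ i, u i ≠ 0) (hu : AlgebraicIndependent ℚ u) :
    {v | IAdjacent S i u v}.ncard = M + m - 1 := by
  classical
  set A := clearedPoly S i m u with hA
  have hA0 : A.coeff 0 ≠ 0 := by
    obtain ⟨s, hs, hsm⟩ := hm.1
    exact coeff_clearedPoly_ne_zero S i m hm.2 u hu0 hu 0 ⟨s, hs, by simp [hsm]⟩
  have hdeg : A.natDegree = M + m := by
    obtain ⟨s, hs, hsM⟩ := hM.1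
    refine le_antisymm (natDegree_clearedPoly_le S i m _ (fun s hs => ?_) u)
      (Polynomial.le_natDegree_of_ne_zero
        (coeff_clearedPoly_ne_zero S i m hm.2 u hu0 hu _ ⟨s, hs, by simp [hsM]⟩))
    have := hM.2 s hs
    push_cast
    omega
  have hxt := eval_clearedPoly S i m hm.2 u u (hu0 i) fun _ _ => rfl
  obtain ⟨hP0, hcard⟩ := card_roots_toFinset (algOver i u) (algOver_closed i u) A
    (coeff_clearedPoly_mem S i m u) hA0 m hm0 (by omega) (stepValD S u) (u i)
    (notMem_algOver i u hu) hxt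
  set P := A - Polynomial.C (stepValD S u) * Polynomial.X ^ m with hP
  have hroot : ∀ w, w ∈ P.roots.toFinset ↔ A.eval w = stepValD S u * w ^ m := by
    intro w
    rw [Multiset.mem_toFinset, Polynomial.mem_roots hP0, Polynomial.IsRoot.def]
    simp [hP, sub_eq_zero]
  have hset : {v | IAdjacent S i u v} =
      ((P.roots.toFinset.erase (u i)).image (Function.update u i) : Finset (Fin d → L)) := by
    ext v
    simp only [Set.mem_ofPred_eq, Finset.coe_image, Set.mem_image, Finset.mem_coe,
      Finset.mem_erase, hroot]
    constructor
    · rintro ⟨hne, -, hv0, hS, hj⟩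
      have hv : Function.update u i (v i) = v := by
        rw [Function.update_eq_iff]
        exact ⟨rfl, hj⟩
      refine ⟨v i, ⟨fun h => hne ?_, ?_⟩, hv⟩
      · rw [← hv, h, Function.update_eq_self]
      · rw [hS]
        exact eval_clearedPoly S i m hm.2 u v (hv0 i) hj
    · rintro ⟨w, ⟨hne, hw⟩, rfl⟩
      have hw0 : w ≠ 0 := by
        rintro rfl
        rw [← Polynomial.coeff_zero_eq_eval_zero, zero_pow hm0.ne', mul_zero] at hw
        exact hA0 hw
      have hj : ∀ j, j ≠ i → u j = Function.update u i w j := fun j hj => by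
        rw [Function.update_of_ne hj]
      refine ⟨fun h => hne ?_, hu0, fun j => ?_, ?_, hj⟩
      · rw [h, Function.update_self]
      · rcases eq_or_ne j i with rfl | hji
        · rwa [Function.update_self]
        · rw [← hj j hji]
          exact hu0 j
      · have h := eval_clearedPoly S i m hm.2 u (Function.update u i w)
          (by rwa [Function.update_self]) hj
        rw [Function.update_self, ← hA, hw] at h
        exact mul_right_cancel₀ (pow_ne_zero m hw0) h
  rw [hset, Set.ncard_coe_finset, Finset.card_image_of_injective _ (Function.update_injective u i),
    Finset.card_erase_of_mem ((hroot _).mpr hxt), hcard, hdeg]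

/-- If the coordinates of `u` are algebraically independent over `ℚ`, then so are those
of any orbit element, and the number of elements `i`-adjacent to `u` is `M_i + m_i − 1`,
where `M_i` (resp. `−m_i`) is the largest (resp. smallest) move in direction `i`. -/
theorem stmt8 (d : ℕ) (S : Finset (Fin d → ℤ))
    (hpos : ∀ i, ∃ s ∈ S, 0 < s i) (hneg : ∀ i, ∃ s ∈ S, s i < 0)
    (M m : Fin d → ℤ)
    (hM : ∀ i, (∃ s ∈ S, s i = M i) ∧ ∀ s ∈ S, s i ≤ M i)
    (hm : ∀ i, (∃ s ∈ S, s i = -(m i)) ∧ ∀ s ∈ S, -(m i) ≤ s i)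
    (u : Fin d → AlgebraicClosure (FractionRing (MvPolynomial (Fin d) ℂ)))
    (hu0 : ∀ i, u i ≠ 0)
    (hu : AlgebraicIndependent ℚ u) :
    (∀ v ∈ orbitD S u, AlgebraicIndependent ℚ v) ∧
    ∀ i : Fin d, ({v | IAdjacent S i u v}.ncard : ℤ) = M i + m i - 1 := by
  have hM' : ∀ i, 0 < M i := fun i => by
    obtain ⟨s, hs, h⟩ := hpos i
    have := (hM i).2 s hs
    omega
  have hm' : ∀ i, 0 < m i := fun i => by
    obtain ⟨s, hs, h⟩ := hneg i
    have := (hm i).2 s hs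
    omega
  lift M to Fin d → ℕ using fun i => (hM' i).le
  lift m to Fin d → ℕ using fun i => (hm' i).le
  constructor
  · intro v hv
    induction hv with
    | refl => exact hu
    | tail _ hadj ih =>
      obtain ⟨i, hi⟩ := hadj
      exact algebraicIndependent_of_iAdjacent S i (m i) (Int.natCast_pos.mp (hm' i)) (hm i) _ _ ih hi
  · intro i
    have h1 : 0 < (M i : ℤ) := hM' i
    have h2 : 0 < (m i : ℤ) := hm' i
    rw [ncard_iAdjacent S i (M i) (m i) (Int.natCast_pos.mp h1) (Int.natCast_pos.mp h2) (hM i)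
      (hm i) u hu0 hu]
    push_cast [Nat.cast_sub (show 1 ≤ M i + m i by omega)]
    rfl
end

section
/- Let 𝒮 ⊆ {−1,0,1}^d be a small-step model having, for every 1 ≤ i ≤ d, at least one step with i-th coordinate +1 and at least one with i-th coordinate −1. Write S(a) = a_i^{−1}·S_i^−(a) + S_i^0(a) + a_i·S_i^+(a), where S_i^−, S_i^0, S_i^+ are the (nonzero, by hypothesis) Laurent polynomials in the variables other than a_i collecting respectively the terms in a_i^{−1}, a_i^0 and a_i^1, and define Φ_i(a) to be the tuple obtained from a by replacing its i-th coordinate by a_i^{−1}·S_i^−(a)/S_i^+(a). Then, for tuples a ∈ (K̄∖{0})^d whose coordinates are algebraically independent over ℚ: (i) Φ_i(Φ_i(a)) = a; (ii) a and Φ_i(a) are i-adjacent. Moreover: (iii) for every u in the orbit of x = (x₁,…,x_d), an element v ∈ (K̄∖{0})^d is i-adjacent to u if and only if v = Φ_i(u), so that the orbit of x coincides with the orbit of x under the group generated by the involutions Φ₁,…,Φ_d; (iv) if u and v are adjacent elements of the orbit of x, then their lengths differ by exactly 1, where the length of an orbit element v is the least ℓ such that there exists a chain x = u⁰, u¹,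 …, u^ℓ = v with consecutive tuples adjacent. -/
/-! The algebraic input is the differential of a tuple `u` over `ℂ`. Its logarithmic Jacobian
`J(u) = det(D(u_i)/u_i)`, taken in the basis `dx_1, …, dx_d` of the Kähler differentials of `K̄`
over `ℂ` (`exists_basis_D_xVars`), controls everything that happens in the orbit of `x`.

* If `J(u) ≠ 0`, then `u` is algebraically independent (`algebraicIndependent_of_logJac`), so
  `S_i^±(u) ≠ 0` and `u` is not fixed by `Φ_i`; the equation `S(v) = S(u)` in the `i`-th
  coordinate is quadratic with the two distinct roots `u_i` and `u_i⁻¹ S_i^−(u)/S_i^+(u)`, hence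
  `Φ_i(u)` is the only tuple `i`-adjacent to `u` (`eq_Phi_of_iAdjacent`, `iAdjacent_Phi`).
* `J(Φ_i(u)) = -J(u)` (`logJac_Phi`), since `Φ_i` replaces `D(u_i)/u_i` by its negative plus a
  combination of the `D(u_j)/u_j` with `j ≠ i`. So `J` stays nonzero along the orbit
  (`orbit_good`).

Consequently `J(u) = (-1) ^ n * J(x)` whenever `u` is reached from `x` by `n` adjacencies: the
parity of `n` depends on `u` only, and adjacent elements have lengths of opposite parity. As these
lengths differ by at most one, they differ by exactly one. -/

open Finset

/-- `S_i^e(a)`: the part of the step polynomial collecting the steps with `s i = e`,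
as a function of the variables other than `a i`. -/
noncomputable def stepPart {d : ℕ} {L : Type*} [Field L] (S : Finset (Fin d → ℤ))
    (i : Fin d) (e : ℤ) (a : Fin d → L) : L :=
  ∑ s ∈ S.filter (fun s => s i = e), ∏ j ∈ Finset.univ.erase i, a j ^ s j

/-- The bi-rational involution `Φ_i`, replacing the `i`-th coordinate of `a` by
`a_i⁻¹ · S_i^−(a)/S_i^+(a)`. -/
noncomputable def Phi {d : ℕ} {L : Type*} [Field L] (S : Finset (Fin d → ℤ))
    (i : Fin d) (a : Fin d → L) : Fin d → L :=
  Function.update a i ((a i)⁻¹ * (stepPart S i (-1) a / stepPart S i 1 a))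

/-- There is a chain of `n` adjacencies from `u` to `v`. -/
def AdjChain {d : ℕ} {L : Type*} [Field L] (S : Finset (Fin d → ℤ)) :
    ℕ → (Fin d → L) → (Fin d → L) → Prop
  | 0, u, v => u = v
  | n + 1, u, v => ∃ w, AdjacentD S u w ∧ AdjChain S n w v

/-- The length of `v` relative to `u`: least number of adjacencies needed to reach `v`
from `u`. -/
noncomputable def orbitLen {d : ℕ} {L : Type*} [Field L] (S : Finset (Fin d → ℤ))
    (u v : Fin d → L) : ℕ :=
  sInf {n | AdjChain S n u v}

/-- The tuple `x = (x₁,…,x_d)` of variables, inside an algebraic closure of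
`K = ℂ(x₁,…,x_d)`. -/
noncomputable def xVars (d : ℕ) :
    Fin d → AlgebraicClosure (FractionRing (MvPolynomial (Fin d) ℂ)) := fun i =>
  algebraMap (FractionRing (MvPolynomial (Fin d) ℂ))
    (AlgebraicClosure (FractionRing (MvPolynomial (Fin d) ℂ)))
    (algebraMap (MvPolynomial (Fin d) ℂ) (FractionRing (MvPolynomial (Fin d) ℂ))
      (MvPolynomial.X i))

/-! ### Small steps on algebraically independent tuples -/

theorem stepPart_congr {d : ℕ} {L : Type*} [Field L] (S : Finset (Fin d → ℤ)) (i : Fin d)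
    (e : ℤ) {a b : Fin d → L} (h : ∀ j, j ≠ i → a j = b j) :
    stepPart S i e a = stepPart S i e b := by
  unfold stepPart
  refine Finset.sum_congr rfl fun s _ => Finset.prod_congr rfl fun j hj => ?_
  rw [h j (Finset.ne_of_mem_erase hj)]

theorem stepPart_Phi {d : ℕ} {L : Type*} [Field L] (S : Finset (Fin d → ℤ)) (i : Fin d)
    (e : ℤ) (a : Fin d → L) : stepPart S i e (Phi S i a) = stepPart S i e a :=
  stepPart_congr S i e fun j hj => by simp [Phi, hj]

/-- The decomposition `S(a) = a_i⁻¹ S_i^−(a) + S_i^0(a) + a_i S_i^+(a)`. -/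
theorem stepValD_eq {d : ℕ} {L : Type*} [Field L] {S : Finset (Fin d → ℤ)}
    (hsmall : ∀ s ∈ S, ∀ i, s i = -1 ∨ s i = 0 ∨ s i = 1) (i : Fin d) (a : Fin d → L) :
    stepValD S a =
      (a i)⁻¹ * stepPart S i (-1) a + stepPart S i 0 a + a i * stepPart S i 1 a := by
  unfold stepValD stepPart
  simp only [Finset.sum_filter, Finset.mul_sum, ← Finset.sum_add_distrib]
  refine Finset.sum_congr rfl fun s hs => ?_
  rw [← Finset.mul_prod_erase Finset.univ (fun j => a j ^ s j) (Finset.mem_univ i)]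
  rcases hsmall s hs i with h | h | h <;> simp [h]

/-- The polynomial obtained from `S_i^e` by clearing denominators with `∏_{j ≠ i} a_j`. -/
noncomputable def clearedPart {d : ℕ} (S : Finset (Fin d → ℤ)) (i : Fin d) (e : ℤ) :
    MvPolynomial (Fin d) ℚ :=
  ∑ s ∈ S.filter (fun s => s i = e),
    ∏ j ∈ Finset.univ.erase i, MvPolynomial.X j ^ (s j + 1).toNat

theorem aeval_clearedPart {d : ℕ} {L : Type*} [Field L] [Algebra ℚ L]
    {S : Finset (Fin d → ℤ)}
    (hsmall : ∀ s ∈ S, ∀ i, s i = -1 ∨ s i = 0 ∨ s i = 1) (i : Fin d) (e : ℤ)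
    {a : Fin d → L} (ha : ∀ j, a j ≠ 0) :
    MvPolynomial.aeval a (clearedPart S i e) =
      (∏ j ∈ Finset.univ.erase i, a j) * stepPart S i e a := by
  unfold clearedPart stepPart
  simp only [map_sum, map_prod, map_pow, MvPolynomial.aeval_X, Finset.mul_sum,
    ← Finset.prod_mul_distrib]
  refine Finset.sum_congr rfl fun s hs => Finset.prod_congr rfl fun j _ => ?_
  have h1 : ((s j + 1).toNat : ℤ) = s j + 1 := by
    rcases hsmall s (Finset.mem_filter.1 hs).1 j with h | h | h <;> simp [h]
  rw [← zpow_natCast, h1, zpow_add_one₀ (ha j), mul_comm]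

theorem eval_clearedPart {d : ℕ} (S : Finset (Fin d → ℤ)) (i : Fin d) (e : ℤ) (t : ℚ) :
    MvPolynomial.eval (Function.update (fun _ => 1) i t) (clearedPart S i e) =
      (S.filter (fun s => s i = e)).card := by
  unfold clearedPart
  simp only [map_sum, map_prod, map_pow, MvPolynomial.eval_X]
  rw [Finset.card_eq_sum_ones, Nat.cast_sum]
  refine Finset.sum_congr rfl fun s _ => ?_
  rw [Nat.cast_one]
  refine Finset.prod_eq_one fun j hj => ?_
  simp [Finset.ne_of_mem_erase hj]

theorem card_filter_pos {d : ℕ} {S : Finset (Fin d → ℤ)} {i : Fin d} {e : ℤ}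
    (h : ∃ s ∈ S, s i = e) : 0 < (S.filter (fun s => s i = e)).card := by
  obtain ⟨s, hs, he⟩ := h
  exact Finset.card_pos.2 ⟨s, Finset.mem_filter.2 ⟨hs, he⟩⟩

theorem stepPart_ne_zero {d : ℕ} {L : Type*} [Field L] [Algebra ℚ L]
    {S : Finset (Fin d → ℤ)}
    (hsmall : ∀ s ∈ S, ∀ i, s i = -1 ∨ s i = 0 ∨ s i = 1) {i : Fin d} {e : ℤ}
    (h : ∃ s ∈ S, s i = e) {a : Fin d → L} (ha : ∀ j, a j ≠ 0)
    (hind : AlgebraicIndependent ℚ a) : stepPart S i e a ≠ 0 := by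
  intro h0
  have h1 := aeval_clearedPart hsmall i e ha
  rw [h0, mul_zero] at h1
  have h2 := hind.eq_zero_of_aeval_eq_zero _ h1
  have h3 := eval_clearedPart S i e 1
  rw [h2, map_zero] at h3
  exact (card_filter_pos h).ne' (by exact_mod_cast h3.symm)

/-- An algebraically independent tuple is not fixed by `Φ_i`: otherwise
`a_i² S_i^+(a) = S_i^−(a)`, a nontrivial algebraic relation. -/
theorem sq_mul_stepPart_ne {d : ℕ} {L : Type*} [Field L] [Algebra ℚ L]
    {S : Finset (Fin d → ℤ)}
    (hsmall : ∀ s ∈ S, ∀ i, s i = -1 ∨ s i = 0 ∨ s i = 1) {i : Fin d}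
    (hpos : ∃ s ∈ S, s i = 1) {a : Fin d → L} (ha : ∀ j, a j ≠ 0)
    (hind : AlgebraicIndependent ℚ a) :
    a i ^ 2 * stepPart S i 1 a ≠ stepPart S i (-1) a := by
  intro h0
  have h1 : MvPolynomial.aeval a
      (MvPolynomial.X i ^ 2 * clearedPart S i 1 - clearedPart S i (-1)) = 0 := by
    rw [map_sub, map_mul, map_pow, MvPolynomial.aeval_X, aeval_clearedPart hsmall i _ ha,
      aeval_clearedPart hsmall i _ ha, ← h0]
    ring
  have h2 := hind.eq_zero_of_aeval_eq_zero _ h1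
  -- at `a_i = |S_i^-| + 1` and all other coordinates `1`, the polynomial is positive
  have h3 := congrArg (MvPolynomial.eval (Function.update (fun _ => (1 : ℚ)) i
    ((S.filter (fun s => s i = -1)).card + 1))) h2
  simp only [map_sub, map_mul, map_pow, MvPolynomial.eval_X, eval_clearedPart, map_zero,
    Function.update_self] at h3
  have h4 : (1 : ℚ) ≤ (S.filter (fun s => s i = 1)).card := by
    exact_mod_cast card_filter_pos hpos
  have h5 : (0 : ℚ) ≤ (S.filter (fun s => s i = -1)).card := by positivity
  nlinarith [mul_le_mul_of_nonneg_left h4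
    (sq_nonneg (((S.filter (fun s => s i = -1)).card : ℚ) + 1))]

theorem Phi_Phi {d : ℕ} {L : Type*} [Field L] (S : Finset (Fin d → ℤ)) (i : Fin d)
    {a : Fin d → L} (hm : stepPart S i (-1) a ≠ 0)
    (hp : stepPart S i 1 a ≠ 0) : Phi S i (Phi S i a) = a := by
  have h : Phi S i (Phi S i a) = Function.update (Phi S i a) i
      ((Phi S i a i)⁻¹ * (stepPart S i (-1) a / stepPart S i 1 a)) := by
    conv_lhs => rw [Phi, stepPart_Phi, stepPart_Phi]
  have hi : Phi S i a i = (a i)⁻¹ * (stepPart S i (-1) a / stepPart S i 1 a) := by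
    simp [Phi]
  have h2 : ((a i)⁻¹ * (stepPart S i (-1) a / stepPart S i 1 a))⁻¹ *
      (stepPart S i (-1) a / stepPart S i 1 a) = a i := by
    rw [mul_inv, inv_inv, mul_assoc, inv_mul_cancel₀ (div_ne_zero hm hp), mul_one]
  rw [h, hi, h2, Phi, Function.update_idem, Function.update_eq_self]

theorem Phi_ne_zero {d : ℕ} {L : Type*} [Field L] (S : Finset (Fin d → ℤ)) (i : Fin d)
    {a : Fin d → L} (ha : ∀ j, a j ≠ 0) (hm : stepPart S i (-1) a ≠ 0)
    (hp : stepPart S i 1 a ≠ 0) (j : Fin d) : Phi S i a j ≠ 0 := by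
  rcases eq_or_ne j i with rfl | hj
  · simp [Phi, ha, hm, hp]
  · simp [Phi, hj, ha]

theorem iAdjacent_Phi {d : ℕ} {L : Type*} [Field L] [Algebra ℚ L] {S : Finset (Fin d → ℤ)}
    (hsmall : ∀ s ∈ S, ∀ i, s i = -1 ∨ s i = 0 ∨ s i = 1)
    (hpos : ∀ i, ∃ s ∈ S, s i = 1) (hneg : ∀ i, ∃ s ∈ S, s i = -1)
    {a : Fin d → L} (ha : ∀ j, a j ≠ 0) (hind : AlgebraicIndependent ℚ a) (i : Fin d) :
    IAdjacent S i a (Phi S i a) := by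
  have hm := stepPart_ne_zero hsmall (hneg i) ha hind
  have hp := stepPart_ne_zero hsmall (hpos i) ha hind
  have hai := ha i
  have hi : Phi S i a i = (a i)⁻¹ * (stepPart S i (-1) a / stepPart S i 1 a) := by
    simp [Phi]
  refine ⟨fun h => ?_, ha, Phi_ne_zero S i ha hm hp, ?_, fun j hj => by simp [Phi, hj]⟩
  · apply sq_mul_stepPart_ne hsmall (hpos i) ha hind
    have h1 := congrFun h i
    rw [hi] at h1
    field_simp at h1
    exact h1
  · rw [stepValD_eq hsmall i, stepValD_eq hsmall i (Phi S i a), stepPart_Phi, stepPart_Phi,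
      stepPart_Phi, hi]
    field_simp
    ring

/-- The quadratic equation `S(v) = S(u)` in the `i`-th coordinate has `Φ_i(u)` as its only
solution other than `u`. -/
theorem eq_Phi_of_iAdjacent {d : ℕ} {L : Type*} [Field L] {S : Finset (Fin d → ℤ)}
    (hsmall : ∀ s ∈ S, ∀ i, s i = -1 ∨ s i = 0 ∨ s i = 1) {i : Fin d}
    {u v : Fin d → L} (hp : stepPart S i 1 u ≠ 0) (h : IAdjacent S i u v) :
    v = Phi S i u := by
  obtain ⟨hne, hu, hv, hS, hj⟩ := h
  have hij : u i ≠ v i := fun h => hne (funext fun j => by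
    rcases eq_or_ne j i with rfl | hji
    · exact h
    · exact hj j hji)
  have hui := hu i
  have hvi := hv i
  rw [stepValD_eq hsmall i, stepValD_eq hsmall i v, ← stepPart_congr S i _ hj,
    ← stepPart_congr S i _ hj, ← stepPart_congr S i _ hj] at hS
  have key : (u i - v i) * (v i * (u i * stepPart S i 1 u) - stepPart S i (-1) u) = 0 := by
    field_simp at hS
    linear_combination hS
  have key2 := (mul_eq_zero.1 key).resolve_left (sub_ne_zero.2 hij)
  funext j
  rcases eq_or_ne j i with rfl | hji
  · simp only [Phi, Function.update_self]
    field_simp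
    linear_combination key2
  · simp [Phi, hji, hj j hji]

/-! ### The logarithmic Jacobian -/

theorem derivation_aeval {σ k L M : Type*} [Fintype σ] [Field k] [Field L] [Algebra k L]
    [AddCommGroup M] [Module L M] [Module k M] [IsScalarTower k L M] (D : Derivation k L M)
    (u : σ → L) (p : MvPolynomial σ k) :
    D (MvPolynomial.aeval u p) =
      ∑ i, MvPolynomial.aeval u (MvPolynomial.pderiv i p) • D (u i) := by
  classical
  induction p using MvPolynomial.induction_on with
  | C a => simp
  | add p q hp hq => simp [hp, hq, add_smul, Finset.sum_add_distrib]
  | mul_X p j hp =>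
    simp only [map_mul, MvPolynomial.aeval_X, Derivation.leibniz, hp, MvPolynomial.pderiv_X,
      map_add, add_smul, Finset.sum_add_distrib, smul_eq_mul, Finset.smul_sum, mul_smul]
    congr 1
    rw [Finset.sum_eq_single j] <;> simp +contextual

/-- In characteristic zero, a tuple whose differentials are linearly independent is
algebraically independent: differentiating a relation of minimal degree gives relations of
smaller degree. -/
theorem algebraicIndependent_of_derivation {σ k L M : Type*} [Fintype σ] [Field k] [CharZero k]
    [Field L] [Algebra k L] [AddCommGroup M] [Module L M] [Module k M] [IsScalarTower k L M]
    (D : Derivation k L M) {u : σ → L} (hu : LinearIndependent L (fun i => D (u i))) :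
    AlgebraicIndependent k u := by
  classical
  rw [algebraicIndependent_iff]
  suffices H : ∀ (n : ℕ) (p : MvPolynomial σ k), p.totalDegree < n →
      MvPolynomial.aeval u p = 0 → p = 0 from fun p => H _ p (Nat.lt_succ_self _)
  intro n
  induction n with
  | zero => intro p hp; omega
  | succ n ih =>
    intro p hp h0
    have hd : ∀ i, MvPolynomial.aeval u (MvPolynomial.pderiv i p) = 0 := by
      have h1 := derivation_aeval D u p
      rw [h0, map_zero] at h1
      exact Fintype.linearIndependent_iff.1 hu _ h1.symm
    have hcoeff : ∀ m : σ →₀ ℕ, m ≠ 0 → p.coeff m = 0 := by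
      intro m hm
      obtain ⟨i, hi⟩ := Finsupp.ne_iff.1 hm
      have hle : Finsupp.single i 1 ≤ m := by
        simpa [Finsupp.single_le_iff] using Nat.one_le_iff_ne_zero.2 hi
      have hz : MvPolynomial.pderiv i p = 0 := by
        by_contra hne
        refine hne (ih _ ?_ (hd i))
        obtain ⟨q, hq, hqd⟩ := Finset.exists_mem_eq_sup _
          (MvPolynomial.support_nonempty.2 hne) (fun s => s.sum fun _ e => e)
        change MvPolynomial.totalDegree _ = _ at hqd
        rw [hqd]
        have hq' : q + Finsupp.single i 1 ∈ p.support := by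
          rw [MvPolynomial.mem_support_iff, MvPolynomial.coeff_pderiv] at hq
          rw [MvPolynomial.mem_support_iff]
          exact left_ne_zero_of_mul hq
        have h2 := MvPolynomial.le_totalDegree hq'
        rw [Finsupp.sum_add_index' (fun _ => rfl) (fun _ _ _ => rfl),
          Finsupp.sum_single_index rfl] at h2
        omega
      have h3 := MvPolynomial.coeff_pderiv (i := i) p (m - Finsupp.single i 1)
      rw [hz, MvPolynomial.coeff_zero, tsub_add_cancel_of_le hle] at h3
      refine (mul_eq_zero.1 h3.symm).resolve_right ?_
      exact Nat.cast_add_one_ne_zero _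
    have hC : p = MvPolynomial.C (p.coeff 0) := by
      ext m
      rw [MvPolynomial.coeff_C]
      split_ifs with hm
      · rw [hm]
      · exact hcoeff m (Ne.symm hm)
    rw [hC, MvPolynomial.aeval_C] at h0
    rw [hC, (map_eq_zero _).1 h0, map_zero]

/-- The determinant of the logarithmic differentials `D(u_i)/u_i` with respect to a basis of
the target of the derivation `D`. -/
noncomputable def logJac {d : ℕ} {k L M : Type*} [Field k] [Field L] [Algebra k L]
    [AddCommGroup M] [Module L M] [Module k M] (D : Derivation k L M)
    (b : Module.Basis (Fin d) L M) (u : Fin d → L) : L :=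
  b.det fun i => (u i)⁻¹ • D (u i)

theorem algebraicIndependent_of_logJac {d : ℕ} {k L M : Type*} [Field k] [CharZero k] [Field L]
    [Algebra k L] [AddCommGroup M] [Module L M] [Module k M] [IsScalarTower k L M]
    (D : Derivation k L M) (b : Module.Basis (Fin d) L M) {u : Fin d → L}
    (hu : ∀ j, u j ≠ 0) (h : logJac D b u ≠ 0) : AlgebraicIndependent k u := by
  apply algebraicIndependent_of_derivation D
  have h1 : LinearIndependent L fun i => (u i)⁻¹ • D (u i) :=
    ((Module.Basis.is_basis_iff_det b).2 h.isUnit).1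
  have h2 := h1.units_smul fun i => Units.mk0 (u i) (hu i)
  convert! h2 using 2 with i
  simp [Units.smul_def, smul_smul, hu i]

/-- The differential of `S_i^e(u)` only involves those of the coordinates `u_j` with `j ≠ i`. -/
theorem derivation_stepPart_mem {d : ℕ} {k L M : Type*} [Field k] [Field L] [Algebra k L]
    [AddCommGroup M] [Module L M] [Module k M] (D : Derivation k L M)
    (S : Finset (Fin d → ℤ)) (i : Fin d) (e : ℤ) (u : Fin d → L) (W : Submodule L M)
    (hW : ∀ j, j ≠ i → D (u j) ∈ W) : D (stepPart S i e u) ∈ W := by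
  unfold stepPart
  rw [map_sum]
  refine Submodule.sum_mem _ fun s _ => ?_
  refine Finset.prod_induction _ (fun z => D z ∈ W) ?_ ?_ ?_
  · intro x y hx hy
    rw [Derivation.leibniz]
    exact W.add_mem (W.smul_mem _ hy) (W.smul_mem _ hx)
  · simp
  · intro j hj
    rw [Derivation.leibniz_zpow]
    exact zsmul_mem (W.smul_mem _ (hW j (Finset.ne_of_mem_erase hj))) _

/-- `Φ_i` reverses the sign of the logarithmic Jacobian: it negates the `i`-th row and adds to
it a linear combination of the others. -/
theorem logJac_Phi {d : ℕ} {k L M : Type*} [Field k] [Field L] [Algebra k L]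
    [AddCommGroup M] [Module L M] [Module k M] (D : Derivation k L M)
    (b : Module.Basis (Fin d) L M) (S : Finset (Fin d → ℤ)) (i : Fin d) {u : Fin d → L}
    (hu : ∀ j, u j ≠ 0) (hm : stepPart S i (-1) u ≠ 0) (hp : stepPart S i 1 u ≠ 0) :
    logJac D b (Phi S i u) = -logJac D b u := by
  set c := stepPart S i (-1) u / stepPart S i 1 u with hc
  have hc0 : c ≠ 0 := div_ne_zero hm hp
  have hui := hu i
  set r : Fin d → M := fun j => (u j)⁻¹ • D (u j) with hr
  have hrows : (fun j => (Phi S i u j)⁻¹ • D (Phi S i u j)) =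
      Function.update r i (-r i + c⁻¹ • D c) := by
    funext j
    rcases eq_or_ne j i with rfl | hj
    · have h1 : Phi S j u j = (u j)⁻¹ * c := by simp [Phi, hc]
      rw [h1, Function.update_self, Derivation.leibniz, Derivation.leibniz_inv, smul_add,
        smul_smul, smul_smul, smul_smul, add_comm, hr, ← neg_smul]
      congr 2 <;> field_simp
    · simp [Phi, hj, hr]
  set W : Submodule L M := LinearMap.ker (b.det.toMultilinearMap.toLinearMap r i) with hWdef
  have hW : ∀ j, j ≠ i → D (u j) ∈ W := by
    intro j hj
    have h1 : D (u j) = u j • r j := by simp [hr, smul_smul, hu j]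
    rw [h1]
    refine W.smul_mem _ ?_
    rw [hWdef, LinearMap.mem_ker]
    change b.det (Function.update r i (r j)) = 0
    exact b.det.map_update_self r hj.symm
  have hDc : D c ∈ W := by
    rw [hc, Derivation.leibniz_div]
    exact W.smul_mem _ (W.sub_mem
      (W.smul_mem _ (derivation_stepPart_mem D S i _ u W hW))
      (W.smul_mem _ (derivation_stepPart_mem D S i _ u W hW)))
  have hz : b.det (Function.update r i (c⁻¹ • D c)) = 0 := by
    have := W.smul_mem c⁻¹ hDc
    rw [hWdef, LinearMap.mem_ker] at this
    exact this
  unfold logJac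
  rw [hrows, AlternatingMap.map_update_add, hz, add_zero, AlternatingMap.map_update_neg,
    Function.update_eq_self]

/-! ### Differentials of the algebraic closure of the function field -/

/-- The differentials `dx_1, …, dx_d` form a basis of the Kähler differentials of
`AlgebraicClosure ℂ(x_1, …, x_d)` over `ℂ`, because this field is formally étale over
`ℂ[x_1, …, x_d]`. -/
theorem exists_basis_D_xVars (d : ℕ) :
    ∃ b : Module.Basis (Fin d) (AlgebraicClosure (FractionRing (MvPolynomial (Fin d) ℂ)))
      (Ω[AlgebraicClosure (FractionRing (MvPolynomial (Fin d) ℂ))⁄ℂ]),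
      ∀ i, b i = KaehlerDifferential.D ℂ _ (xVars d i) := by
  have h1 : Algebra.FormallyEtale (MvPolynomial (Fin d) ℂ)
      (FractionRing (MvPolynomial (Fin d) ℂ)) :=
    Algebra.FormallyEtale.of_isLocalization (nonZeroDivisors _)
  have h2 : Algebra.FormallyEtale (FractionRing (MvPolynomial (Fin d) ℂ))
      (AlgebraicClosure (FractionRing (MvPolynomial (Fin d) ℂ))) :=
    Algebra.FormallyEtale.of_isSeparable _ _
  have h3 : Algebra.FormallyEtale (MvPolynomial (Fin d) ℂ)
      (AlgebraicClosure (FractionRing (MvPolynomial (Fin d) ℂ))) :=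
    Algebra.FormallyEtale.comp _ (FractionRing (MvPolynomial (Fin d) ℂ)) _
  refine ⟨((KaehlerDifferential.mvPolynomialBasis ℂ (Fin d)).baseChange _).map
    (KaehlerDifferential.tensorKaehlerEquivOfFormallyEtale ℂ (MvPolynomial (Fin d) ℂ)
      (AlgebraicClosure (FractionRing (MvPolynomial (Fin d) ℂ)))), fun i => ?_⟩
  simp [xVars]
  rfl

/-! ### Lengths in the orbit -/

theorem AdjacentD.symm {d : ℕ} {L : Type*} [Field L] {S : Finset (Fin d → ℤ)}
    {u v : Fin d → L} (h : AdjacentD S u v) : AdjacentD S v u := by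
  obtain ⟨i, h1, h2, h3, h4, h5⟩ := h
  exact ⟨i, h1.symm, h3, h2, h4.symm, fun j hj => (h5 j hj).symm⟩

theorem adjChain_snoc {d : ℕ} {L : Type*} [Field L] {S : Finset (Fin d → ℤ)} {n : ℕ}
    {u v w : Fin d → L} (h : AdjChain S n u v) (hvw : AdjacentD S v w) :
    AdjChain S (n + 1) u w := by
  induction n generalizing u with
  | zero => obtain rfl : u = v := h; exact ⟨w, hvw, rfl⟩
  | succ n ih => obtain ⟨z, hz, h'⟩ := h; exact ⟨z, hz, ih h'⟩

theorem exists_adjChain {d : ℕ} {L : Type*} [Field L] {S : Finset (Fin d → ℤ)}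
    {u v : Fin d → L} (h : v ∈ orbitD S u) : ∃ n, AdjChain S n u v := by
  change Relation.ReflTransGen (AdjacentD S) u v at h
  induction h with
  | refl => exact ⟨0, rfl⟩
  | tail _ hbc ih => obtain ⟨n, hn⟩ := ih; exact ⟨n + 1, adjChain_snoc hn hbc⟩

theorem orbitLen_spec {d : ℕ} {L : Type*} [Field L] {S : Finset (Fin d → ℤ)}
    {u v : Fin d → L} (h : v ∈ orbitD S u) : AdjChain S (orbitLen S u v) u v :=
  Nat.sInf_mem (s := {n | AdjChain S n u v}) (exists_adjChain h)

theorem orbitLen_le_succ {d : ℕ} {L : Type*} [Field L] {S : Finset (Fin d → ℤ)}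
    {x u v : Fin d → L} (h : u ∈ orbitD S x) (huv : AdjacentD S u v) :
    orbitLen S x v ≤ orbitLen S x u + 1 :=
  Nat.sInf_le (adjChain_snoc (orbitLen_spec h) huv)

/-- If some function on tuples is negated by every adjacency starting in the orbit, then it
equals `(-1) ^ n` times its initial value at the end of a chain of `n` adjacencies. -/
theorem adjChain_sign {d : ℕ} {L : Type*} [Field L] {S : Finset (Fin d → ℤ)}
    {x : Fin d → L} (J : (Fin d → L) → L)
    (hJ : ∀ u ∈ orbitD S x, ∀ v, AdjacentD S u v → J v = -J u) {n : ℕ}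
    {u v : Fin d → L} (hu : u ∈ orbitD S x) (h : AdjChain S n u v) :
    J v = (-1) ^ n * J u := by
  induction n generalizing u with
  | zero => obtain rfl : u = v := h; simp
  | succ n ih =>
    obtain ⟨w, hw, h'⟩ := h
    rw [ih (Relation.ReflTransGen.tail hu hw) h', hJ u hu w hw]
    ring

/-- Nonvanishing of the coordinates and of the logarithmic Jacobian propagates along the orbit. -/
theorem orbit_good {d : ℕ} {k L M : Type*} [Field k] [CharZero k] [Field L] [Algebra k L]
    [Algebra ℚ k] [Algebra ℚ L] [IsScalarTower ℚ k L]
    [AddCommGroup M] [Module L M] [Module k M] [IsScalarTower k L M] (D : Derivation k L M)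
    (b : Module.Basis (Fin d) L M) {S : Finset (Fin d → ℤ)}
    (hsmall : ∀ s ∈ S, ∀ i, s i = -1 ∨ s i = 0 ∨ s i = 1)
    (hpos : ∀ i, ∃ s ∈ S, s i = 1) (hneg : ∀ i, ∃ s ∈ S, s i = -1)
    {x : Fin d → L} (hx : ∀ j, x j ≠ 0) (hJx : logJac D b x ≠ 0)
    {u : Fin d → L} (hu : u ∈ orbitD S x) : (∀ j, u j ≠ 0) ∧ logJac D b u ≠ 0 := by
  change Relation.ReflTransGen (AdjacentD S) x u at hu
  induction hu with
  | refl => exact ⟨hx, hJx⟩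
  | tail _ hbc ih =>
    obtain ⟨i, hi⟩ := hbc
    have hind := (algebraicIndependent_of_logJac D b ih.1 ih.2).restrictScalars
      (R := ℚ) (algebraMap ℚ k).injective
    have hm := stepPart_ne_zero hsmall (hneg i) ih.1 hind
    have hp := stepPart_ne_zero hsmall (hpos i) ih.1 hind
    refine ⟨hi.2.2.1, ?_⟩
    rw [eq_Phi_of_iAdjacent hsmall hp hi, logJac_Phi D b S i ih.1 hm hp]
    exact neg_ne_zero.2 ih.2

/-- For a small-step model with positive and negative steps in every direction:
the maps `Φ_i` are involutions sending a generic point to an `i`-adjacent one; on the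
orbit of `x`, the unique `i`-adjacent element of `u` is `Φ_i(u)`, so the orbit of `x`
is its orbit under the group generated by the `Φ_i`; and the lengths of adjacent orbit
elements differ by exactly one. -/
theorem stmt9 (d : ℕ) (S : Finset (Fin d → ℤ))
    (hsmall : ∀ s ∈ S, ∀ i, s i = -1 ∨ s i = 0 ∨ s i = 1)
    (hpos : ∀ i, ∃ s ∈ S, s i = 1) (hneg : ∀ i, ∃ s ∈ S, s i = -1) :
    (∀ a : Fin d → AlgebraicClosure (FractionRing (MvPolynomial (Fin d) ℂ)),
      (∀ j, a j ≠ 0) → AlgebraicIndependent ℚ a →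
      ∀ i, Phi S i (Phi S i a) = a ∧ IAdjacent S i a (Phi S i a)) ∧
    (∀ u ∈ orbitD S (xVars d), ∀ (i : Fin d)
      (v : Fin d → AlgebraicClosure (FractionRing (MvPolynomial (Fin d) ℂ))),
      IAdjacent S i u v ↔ v = Phi S i u) ∧
    (orbitD S (xVars d) =
      {v | ∃ l : List (Fin d), v = l.foldl (fun w i => Phi S i w) (xVars d)}) ∧
    (∀ u v, u ∈ orbitD S (xVars d) → v ∈ orbitD S (xVars d) → AdjacentD S u v →
      orbitLen S (xVars d) u = orbitLen S (xVars d) v + 1 ∨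
      orbitLen S (xVars d) v = orbitLen S (xVars d) u + 1) := by
  obtain ⟨b, hb⟩ := exists_basis_D_xVars d
  set D := KaehlerDifferential.D ℂ (AlgebraicClosure (FractionRing (MvPolynomial (Fin d) ℂ)))
  have hx : ∀ j, xVars d j ≠ 0 := fun j h => b.ne_zero j (by rw [hb, h, map_zero])
  have hJx : logJac D b (xVars d) ≠ 0 := by
    have h1 : (fun i => (xVars d i)⁻¹ • D (xVars d i)) =
        fun i => (xVars d i)⁻¹ • b i := funext fun i => by rw [hb]
    rw [logJac, h1, AlternatingMap.map_smul_univ b.det, b.det_self]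
    simp [Finset.prod_eq_zero_iff, hx]
  have good := fun u (hu : u ∈ orbitD S (xVars d)) =>
    orbit_good D b hsmall hpos hneg hx hJx hu
  have hind : ∀ u ∈ orbitD S (xVars d), AlgebraicIndependent ℚ u := fun u hu =>
    (algebraicIndependent_of_logJac D b (good u hu).1 (good u hu).2).restrictScalars
      (R := ℚ) (algebraMap ℚ ℂ).injective
  have hiff : ∀ u ∈ orbitD S (xVars d), ∀ i v, IAdjacent S i u v ↔ v = Phi S i u := by
    intro u hu i v
    constructor
    · exact eq_Phi_of_iAdjacent hsmall
        (stepPart_ne_zero hsmall (hpos i) (good u hu).1 (hind u hu))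
    · rintro rfl
      exact iAdjacent_Phi hsmall hpos hneg (good u hu).1 (hind u hu) i
  have hJ : ∀ u ∈ orbitD S (xVars d), ∀ v, AdjacentD S u v →
      logJac D b v = -logJac D b u := by
    rintro u hu v ⟨i, hi⟩
    rw [(hiff u hu i v).1 hi]
    exact logJac_Phi D b S i (good u hu).1
      (stepPart_ne_zero hsmall (hneg i) (good u hu).1 (hind u hu))
      (stepPart_ne_zero hsmall (hpos i) (good u hu).1 (hind u hu))
  refine ⟨fun a ha hai i => ⟨?_, iAdjacent_Phi hsmall hpos hneg ha hai i⟩, hiff, ?_, ?_⟩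
  · exact Phi_Phi S i (stepPart_ne_zero hsmall (hneg i) ha hai)
      (stepPart_ne_zero hsmall (hpos i) ha hai)
  · ext v
    constructor
    · intro hv
      change Relation.ReflTransGen (AdjacentD S) _ v at hv
      induction hv with
      | refl => exact ⟨[], rfl⟩
      | tail hab hbc ih =>
        obtain ⟨l, hl⟩ := ih
        obtain ⟨i, hi⟩ := hbc
        refine ⟨l ++ [i], ?_⟩
        rw [(hiff _ hab i _).1 hi, List.foldl_append, ← hl]
        rfl
    · rintro ⟨l, rfl⟩
      induction l using List.reverseRecOn with
      | nil => exact Relation.ReflTransGen.refl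
      | append_singleton l i ih =>
        rw [List.foldl_append]
        exact Relation.ReflTransGen.tail ih ⟨i, (hiff _ ih i _).2 rfl⟩
  · intro u v hu hv huv
    have h1 := orbitLen_le_succ hu huv
    have h2 := orbitLen_le_succ hv huv.symm
    -- equal lengths would force the sign of the logarithmic Jacobian to agree at `u` and `v`
    have h3 : orbitLen S (xVars d) u ≠ orbitLen S (xVars d) v := by
      intro h
      have hu' := adjChain_sign (logJac D b) hJ Relation.ReflTransGen.refl (orbitLen_spec hu)
      have hv' := adjChain_sign (logJac D b) hJ Relation.ReflTransGen.refl (orbitLen_spec hv)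
      rw [← h, ← hu', hJ u hu v huv] at hv'
      exact (good u hu).2 (self_eq_neg.1 hv'.symm)
    omega
end

section
/- Define a sequence of polynomials E_a ∈ ℤ[X,Y] by E₀ = 1, E₁ = X + X²Y, and E_{a+2} = (X + X²Y)·E_{a+1} + X·Y·E_a for all a ≥ 0 (equivalently, E_a = (x₁^{a+1} − x₂^{a+1})/(x₁ − x₂) whenever x₁, x₂ satisfy x₁ + x₂ = X + X²Y and x₁·x₂ = −X·Y). Then for every a ≥ 0, every monomial X^e Y^f occurring with nonzero coefficient in E_a satisfies f ≤ e. -/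
/-!
The monomials `X^e Y^f` with `f ≤ e` are closed under multiplication, so polynomials supported on
them are closed under `+` and `*` (`SubDiag.add`, `SubDiag.mul`). The initial values `1` and
`X + X²Y` and the coefficients `X + X²Y` and `XY` of the recurrence are all of this kind, so the
claim follows by induction along the recurrence.
-/

open MvPolynomial

/-- The polynomials `E_a ∈ ℤ[X,Y]`, with `E₀ = 1`, `E₁ = X + X²Y` and
`E_{a+2} = (X + X²Y)·E_{a+1} + X·Y·E_a`. -/
noncomputable def Epoly : ℕ → MvPolynomial (Fin 2) ℤ
  | 0 => 1
  | 1 => X 0 + (X 0) ^ 2 * X 1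
  | a + 2 => (X 0 + (X 0) ^ 2 * X 1) * Epoly (a + 1) + (X 0) * (X 1) * Epoly a

/-- Every monomial `X^e Y^f` occurring in `p` satisfies `f ≤ e`. -/
def SubDiag (p : MvPolynomial (Fin 2) ℤ) : Prop := ∀ v ∈ p.support, v 1 ≤ v 0

theorem SubDiag.add {p q : MvPolynomial (Fin 2) ℤ} (hp : SubDiag p) (hq : SubDiag q) :
    SubDiag (p + q) := by
  classical
  intro v hv
  rcases Finset.mem_union.mp (support_add hv) with h | h
  · exact hp v h
  · exact hq v h

theorem SubDiag.mul {p q : MvPolynomial (Fin 2) ℤ} (hp : SubDiag p) (hq : SubDiag q) :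
    SubDiag (p * q) := by
  classical
  intro v hv
  obtain ⟨a, ha, b, hb, rfl⟩ := Finset.mem_add.mp (support_mul p q hv)
  exact add_le_add (hp a ha) (hq b hb)

theorem SubDiag.one : SubDiag 1 := by
  intro v hv
  simp_all [support_one]

theorem SubDiag.X_zero : SubDiag (X 0) := by
  intro v hv
  simp_all [support_X]

theorem SubDiag.X_zero_mul_X_one : SubDiag (X 0 * X 1) := by
  classical
  intro v hv
  obtain ⟨a, ha, b, hb, rfl⟩ := Finset.mem_add.mp (support_mul _ _ hv)
  simp_all [support_X]

theorem SubDiag.X_zero_add : SubDiag (X 0 + (X 0) ^ 2 * X 1) := by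
  rw [pow_two, mul_assoc]
  exact SubDiag.X_zero.add (SubDiag.X_zero.mul SubDiag.X_zero_mul_X_one)

theorem subDiag_Epoly : ∀ a : ℕ, SubDiag (Epoly a)
  | 0 => by rw [Epoly]; exact SubDiag.one
  | 1 => by rw [Epoly]; exact SubDiag.X_zero_add
  | a + 2 => by
    rw [Epoly]
    exact (SubDiag.X_zero_add.mul (subDiag_Epoly (a + 1))).add
      (SubDiag.X_zero_mul_X_one.mul (subDiag_Epoly a))

/-- Every monomial `X^e Y^f` occurring in `E_a` satisfies `f ≤ e`. -/
theorem stmt12 : ∀ a : ℕ, ∀ v ∈ (Epoly a).support, v 1 ≤ v 0 := by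
  exact subDiag_Epoly
end

section
/- Let 𝒮 = {(1,0),(−1,0),(0,−1),(−2,1)} ⊆ ℤ². Then for all i, j, n ∈ ℕ, the number q(i,j;n) of n-step quadrant walks from (0,0) to (i,j) equals the coefficient of x^{i+7+2n} y^{j+3+n} in the polynomial (x²+1)·(x+y)·(y−x)·(x²y−2x−y)·(x³−x−2y)·(x³y + x² + xy + y²)^n ∈ ℤ[x,y]. (This is the coefficient form of the identity expressing Q(x,y;t) as the non-negative part in x and y of the rational series ((x²+1)(x+y)(y−x)(x²y−2x−y)(x³−x−2y)) / (x⁷y³(1 − t(x + 1/x + y/x² + 1/y))).) -/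
/-! Both sides satisfy the recurrence `a(p; n+1) = ∑ₛ a(p - s; n)`: the walk count by removal of the
last step, the coefficients because multiplication by `Kern13` is (up to the shift `x² y`)
multiplication by the step polynomial `S = x + 1/x + y/x² + 1/y`. They agree for `n = 0`
(`coeff_P13`). For `p` in the quadrant, a predecessor `p - s` outside it lies on the line `i = -1` or
on the line `j = -1`, so it suffices that the coefficients vanish on both lines.

* Line `i = -1`: put `T = x + 1/x + y/x²`, so that `S = T + 1/y`. The numerator is chosen so that
  `P13 / (x⁷ y³) = T' B` where `T' = ∂T/∂x` and `y³ B = -y T² + 2 T + y³ + 2 y` is a polynomial in `T`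
  with coefficients free of `x`. Hence `P13 / (x⁷ y³) * Sⁿ` is a combination of terms `T' Tᵐ`, which
  are derivatives and have residue zero.
* Line `j = -1`: likewise with `U = y + x²/y`. Here `S` is affine in `U`, and `P13 / (x⁷ y³)` is
  `∂U/∂y` times a polynomial in `U`, with coefficients that are Laurent polynomials in `x`.

After clearing denominators both are instances of `euler_mul_form_mem_gapAt`. -/

open Finset

/-- Partial sum of the first `m` steps of `f`. -/
def partialSum {n : ℕ} (f : Fin n → ℤ × ℤ) (m : ℕ) : ℤ × ℤ :=
  ∑ k ∈ Finset.univ.filter (fun k : Fin n => (k : ℕ) < m), f k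

/-- Number of `n`-step quadrant walks from `(0,0)` to `(i,j)` with steps in `S`. -/
noncomputable def quadWalks (S : Finset (ℤ × ℤ)) (i j : ℕ) (n : ℕ) : ℕ :=
  Nat.card {f : Fin n → ℤ × ℤ //
    (∀ k, f k ∈ S) ∧
    (∀ m : ℕ, m ≤ n → 0 ≤ (partialSum f m).1 ∧ 0 ≤ (partialSum f m).2) ∧
    partialSum f n = ((i : ℤ), (j : ℤ))}

/-- The step set `{(1,0),(−1,0),(0,−1),(−2,1)}`. -/
def S13 : Finset (ℤ × ℤ) := {(1, 0), (-1, 0), (0, -1), (-2, 1)}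

/-- The numerator `(x²+1)(x+y)(y−x)(x²y−2x−y)(x³−x−2y)`. -/
noncomputable def P13 : MvPolynomial (Fin 2) ℤ :=
  (MvPolynomial.X 0 ^ 2 + 1) * (MvPolynomial.X 0 + MvPolynomial.X 1) *
    (MvPolynomial.X 1 - MvPolynomial.X 0) *
    (MvPolynomial.X 0 ^ 2 * MvPolynomial.X 1 - 2 * MvPolynomial.X 0 - MvPolynomial.X 1) *
    (MvPolynomial.X 0 ^ 3 - MvPolynomial.X 0 - 2 * MvPolynomial.X 1)

/-- `x⁷y³·S(x,y)/(x²y⁻¹...)`, i.e. the kernel numerator `x³y + x² + xy + y²`. -/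
noncomputable def Kern13 : MvPolynomial (Fin 2) ℤ :=
  MvPolynomial.X 0 ^ 3 * MvPolynomial.X 1 + MvPolynomial.X 0 ^ 2 +
    MvPolynomial.X 0 * MvPolynomial.X 1 + MvPolynomial.X 1 ^ 2

/-! ### Vanishing of two lines of coefficients -/

section Kernel

open MvPolynomial

/-- The Euler operator `X i * ∂/∂X i` scales each monomial by its `X i`-exponent. -/
theorem coeff_X_mul_pderiv (i : Fin 2) (p : MvPolynomial (Fin 2) ℤ) (m : Fin 2 →₀ ℕ) :
    coeff m (X i * pderiv i p) = m i * coeff m p := by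
  induction p using MvPolynomial.induction_on' with
  | monomial u a =>
    rw [X_mul_pderiv_monomial, coeff_smul, coeff_monomial]
    split_ifs with h
    · subst h; simp
    · simp
  | add p q hp hq => simp only [map_add, mul_add, coeff_add, hp, hq]

/-- The polynomials none of whose monomials have `X i`-exponent `k`. -/
def gapAt (i : Fin 2) (k : ℕ) : Submodule ℤ (MvPolynomial (Fin 2) ℤ) where
  carrier := {p | ∀ m : Fin 2 →₀ ℕ, m i = k → MvPolynomial.coeff m p = 0}
  add_mem' hp hq m hm := by simp [hp m hm, hq m hm]
  zero_mem' m _ := by simp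
  smul_mem' c p hp m hm := by
    rw [MvPolynomial.coeff_smul, hp m hm, smul_zero]

theorem mem_gapAt {i : Fin 2} {k : ℕ} {p : MvPolynomial (Fin 2) ℤ} :
    p ∈ gapAt i k ↔ ∀ m : Fin 2 →₀ ℕ, m i = k → coeff m p = 0 := Iff.rfl

theorem X_mul_mem_gapAt {i : Fin 2} {k : ℕ} {p : MvPolynomial (Fin 2) ℤ} (hp : p ∈ gapAt i k) :
    X i * p ∈ gapAt i (k + 1) := by
  intro m hm
  rw [coeff_X_mul']
  split_ifs with h
  · exact hp _ (by simp [hm])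
  · rfl

theorem X_pow_mul_mem_gapAt {i : Fin 2} {k : ℕ} {p : MvPolynomial (Fin 2) ℤ}
    (hp : p ∈ gapAt i k) (e : ℕ) : X i ^ e * p ∈ gapAt i (k + e) := by
  induction e with
  | zero => simpa using hp
  | succ e ih =>
    rw [pow_succ', mul_assoc]
    exact X_mul_mem_gapAt ih

theorem X_mul_mem_gapAt_of_ne {i j : Fin 2} (hij : j ≠ i) {k : ℕ} {p : MvPolynomial (Fin 2) ℤ}
    (hp : p ∈ gapAt i k) : X j * p ∈ gapAt i k := by
  intro m hm
  rw [coeff_X_mul']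
  split_ifs with h
  · exact hp _ (by simp [hm, hij])
  · rfl

/-- A polynomial free of `X i`, encoded as `aeval (X j) r`, preserves the gap in the exponent of
`X i`. -/
theorem scalar_mul_mem_gapAt {i j : Fin 2} (hij : j ≠ i) {k : ℕ} (r : Polynomial ℤ)
    {p : MvPolynomial (Fin 2) ℤ} (hp : p ∈ gapAt i k) :
    Polynomial.aeval (X j) r * p ∈ gapAt i k := by
  induction r using Polynomial.induction_on' with
  | add r s hr hs =>
    rw [map_add, add_mul]
    exact add_mem hr hs
  | monomial e c =>
    rw [Polynomial.aeval_monomial, mul_assoc, ← Algebra.smul_def]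
    refine Submodule.smul_mem _ _ ?_
    induction e with
    | zero => simpa using hp
    | succ e ih =>
      rw [pow_succ', mul_assoc]
      exact X_mul_mem_gapAt_of_ne hij ih

/-- With `D = X i * ∂/∂X i`, one has `(a + 1) (DF - dF) F ^ a = D (F ^ (a + 1)) - d (a + 1) F ^ (a + 1)`,
and the right-hand side has no term of `X i`-exponent `d (a + 1)`. In the Laurent variable
`T = F / X i ^ d` this says that `T' T ^ a = (T ^ (a + 1))' / (a + 1)` has residue zero. -/
theorem euler_mul_pow_mem_gapAt (i : Fin 2) (d a : ℕ) (F : MvPolynomial (Fin 2) ℤ) :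
    (X i * pderiv i F - (d : ℤ) • F) * F ^ a ∈ gapAt i (d * (a + 1)) := by
  intro m hm
  have key : ((a + 1 : ℕ) : ℤ) • ((X i * pderiv i F - (d : ℤ) • F) * F ^ a) =
      X i * pderiv i (F ^ (a + 1)) - ((d * (a + 1) : ℕ) : ℤ) • F ^ (a + 1) := by
    rw [pderiv_pow]
    simp only [zsmul_eq_mul]
    rw [Nat.add_sub_cancel]
    push_cast
    ring
  have h := congrArg (coeff m) key
  rw [coeff_sub, coeff_X_mul_pderiv, coeff_smul, coeff_smul, hm, smul_eq_mul, smul_eq_mul, sub_self] at h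
  exact (mul_eq_zero.mp h).resolve_left (by positivity)

/-- If `K` is a linear form in `F` and `X i ^ d` with coefficients free of `X i`, then multiplying
`(DF - dF) F ^ a X i ^ (d b)` by `K ^ n` keeps the gap, shifted by `d n`. -/
theorem euler_mul_form_mem_gapAt {i j : Fin 2} (hij : j ≠ i) (d : ℕ) (u v : Polynomial ℤ)
    (F K : MvPolynomial (Fin 2) ℤ)
    (hK : K = Polynomial.aeval (X j) u * F + Polynomial.aeval (X j) v * X i ^ d) (n a b : ℕ) :
    (X i * pderiv i F - (d : ℤ) • F) * F ^ a * X i ^ (d * b) * K ^ n ∈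
      gapAt i (d * (a + b + n + 1)) := by
  induction n generalizing a b with
  | zero =>
    have h := X_pow_mul_mem_gapAt (euler_mul_pow_mem_gapAt i d a F) (d * b)
    rw [show d * (a + b + 0 + 1) = d * (a + 1) + d * b by ring]
    convert h using 1
    ring
  | succ n ih =>
    have h := add_mem
      (scalar_mul_mem_gapAt hij u (k := d * (a + b + n + 2)) (by convert ih (a + 1) b using 2; ring))
      (scalar_mul_mem_gapAt hij v (k := d * (a + b + n + 2)) (by convert ih a (b + 1) using 2; ring))
    rw [show d * (a + b + (n + 1) + 1) = d * (a + b + n + 2) by ring]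
    convert h using 1
    rw [pow_succ K]
    nth_rewrite 2 [hK]
    ring

/-- The coefficients with `i = -1` vanish. Here `F = x³ + x + y = x² (x + 1/x + y/x²)`. -/
theorem P13_mul_mem_gapAt_zero (n : ℕ) : P13 * Kern13 ^ n ∈ gapAt 0 (6 + 2 * n) := by
  have hK : Kern13 = Polynomial.aeval (X 1) (Polynomial.X : Polynomial ℤ) *
      (X 0 ^ 3 + X 0 + X 1) + Polynomial.aeval (X 1) (1 : Polynomial ℤ) * X 0 ^ 2 := by
    simp only [Polynomial.aeval_X, map_one, Kern13]
    ring
  have h := euler_mul_form_mem_gapAt (i := 0) (j := 1) (by decide) 2 _ _ _ _ hK n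
  -- `P13 = (x F' - 2 F) (-y F² + 2 x² F + (y³ + 2 y) x⁴)`, one term of the quadratic form at a time.
  have h20 := scalar_mul_mem_gapAt (i := 0) (j := 1) (k := 6 + 2 * n) (by decide)
    (-Polynomial.X) (by convert h 2 0 using 2; ring)
  have h11 := scalar_mul_mem_gapAt (i := 0) (j := 1) (k := 6 + 2 * n) (by decide)
    2 (by convert h 1 1 using 2; ring)
  have h02 := scalar_mul_mem_gapAt (i := 0) (j := 1) (k := 6 + 2 * n) (by decide)
    (Polynomial.X ^ 3 + 2 * Polynomial.X) (by convert h 0 2 using 2; ring)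
  convert add_mem (add_mem h20 h11) h02 using 1
  simp only [map_add, map_neg, map_mul, map_pow, Polynomial.aeval_X, map_ofNat, P13, Derivation.leibniz_pow, pderiv_X_self, pderiv_X_of_ne (show (1 : Fin 2) ≠ 0 by decide),
    zsmul_eq_mul, nsmul_eq_mul, smul_eq_mul]
  push_cast
  ring

/-- The coefficients with `j = -1` vanish. Here `F = y² + x² = y (y + x²/y)`, which encodes the
invariance of the step polynomial, and the antisymmetry of `P13 / y²`, under `y ↦ x²/y`. -/
theorem P13_mul_mem_gapAt_one (n : ℕ) : P13 * Kern13 ^ n ∈ gapAt 1 (2 + n) := by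
  have hK : Kern13 = Polynomial.aeval (X 0) (1 : Polynomial ℤ) *
      (X 1 ^ 2 + X 0 ^ 2) +
        Polynomial.aeval (X 0) (Polynomial.X ^ 3 + Polynomial.X : Polynomial ℤ) * X 1 ^ 1 := by
    simp only [Polynomial.aeval_X, map_one, map_add, map_pow, Kern13]
    ring
  have h := euler_mul_form_mem_gapAt (i := 1) (j := 0) (by decide) 1 _ _ _ _ hK n
  -- `P13 = (y F' - F) (-2 (x² + 1) (x² - 1) F + (x² + 1) (4 x + (x² - 1)² x) y)`.
  have h10 := scalar_mul_mem_gapAt (i := 1) (j := 0) (k := 2 + n) (by decide)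
    (-2 * (Polynomial.X ^ 2 + 1) * (Polynomial.X ^ 2 - 1)) (by convert h 1 0 using 2; ring)
  have h01 := scalar_mul_mem_gapAt (i := 1) (j := 0) (k := 2 + n) (by decide)
    ((Polynomial.X ^ 2 + 1) * (4 * Polynomial.X + (Polynomial.X ^ 2 - 1) ^ 2 * Polynomial.X))
      (by convert h 0 1 using 2; ring)
  convert add_mem h10 h01 using 1
  simp only [map_add, map_neg, map_sub, map_one, map_mul, map_pow, Polynomial.aeval_X, map_ofNat,
    P13, Derivation.leibniz_pow, pderiv_X_self,
    pderiv_X_of_ne (show (0 : Fin 2) ≠ 1 by decide), zsmul_eq_mul, nsmul_eq_mul, smul_eq_mul]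
  push_cast
  ring

end Kernel

/-- `x^a y^b` as an exponent vector. -/
noncomputable def ex (a b : ℕ) : Fin 2 →₀ ℕ := Finsupp.single 0 a + Finsupp.single 1 b

/-! ### Coefficients of `P13` and of products with `Kern13` -/

section Coefficients

open MvPolynomial

theorem ex_inj {a b c d : ℕ} : ex a b = ex c d ↔ a = c ∧ b = d := by
  constructor
  · intro h
    have h0 := DFunLike.congr_fun h 0
    have h1 := DFunLike.congr_fun h 1
    simp [ex] at h0 h1
    exact ⟨h0, h1⟩
  · rintro ⟨rfl, rfl⟩; rfl

theorem monomial_ex (a b : ℕ) (c : ℤ) :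
    monomial (ex a b) c = (c : MvPolynomial (Fin 2) ℤ) * (X 0 ^ a * X 1 ^ b) := by
  rw [ex, ← mul_one c, ← one_mul (1:ℤ), ← mul_assoc, ← monomial_mul, mul_one, ← C_mul_X_pow_eq_monomial,
    ← C_mul_X_pow_eq_monomial]
  simp [mul_assoc]

theorem P13_expand : P13 = monomial (ex 0 4) (2) + monomial (ex 1 3) (5) + monomial (ex 3 1) (-5) +
    monomial (ex 3 3) (3) + monomial (ex 4 0) (-2) + monomial (ex 4 4) (-2) +
    monomial (ex 5 1) (-3) + monomial (ex 5 3) (-1) + monomial (ex 7 1) (1) +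
    monomial (ex 7 3) (1) + monomial (ex 8 0) (2) + monomial (ex 9 1) (-1) := by
  simp only [monomial_ex, P13]
  push_cast
  ring

/-- For `n = 0`: among the monomials of `P13`, only `x⁷ y³` is divisible by `x⁷ y³`. -/
theorem coeff_P13 (i j : ℕ) :
    coeff (ex (i + 7) (j + 3)) P13 = if i = 0 ∧ j = 0 then 1 else 0 := by
  rw [P13_expand]
  simp only [coeff_add, coeff_monomial, ex_inj]
  have h (a b : ℕ) (c : ℤ) (hab : a < 7 ∨ b < 3) :
      (if a = i + 7 ∧ b = j + 3 then c else 0) = 0 := if_neg (by omega)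
  rw [h 0 4 _ (by decide), h 1 3 _ (by decide), h 3 1 _ (by decide), h 3 3 _ (by decide),
    h 4 0 _ (by decide), h 4 4 _ (by decide), h 5 1 _ (by decide), h 5 3 _ (by decide),
    h 7 1 _ (by decide), h 8 0 _ (by decide), h 9 1 _ (by decide)]
  simp only [zero_add, add_zero]
  exact if_congr (by omega) rfl rfl

theorem coeff_X_mul_zero (a b : ℕ) (p : MvPolynomial (Fin 2) ℤ) :
    coeff (ex (a + 1) b) (X 0 * p) = coeff (ex a b) p := by
  rw [← coeff_X_mul (ex a b) 0 p]
  congr 1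
  rw [ex, ex, Finsupp.single_add]; abel

theorem coeff_X_mul_one (a b : ℕ) (p : MvPolynomial (Fin 2) ℤ) :
    coeff (ex a (b + 1)) (X 1 * p) = coeff (ex a b) p := by
  rw [← coeff_X_mul (ex a b) 1 p]
  congr 1
  rw [ex, ex, Finsupp.single_add]; abel

theorem coeff_mul_Kern13 (a b : ℕ) (p : MvPolynomial (Fin 2) ℤ) :
    coeff (ex (a + 3) (b + 2)) (p * Kern13) =
      coeff (ex a (b + 1)) p + coeff (ex (a + 1) (b + 2)) p + coeff (ex (a + 2) (b + 1)) p +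
        coeff (ex (a + 3) b) p := by
  have : p * Kern13 = X 0 * (X 0 * (X 0 * (X 1 * p))) + X 0 * (X 0 * p) + X 0 * (X 1 * p) +
      X 1 * (X 1 * p) := by
    rw [Kern13]; ring
  simp only [this, coeff_add, coeff_X_mul_zero, coeff_X_mul_one]

end Coefficients

/-! ### The step-by-step recurrence for quadrant walks -/

section Walks

/-- The number of `n`-step quadrant walks from the origin to an arbitrary point `p ∈ ℤ²`. -/
noncomputable def walkCount (n : ℕ) (p : ℤ × ℤ) : ℕ :=
  Nat.card {f : Fin n → ℤ × ℤ //
    (∀ k, f k ∈ S13) ∧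
    (∀ m : ℕ, m ≤ n → 0 ≤ (partialSum f m).1 ∧ 0 ≤ (partialSum f m).2) ∧
    partialSum f n = p}

theorem partialSum_snoc {n m : ℕ} (g : Fin n → ℤ × ℤ) (s : ℤ × ℤ) (hm : m ≤ n) :
    partialSum (Fin.snoc g s : Fin (n + 1) → ℤ × ℤ) m = partialSum g m := by
  simp only [partialSum, Finset.sum_filter, Fin.sum_univ_castSucc, Fin.snoc_castSucc,
    Fin.val_castSucc, Fin.val_last, Nat.not_lt.mpr hm, if_false, add_zero]

theorem partialSum_snoc_last {n : ℕ} (g : Fin n → ℤ × ℤ) (s : ℤ × ℤ) :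
    partialSum (Fin.snoc g s : Fin (n + 1) → ℤ × ℤ) (n + 1) = partialSum g n + s := by
  simp [partialSum, Finset.sum_filter, Fin.sum_univ_castSucc]

theorem walkCount_of_not_nonneg (n : ℕ) (p : ℤ × ℤ) (hp : ¬ (0 ≤ p.1 ∧ 0 ≤ p.2)) :
    walkCount n p = 0 := by
  have : IsEmpty {f : Fin n → ℤ × ℤ //
      (∀ k, f k ∈ S13) ∧
      (∀ m : ℕ, m ≤ n → 0 ≤ (partialSum f m).1 ∧ 0 ≤ (partialSum f m).2) ∧
      partialSum f n = p} :=
    ⟨fun ⟨_, _, h, h'⟩ => hp (h' ▸ h n le_rfl)⟩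
  exact Nat.card_of_isEmpty

theorem walkCount_zero (p : ℤ × ℤ) : walkCount 0 p = if p = 0 then 1 else 0 := by
  rw [walkCount]
  split_ifs with h
  · subst h
    rw [Nat.card_eq_one_iff_unique]
    exact ⟨inferInstance, ⟨⟨0, by simp [partialSum]⟩⟩⟩
  · rw [Nat.card_eq_zero]
    refine Or.inl ⟨fun ⟨f, _, _, hf⟩ => h ?_⟩
    rw [← hf]; simp [partialSum]

/-- Removing the last step. -/
theorem walkCount_succ (n : ℕ) (p : ℤ × ℤ) (hp : 0 ≤ p.1 ∧ 0 ≤ p.2) :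
    walkCount (n + 1) p = ∑ s ∈ S13, walkCount n (p - s) := by
  have hfin : ∀ q : ℤ × ℤ, Finite {f : Fin n → ℤ × ℤ //
      (∀ k, f k ∈ S13) ∧
      (∀ m : ℕ, m ≤ n → 0 ≤ (partialSum f m).1 ∧ 0 ≤ (partialSum f m).2) ∧
      partialSum f n = q} := fun q =>
    Finite.of_injective (fun f => (fun k => ⟨f.1 k, f.2.1 k⟩ : Fin n → S13)) fun f g h =>
      Subtype.ext (funext fun k => congrArg Subtype.val (congrFun h k))
  rw [← Finset.sum_coe_sort]
  simp only [walkCount]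
  rw [← Nat.card_sigma]
  have hext : ∀ x : (Σ s : S13, {f : Fin n → ℤ × ℤ //
      (∀ k, f k ∈ S13) ∧
      (∀ m : ℕ, m ≤ n → 0 ≤ (partialSum f m).1 ∧ 0 ≤ (partialSum f m).2) ∧
      partialSum f n = p - s}),
      (∀ k, (Fin.snoc x.2.1 x.1.1 : Fin (n + 1) → ℤ × ℤ) k ∈ S13) ∧
      (∀ m : ℕ, m ≤ n + 1 →
        0 ≤ (partialSum (Fin.snoc x.2.1 x.1.1 : Fin (n + 1) → ℤ × ℤ) m).1 ∧
        0 ≤ (partialSum (Fin.snoc x.2.1 x.1.1 : Fin (n + 1) → ℤ × ℤ) m).2) ∧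
      partialSum (Fin.snoc x.2.1 x.1.1 : Fin (n + 1) → ℤ × ℤ) (n + 1) = p := by
    intro x
    refine ⟨?_, ?_, ?_⟩
    · intro k
      refine Fin.lastCases ?_ (fun k => ?_) k
      · simp
      · simpa using x.2.2.1 k
    · intro m hm
      rcases Nat.le_succ_iff.mp hm with hm | rfl
      · rw [partialSum_snoc _ _ hm]
        exact x.2.2.2.1 m hm
      · rw [partialSum_snoc_last, x.2.2.2.2, sub_add_cancel]
        exact hp
    · rw [partialSum_snoc_last, x.2.2.2.2, sub_add_cancel]
  refine (Nat.card_congr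
    (Equiv.ofBijective (fun x => ⟨Fin.snoc x.2.1 x.1.1, hext x⟩) ?_)).symm
  constructor
  · rintro ⟨s, f, hf⟩ ⟨t, g, hg⟩ h
    obtain ⟨h1, h2⟩ := Fin.snoc_inj.mp
      (show (Fin.snoc f s.1 : Fin (n + 1) → ℤ × ℤ) = Fin.snoc g t.1 from congrArg Subtype.val h)
    obtain rfl := Subtype.ext h2
    subst h1
    rfl
  · rintro ⟨f, hS, hq, he⟩
    obtain ⟨g, s, rfl⟩ : ∃ g s, f = Fin.snoc g s := ⟨Fin.init f, f (Fin.last n), by simp⟩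
    rw [partialSum_snoc_last] at he
    refine ⟨⟨⟨s, by simpa using hS (Fin.last n)⟩, g, fun k => by simpa using hS k.castSucc,
      fun m hm => ?_, eq_sub_of_add_eq he⟩, rfl⟩
    rw [← partialSum_snoc g s hm]
    exact hq m (by omega)

theorem walkCount_eq_coeff (n i j : ℕ) :
    (walkCount n (i, j) : ℤ) =
      MvPolynomial.coeff (ex (i + 7 + 2 * n) (j + 3 + n)) (P13 * Kern13 ^ n) := by
  induction n generalizing i j with
  | zero =>
    simp [walkCount_zero, coeff_P13]
  | succ n ih =>
    have hx : ∀ b, MvPolynomial.coeff (ex (6 + 2 * n) b) (P13 * Kern13 ^ n) = 0 := fun b =>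
      P13_mul_mem_gapAt_zero n _ (by simp [ex])
    have hy : ∀ a, MvPolynomial.coeff (ex a (2 + n)) (P13 * Kern13 ^ n) = 0 := fun a =>
      P13_mul_mem_gapAt_one n _ (by simp [ex])
    -- The two predecessors that may leave the quadrant: the steps `(1, 0)` and `(-2, 1)`.
    have hE : (walkCount n ((i : ℤ) - 1, (j : ℤ)) : ℤ) =
        MvPolynomial.coeff (ex (i + 6 + 2 * n) (j + 3 + n)) (P13 * Kern13 ^ n) := by
      cases i with
      | zero =>
        rw [walkCount_of_not_nonneg _ _ (by simp), zero_add, hx, Nat.cast_zero]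
      | succ i =>
        have := ih i j
        rw [show i + 1 + 6 + 2 * n = i + 7 + 2 * n by ring, ← this]
        push_cast; simp
    have hNW : (walkCount n ((i : ℤ) + 2, (j : ℤ) - 1) : ℤ) =
        MvPolynomial.coeff (ex (i + 9 + 2 * n) (j + 2 + n)) (P13 * Kern13 ^ n) := by
      cases j with
      | zero =>
        rw [walkCount_of_not_nonneg _ _ (by simp), zero_add, hy, Nat.cast_zero]
      | succ j =>
        have := ih (i + 2) j
        rw [show i + 9 + 2 * n = i + 2 + 7 + 2 * n by ring,
          show j + 1 + 2 + n = j + 3 + n by ring, ← this]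
        push_cast; simp
    have hW := ih (i + 1) j
    have hS := ih i (j + 1)
    rw [walkCount_succ _ _ (by simp), pow_succ, ← mul_assoc,
      show i + 7 + 2 * (n + 1) = (i + 6 + 2 * n) + 3 by ring,
      show j + 3 + (n + 1) = (j + 2 + n) + 2 by ring, coeff_mul_Kern13]
    rw [show j + 2 + n + 1 = j + 3 + n by ring, show i + 6 + 2 * n + 1 = i + 7 + 2 * n by ring,
      show j + 2 + n + 2 = j + 1 + 3 + n by ring,
      show i + 6 + 2 * n + 2 = i + 1 + 7 + 2 * n by ring,
      show i + 6 + 2 * n + 3 = i + 9 + 2 * n by ring, ← hE, ← hNW, ← hW, ← hS]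
    rw [S13, Finset.sum_insert (by decide), Finset.sum_insert (by decide),
      Finset.sum_insert (by decide), Finset.sum_singleton]
    push_cast
    simp only [Prod.mk_sub_mk, sub_neg_eq_add, sub_zero]
    ring

end Walks

/-- `q(i,j;n)` equals the coefficient of `x^{i+7+2n} y^{j+3+n}` in
`(x²+1)(x+y)(y−x)(x²y−2x−y)(x³−x−2y)·(x³y+x²+xy+y²)ⁿ`. -/
theorem stmt13 (i j n : ℕ) :
    (quadWalks S13 i j n : ℤ) =
      MvPolynomial.coeff
        (Finsupp.single 0 (i + 7 + 2 * n) + Finsupp.single 1 (j + 3 + n))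
        (P13 * Kern13 ^ n) := by
  exact walkCount_eq_coeff n i j
end
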